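/- arXiv:1908.00885 — 4 statements merged into one kernel-verified Lean document; each statement's English description precedes it below -/
import Mathlib

section
/- Let d ≥ 2 and n ≥ 0, and let Q be the monic real polynomial of degree n that satisfies ∫_{−1}^{1} Q(t) t^j (1−t)^{(d−1)/2} (1+t)^{(d−3)/2} dt = 0 for all integers 0 ≤ j < n. Then Q is positive definite on S^{d-1}. -/
/-!
Let `w(t) = (1-t²)^{(d-3)/2}` and let `G_k` be the monic Gegenbauer polynomials, orthogonal for `w`.
The hypothesis says that `Q` is orthogonal to `(1-t) r(t)` for `w`, for all `r` of degree `< n`.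
Since `p - p(1)` is divisible by `1 - t`, it follows that `∫ Q p w = p(1) ∫ Q w` for all `p` of
degree `≤ n`. Hence in `Q = ∑_{k ≤ n} a_k G_k` one has `a_k ∫ G_k² w = G_k(1) ∫ Q w`. Once the `G_k`
are known to be positive definite on the sphere, `G_k(1) ≥ 0`; as `Q` is monic, `a_n = 1`, which
forces `∫ Q w > 0`, so all `a_k` are nonnegative and `Q` is positive definite.

The polynomials `G_k` are defined by their three-term recurrence (`geg`). Orthogonality
(`gI_geg_mul_X_pow`) follows by partial integration from two first-order differential relations
(`geg_deriv`), and `∫ G_k² w > 0` (`gI_geg_sq_pos`) from the recurrence.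

Positive definiteness of `G_k` (`geg_posDef`) is algebraic. The homogenization `Z_y` of
`x ↦ G_k(⟨y, x⟩)` is harmonic for unit `y` (`Fischer.lap_zon`). In the Fischer inner product
multiplication by `X_i` is adjoint to `∂_i`, so harmonic polynomials are orthogonal to multiples of
`|·|²`, while `⟨x, ·⟩^k` reproduces `k!` times the value at `x`. As `Z_x` is `⟨x, ·⟩^k` plus a
multiple of `|·|²`, this gives `[Z_x, Z_y] = k! G_k(⟨x, y⟩)` (`Fischer.bil_zon_zon`), and the kernel
`G_k(⟨x, y⟩)` is a Gram kernel.
-/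

open MeasureTheory Metric
open scoped RealInnerProductSpace

noncomputable section

/-- The unit sphere `S^{d-1}` in `ℝ^d` with the standard inner product. -/
abbrev Sph (d : ℕ) := Metric.sphere (0 : EuclideanSpace ℝ (Fin d)) 1

/-- The uniform (rotation-invariant) Borel probability measure `σ` on the sphere
`S^{d-1}`, obtained by normalizing the canonical measure on the unit sphere induced
by the Lebesgue measure. -/
def sphσ (d : ℕ) : Measure (Sph d) :=
  (((volume : Measure (EuclideanSpace ℝ (Fin d))).toSphere) Set.univ)⁻¹ •
    ((volume : Measure (EuclideanSpace ℝ (Fin d))).toSphere)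

variable {d : ℕ}

/-- The energy integral `I_f(μ) = ∫∫ f (⟨x,y⟩) dμ(x) dμ(y)` of a Borel measure `μ`
on the sphere `S^{d-1}`. -/
def energy (f : ℝ → ℝ) (μ : Measure (Sph d)) : ℝ :=
  ∫ x, ∫ y, f ⟪(x : EuclideanSpace ℝ (Fin d)), (y : EuclideanSpace ℝ (Fin d))⟫ ∂μ ∂μ

/-- The uniform probability measure `(1/|C|) ∑_{x ∈ C} δ_x` on a finite set
`C ⊆ S^{d-1}`. -/
def unifOn (C : Finset (Sph d)) : Measure (Sph d) :=
  (C.card : ENNReal)⁻¹ • ∑ x ∈ C, Measure.dirac x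

/-- Evaluation of a polynomial in `d` variables at a point of the sphere. -/
def evalPt (P : MvPolynomial (Fin d) ℝ) (x : Sph d) : ℝ :=
  MvPolynomial.eval (fun i => (x : EuclideanSpace ℝ (Fin d)) i) P

/-- `C` is a spherical `t`-design: averaging any polynomial of total degree at most
`t` over `C` gives its mean over the sphere with respect to the uniform measure. -/
def IsSphDesign (d t : ℕ) (C : Finset (Sph d)) : Prop :=
  C.Nonempty ∧ ∀ P : MvPolynomial (Fin d) ℝ, P.totalDegree ≤ t →
    (∑ x ∈ C, evalPt P x) / (C.card : ℝ) = ∫ x, evalPt P x ∂(sphσ d)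

/-- The set `A(C) = {⟨x,y⟩ : x, y ∈ C, x ≠ y}` of inner products between distinct
points of `C`. -/
def innerProds (C : Finset (Sph d)) : Set ℝ :=
  {t | ∃ x ∈ C, ∃ y ∈ C, x ≠ y ∧
    ⟪(x : EuclideanSpace ℝ (Fin d)), (y : EuclideanSpace ℝ (Fin d))⟫ = t}

/-- `C` is a tight spherical `M`-design: it is a spherical `M`-design, and either
`M = 2m` and `A(C)` has exactly `m` elements, or `M = 2m - 1` and `A(C)` has exactly
`m` elements, one of which is `-1`. -/
def IsTightSphDesign (d M : ℕ) (C : Finset (Sph d)) : Prop :=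
  IsSphDesign d M C ∧
    ((∃ m, M = 2 * m ∧ (innerProds C).ncard = m) ∨
     (∃ m, M + 1 = 2 * m ∧ (innerProds C).ncard = m ∧ (-1 : ℝ) ∈ innerProds C))

/-- A function `h : [-1,1] → ℝ` is positive definite on `S^{d-1}` if all matrices
`(h(⟨x_i, x_j⟩))_{i,j}` arising from points of the sphere are positive semidefinite. -/
def IsPosDefOn (d : ℕ) (h : ℝ → ℝ) : Prop :=
  ∀ (N : ℕ) (x : Fin N → Sph d) (c : Fin N → ℂ),
    0 ≤ (∑ i, ∑ j,
      (h ⟪(x i : EuclideanSpace ℝ (Fin d)), (x j : EuclideanSpace ℝ (Fin d))⟫ : ℂ)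
        * c i * (starRingEnd ℂ) (c j)).re

/-! ### Monic Gegenbauer polynomials -/

/-- Coefficients of the three-term recurrence of the monic Gegenbauer polynomials for `S^{d-1}`.
The value at `0` is the one the general formula gives after cancelling `d - 2`; it is listed
separately because of `d = 2`. -/
def gegB (d : ℕ) : ℕ → ℝ
  | 0 => 1 / d
  | n + 1 => (n + 2) * (n + d - 1) / ((d + 2 * n + 2) * (d + 2 * n))

/-- Monic Gegenbauer polynomials, orthogonal for the weight `(1-t²)^{(d-3)/2}`. -/
def geg (d : ℕ) : ℕ → Polynomial ℝ
  | 0 => 1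
  | 1 => Polynomial.X
  | n + 2 => Polynomial.X * geg d (n + 1) - Polynomial.C (gegB d n) * geg d n

lemma gegB_pos (hd : 2 ≤ d) (n : ℕ) : 0 < gegB d n := by
  have h : (2 : ℝ) ≤ d := by exact_mod_cast hd
  cases n with
  | zero => simp only [gegB]; positivity
  | succ n =>
    have h2 : (0 : ℝ) < n + d - 1 := by have := n.cast_nonneg (α := ℝ); linarith
    simp only [gegB]; positivity

/-- The identity between recurrence coefficients behind both `geg_deriv` and `Fischer.dir_zon`. -/
lemma gegB_succ (hd : 2 ≤ d) (n : ℕ) :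
    gegB d (n + 1) * (d + 2 * n + 2) = 1 + gegB d n * (d + 2 * n - 2) := by
  have h : (2 : ℝ) ≤ d := by exact_mod_cast hd
  cases n with
  | zero => simp only [gegB]; push_cast; field_simp; ring
  | succ n =>
    have h2 : (0 : ℝ) < d + 2 * n := by positivity
    simp only [gegB]; push_cast
    have h3 : (0 : ℝ) < d + 2 * (n + 1) := by positivity
    field_simp
    ring

lemma geg_monic_natDegree (d n : ℕ) : (geg d n).Monic ∧ (geg d n).natDegree = n := by
  induction n using Nat.strong_induction_on with
  | _ n ih =>
    match n with
    | 0 => simp [geg]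
    | 1 => simp [geg, Polynomial.monic_X]
    | n + 2 =>
      obtain ⟨hm, hn⟩ := ih (n + 1) (by omega)
      obtain ⟨-, hn'⟩ := ih n (by omega)
      have hXm : (Polynomial.X * geg d (n + 1)).Monic := Polynomial.monic_X.mul hm
      have hXd : (Polynomial.X * geg d (n + 1)).natDegree = n + 2 := by
        rw [Polynomial.monic_X.natDegree_mul hm, hn, Polynomial.natDegree_X]; ring
      have hlt : (Polynomial.C (gegB d n) * geg d n).natDegree
          < (Polynomial.X * geg d (n + 1)).natDegree := by
        refine (Polynomial.natDegree_C_mul_le _ _).trans_lt ?_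
        omega
      have hlt' := Polynomial.degree_lt_degree hlt
      exact ⟨hXm.sub_of_left hlt', by
        rw [geg, Polynomial.natDegree_sub_eq_left_of_natDegree_lt hlt, hXd]⟩

open Polynomial in
/-- The two first-order differential relations for the monic Gegenbauer polynomials. -/
lemma geg_deriv (hd : 2 ≤ d) (n : ℕ) :
    (1 - X ^ 2) * derivative (geg d (n + 1)) =
        C (gegB d n * (d + 2 * n)) * geg d n - C (n + 1 : ℝ) * X * geg d (n + 1) ∧
    (1 - X ^ 2) * derivative (geg d n) =
        C (d + n - 2 : ℝ) * X * geg d n - C (d + 2 * n - 2 : ℝ) * geg d (n + 1) := by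
  have h : (2 : ℝ) ≤ d := by exact_mod_cast hd
  induction n with
  | zero =>
    have h0 : gegB d 0 * (d + 2 * (0 : ℕ)) = 1 := by simp only [gegB]; push_cast; field_simp; ring
    rw [h0]
    simp only [geg]
    simp
    ring
  | succ n ih =>
    obtain ⟨hA, hB⟩ := ih
    have hC2 : (C 2 : ℝ[X]) = 2 := rfl
    have hs := congrArg (C (R := ℝ)) (gegB_succ hd n)
    have hc : ((n + 1 : ℕ) : ℝ) = n + 1 := by push_cast; ring
    rw [hc]
    rw [show gegB d (n + 1) * (d + 2 * ((n : ℝ) + 1)) = gegB d (n + 1) * (d + 2 * n + 2) by ring, hs]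
    constructor
    · rw [show geg d (n + 1 + 1) = X * geg d (n + 1) - C (gegB d n) * geg d n from rfl]
      simp only [derivative_mul, derivative_X, derivative_C, map_add, map_sub, map_mul,
        map_one, hC2] at hA hB ⊢
      linear_combination X * hA - C (gegB d n) * hB
    · rw [show geg d (n + 1 + 1) = X * geg d (n + 1) - C (gegB d n) * geg d n from rfl]
      simp only [map_add, map_sub, map_mul, map_one, hC2] at hA hB ⊢
      linear_combination hA

/-! ### The weight functional -/

/-- The Gegenbauer weight `(1-t²)^{(d-3)/2}`, in factored form. -/
def gw (d : ℕ) (t : ℝ) : ℝ := (1 - t) ^ (((d : ℝ) - 3) / 2) * (1 + t) ^ (((d : ℝ) - 3) / 2)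

lemma gw_integrable (hd : 2 ≤ d) : IntervalIntegrable (gw d) volume (-1) 1 := by
  have h : (2 : ℝ) ≤ d := by exact_mod_cast hd
  have ha : -1 < ((d : ℝ) - 3) / 2 := by linarith
  have h1 : IntervalIntegrable (fun x : ℝ => (1 + x) ^ (((d : ℝ) - 3) / 2)) volume (-1) 0 := by
    have := (intervalIntegral.intervalIntegrable_rpow' (a := 0) (b := 1) ha).comp_add_left 1
    simpa using this
  have h2 : IntervalIntegrable (fun x : ℝ => (1 - x) ^ (((d : ℝ) - 3) / 2)) volume 0 1 := by
    have := (intervalIntegral.intervalIntegrable_rpow' (a := 1) (b := 0) ha).comp_sub_left 1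
    simpa using this
  refine IntervalIntegrable.trans (b := 0) ?_ ?_
  · refine h1.continuousOn_mul (ContinuousOn.rpow_const (by fun_prop) ?_)
    intro x hx
    rw [Set.uIcc_of_le (by norm_num)] at hx
    left; linarith [hx.2]
  · refine h2.mul_continuousOn (ContinuousOn.rpow_const (by fun_prop) ?_)
    intro x hx
    rw [Set.uIcc_of_le (by norm_num)] at hx
    left; linarith [hx.1]

lemma eval_mul_gw_integrable (hd : 2 ≤ d) (p : Polynomial ℝ) :
    IntervalIntegrable (fun t => p.eval t * gw d t) volume (-1) 1 :=
  (gw_integrable hd).continuousOn_mul p.continuous.continuousOn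

/-- Integration of a polynomial against the Gegenbauer weight. -/
def gI (hd : 2 ≤ d) : Polynomial ℝ →ₗ[ℝ] ℝ where
  toFun p := ∫ t in (-1 : ℝ)..1, p.eval t * gw d t
  map_add' p q := by
    rw [← intervalIntegral.integral_add (eval_mul_gw_integrable hd p) (eval_mul_gw_integrable hd q)]
    simp [add_mul]
  map_smul' a p := by
    simp [mul_assoc]

lemma gI_one_pos (hd : 2 ≤ d) : 0 < gI hd 1 := by
  change 0 < ∫ t in (-1 : ℝ)..1, (1 : Polynomial ℝ).eval t * gw d t
  refine intervalIntegral.intervalIntegral_pos_of_pos_on (eval_mul_gw_integrable hd 1) ?_ (by norm_num)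
  intro t ht
  have h1 : 0 < 1 - t := by linarith [ht.2]
  have h2 : 0 < 1 + t := by linarith [ht.1]
  simp only [Polynomial.eval_one, gw]
  positivity

open Polynomial in
/-- The total derivative of `(1-t²)^{(d-1)/2} p(t)` integrates to zero, since the boundary terms
vanish. -/
lemma gI_deriv (hd : 2 ≤ d) (p : Polynomial ℝ) :
    gI hd ((1 - X ^ 2) * derivative p - C ((d : ℝ) - 1) * X * p) = 0 := by
  have h : (2 : ℝ) ≤ d := by exact_mod_cast hd
  have hb : 0 < ((d : ℝ) - 1) / 2 := by linarith
  have key := intervalIntegral.integral_eq_sub_of_hasDerivAt_of_le (a := -1) (b := 1)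
    (f := fun t : ℝ => (1 - t) ^ (((d : ℝ) - 1) / 2) * (1 + t) ^ (((d : ℝ) - 1) / 2) * p.eval t)
    (f' := fun t => ((1 - X ^ 2) * derivative p - C ((d : ℝ) - 1) * X * p).eval t * gw d t)
    (by norm_num) ?_ ?_ (eval_mul_gw_integrable hd _)
  · refine key.trans ?_
    simp [Real.zero_rpow hb.ne']
  · refine ContinuousOn.mul (ContinuousOn.mul ?_ ?_) p.continuous.continuousOn
    · exact ContinuousOn.rpow_const (by fun_prop) fun x _ => Or.inr hb.le
    · exact ContinuousOn.rpow_const (by fun_prop) fun x _ => Or.inr hb.le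
  · intro t ht
    have h1 : 0 < 1 - t := by linarith [ht.2]
    have h2 : 0 < 1 + t := by linarith [ht.1]
    have e : ((d : ℝ) - 1) / 2 - 1 = ((d : ℝ) - 3) / 2 := by ring
    have e1 : (1 - t) ^ (((d : ℝ) - 1) / 2) = (1 - t) * (1 - t) ^ (((d : ℝ) - 3) / 2) := by
      rw [← e, Real.rpow_sub_one h1.ne']; field_simp
    have e2 : (1 + t) ^ (((d : ℝ) - 1) / 2) = (1 + t) * (1 + t) ^ (((d : ℝ) - 3) / 2) := by
      rw [← e, Real.rpow_sub_one h2.ne']; field_simp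
    have d1 := ((hasDerivAt_id t).const_sub 1).rpow_const (p := ((d : ℝ) - 1) / 2) (Or.inl h1.ne')
    have d2 := ((hasDerivAt_id t).const_add 1).rpow_const (p := ((d : ℝ) - 1) / 2) (Or.inl h2.ne')
    refine ((d1.mul d2).mul (p.hasDerivAt t)).congr_deriv ?_
    simp only [id, e, Pi.mul_apply, e1, e2, gw, eval_sub, eval_mul, eval_one, eval_pow, eval_X, eval_C]
    ring

open Polynomial in
lemma gI_parts (hd : 2 ≤ d) (p q : Polynomial ℝ) :
    gI hd ((1 - X ^ 2) * derivative p * q) +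
      gI hd (p * ((1 - X ^ 2) * derivative q - C ((d : ℝ) - 1) * X * q)) = 0 := by
  rw [← map_add, ← gI_deriv hd (p * q), derivative_mul]
  congr 1
  ring

/-! ### Orthogonality of the Gegenbauer polynomials -/

lemma gI_C_mul (hd : 2 ≤ d) (a : ℝ) (p : Polynomial ℝ) :
    gI hd (Polynomial.C a * p) = a * gI hd p := by
  rw [← Polynomial.smul_eq_C_mul, map_smul, smul_eq_mul]

open Polynomial in
/-- `G_n` is orthogonal to lower powers. In degree `n + 1`, the power `X ^ (j + 1)` is handled by
partial integration of the first relation of `geg_deriv` against `X ^ j`, and `X ^ 0` by partial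
integration of the second one against `1`. -/
lemma gI_geg_mul_X_pow (hd : 2 ≤ d) (n : ℕ) : ∀ j < n, gI hd (geg d n * X ^ j) = 0 := by
  have h : (2 : ℝ) ≤ d := by exact_mod_cast hd
  induction n with
  | zero => simp
  | succ n ih =>
    have h0 : gI hd (geg d (n + 1)) = 0 := by
      rcases Nat.eq_zero_or_pos n with rfl | hn
      · have := gI_deriv hd 1
        rw [derivative_one, mul_zero, zero_sub, mul_one, map_neg, gI_C_mul] at this
        have h1 : (d : ℝ) - 1 ≠ 0 := by linarith
        simpa [geg, h1] using this
      · have hp := gI_parts hd (geg d n) 1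
        rw [(geg_deriv hd n).2, ← map_add] at hp
        have hz : ((n : ℝ) - 1) * gI hd (geg d n * X) = 0 := by
          rcases Nat.lt_or_ge 1 n with h1 | h1
          · have := ih 1 h1
            rw [pow_one] at this
            rw [this, mul_zero]
          · have : n = 1 := by omega
            simp [this]
        have e : (C (d + n - 2 : ℝ) * X * geg d n - C (d + 2 * n - 2 : ℝ) * geg d (n + 1)) * 1 +
            geg d n * ((1 - X ^ 2) * derivative 1 - C ((d : ℝ) - 1) * X * 1) =
            C ((n : ℝ) - 1) * (geg d n * X) - C (d + 2 * n - 2 : ℝ) * geg d (n + 1) := by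
          simp only [map_add, map_sub, map_mul, map_one, derivative_one]
          have : (C 2 : ℝ[X]) = 2 := rfl
          rw [this]
          ring
        rw [e, map_sub, gI_C_mul, gI_C_mul, hz, zero_sub, neg_eq_zero] at hp
        have h1 : (1 : ℝ) ≤ n := by exact_mod_cast hn
        exact (mul_eq_zero.mp hp).resolve_left (by linarith)
    intro j
    induction j using Nat.strong_induction_on with
    | _ j ihj =>
      intro hj
      cases j with
      | zero => simpa using h0
      | succ j =>
        have hp := gI_parts hd (geg d (n + 1)) (X ^ j)
        rw [(geg_deriv hd n).1, ← map_add] at hp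
        have e : (C (gegB d n * (d + 2 * n)) * geg d n - C (n + 1 : ℝ) * X * geg d (n + 1)) * X ^ j +
            geg d (n + 1) * ((1 - X ^ 2) * derivative (X ^ j) - C ((d : ℝ) - 1) * X * X ^ j) =
            C (gegB d n * (d + 2 * n)) * (geg d n * X ^ j) +
            C (j : ℝ) * (geg d (n + 1) * X ^ (j - 1)) -
            C ((n : ℝ) + j + d) * (geg d (n + 1) * X ^ (j + 1)) := by
          rw [derivative_X_pow]
          cases j with
          | zero =>
            simp only [map_add, map_sub, map_mul, map_one, Nat.cast_zero, map_zero]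
            ring
          | succ j =>
            simp only [map_add, map_sub, map_mul, map_one, Nat.cast_succ, Nat.add_sub_cancel]
            ring
        have hz : (j : ℝ) * gI hd (geg d (n + 1) * X ^ (j - 1)) = 0 := by
          rcases Nat.eq_zero_or_pos j with rfl | hj0
          · simp
          · rw [ihj (j - 1) (by omega) (by omega), mul_zero]
        rw [e, map_sub, map_add, gI_C_mul, gI_C_mul, gI_C_mul, ih j (by omega), hz] at hp
        have h1 : (n : ℝ) + j + d ≠ 0 := by positivity
        simpa [h1] using hp

open Polynomial in
lemma map_mul_eq_zero_of_X_pow (L : ℝ[X] →ₗ[ℝ] ℝ) (p : ℝ[X]) (n : ℕ)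
    (h : ∀ j < n, L (p * X ^ j) = 0) (q : ℝ[X]) (hq : q.degree < n) : L (p * q) = 0 := by
  rcases eq_or_ne q 0 with rfl | h0
  · simp
  rw [q.as_sum_range_C_mul_X_pow' (n := n) ((natDegree_lt_iff_degree_lt h0).2 hq), Finset.mul_sum, map_sum]
  refine Finset.sum_eq_zero fun j hj => ?_
  rw [show p * (C (q.coeff j) * X ^ j) = q.coeff j • (p * X ^ j) by
    rw [smul_eq_C_mul]; ring, map_smul, h j (Finset.mem_range.mp hj), smul_zero]

open Polynomial in
lemma gI_geg_mul_geg (hd : 2 ≤ d) {m n : ℕ} (hmn : m ≠ n) : gI hd (geg d m * geg d n) = 0 := by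
  wlog hlt : n < m generalizing m n
  · rw [mul_comm]; exact this hmn.symm (by omega)
  refine map_mul_eq_zero_of_X_pow _ _ m (gI_geg_mul_X_pow hd m) _ ?_
  rw [degree_eq_natDegree (geg_monic_natDegree d n).1.ne_zero, (geg_monic_natDegree d n).2]
  exact_mod_cast hlt

open Polynomial in
lemma gI_geg_sq_pos (hd : 2 ≤ d) (n : ℕ) : 0 < gI hd (geg d n * geg d n) := by
  induction n with
  | zero => simpa [geg] using gI_one_pos hd
  | succ n ih =>
    -- `⟨G_{n+1}, G_{n+1}⟩ = ⟨G_{n+1}, X G_n⟩ = ⟨X G_{n+1}, G_n⟩ = b_n ⟨G_n, G_n⟩`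
    have h1 : gI hd (geg d (n + 1) * (geg d (n + 1) - X * geg d n)) = 0 := by
      cases n with
      | zero => simp [geg]
      | succ n =>
        rw [show geg d (n + 1 + 1) - X * geg d (n + 1) = - (C (gegB d n) * geg d n) by
          rw [show geg d (n + 1 + 1) = X * geg d (n + 1) - C (gegB d n) * geg d n from rfl]; ring,
          mul_neg, map_neg, mul_left_comm, gI_C_mul, gI_geg_mul_geg hd (by omega)]
        simp
    have h2 : gI hd (geg d (n + 2) * geg d n) = 0 := gI_geg_mul_geg hd (by omega)
    have h3 : gI hd (geg d (n + 1) * geg d (n + 1)) = gegB d n * gI hd (geg d n * geg d n) := by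
      rw [← gI_C_mul, ← sub_eq_zero, ← map_sub]
      calc _ = gI hd (geg d (n + 1) * (geg d (n + 1) - X * geg d n)) +
            gI hd (geg d (n + 2) * geg d n) := by
              rw [← map_add, show geg d (n + 2) = X * geg d (n + 1) - C (gegB d n) * geg d n from rfl]
              congr 1; ring
        _ = 0 := by rw [h1, h2, add_zero]
    rw [h3]
    exact mul_pos (gegB_pos hd n) ih

open Polynomial in
lemma exists_geg_expansion (d n : ℕ) (p : ℝ[X]) (hp : p.degree < n) :
    ∃ a : ℕ → ℝ, p = ∑ k ∈ Finset.range n, C (a k) * geg d k := by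
  induction n generalizing p with
  | zero => exact ⟨0, by simpa using hp⟩
  | succ n ih =>
    obtain ⟨hm, hn⟩ := geg_monic_natDegree d n
    obtain ⟨a, ha⟩ := ih (p - C (p.coeff n) * geg d n) (by
      rw [degree_lt_iff_coeff_zero] at hp ⊢
      intro k hk
      rw [coeff_sub, coeff_C_mul]
      rcases hk.eq_or_lt with hk | hk
      · have h1 := hm.coeff_natDegree
        rw [hn] at h1
        rw [← hk, h1]; ring
      · rw [hp k hk, coeff_eq_zero_of_natDegree_lt (p := geg d n) (by omega)]; ring)
    refine ⟨fun k => if k = n then p.coeff n else a k, ?_⟩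
    rw [Finset.sum_range_succ, Finset.sum_congr rfl (g := fun k => C (a k) * geg d k), ← ha]
    · simp
    · intro k hk
      simp only [if_neg (Finset.mem_range.mp hk).ne]

/-! ### The Fischer form and zonal harmonics -/

namespace Fischer

open MvPolynomial

/-- The Fischer form `[p, q] = ∑_m m! p_m q_m` on polynomials in `d` variables. -/
def form (p q : MvPolynomial (Fin d) ℝ) : ℝ :=
  (AddMonoidAlgebra.coeff p).sum fun m a => a * (∏ i, (m i).factorial) * coeff m q

lemma form_add_left (p p' q : MvPolynomial (Fin d) ℝ) : form (p + p') q = form p q + form p' q :=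
  Finsupp.sum_add_index' (by simp) (by intros; ring)

lemma form_monomial (m : Fin d →₀ ℕ) (a : ℝ) (q : MvPolynomial (Fin d) ℝ) :
    form (monomial m a) q = a * (∏ i, (m i).factorial) * coeff m q :=
  sum_monomial_eq (by simp)

lemma form_smul_left (a : ℝ) (p q : MvPolynomial (Fin d) ℝ) : form (a • p) q = a * form p q := by
  induction p using MvPolynomial.induction_on' with
  | monomial m b => simp only [smul_monomial, form_monomial, smul_eq_mul]; ring
  | add p p' h h' => rw [smul_add, form_add_left, form_add_left, h, h']; ring

lemma form_add_right (p q q' : MvPolynomial (Fin d) ℝ) : form p (q + q') = form p q + form p q' := by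
  induction p using MvPolynomial.induction_on' with
  | monomial m b => simp only [form_monomial, coeff_add]; ring
  | add p p' h h' => rw [form_add_left, form_add_left, form_add_left, h, h']; ring

lemma form_smul_right (a : ℝ) (p q : MvPolynomial (Fin d) ℝ) : form p (a • q) = a * form p q := by
  induction p using MvPolynomial.induction_on' with
  | monomial m b => simp only [form_monomial, coeff_smul, smul_eq_mul]; ring
  | add p p' h h' => rw [form_add_left, form_add_left, h, h']; ring

/-- The Fischer form as a bilinear map. -/
def bil (d : ℕ) : MvPolynomial (Fin d) ℝ →ₗ[ℝ] MvPolynomial (Fin d) ℝ →ₗ[ℝ] ℝ :=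
  LinearMap.mk₂ ℝ form form_add_left form_smul_left form_add_right form_smul_right

lemma bil_self_nonneg (p : MvPolynomial (Fin d) ℝ) : 0 ≤ bil d p p := by
  change 0 ≤ form p p
  rw [form, sum_def]
  refine Finset.sum_nonneg fun m _ => ?_
  rw [mul_right_comm]
  exact mul_nonneg (mul_self_nonneg _) (by positivity)

/-- Multiplication by a variable is adjoint to the partial derivative. -/
lemma bil_X_mul (i : Fin d) (p q : MvPolynomial (Fin d) ℝ) :
    bil d (X i * p) q = bil d p (pderiv i q) := by
  induction p using MvPolynomial.induction_on' with
  | monomial m a =>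
    change form (X i * monomial m a) q = form (monomial m a) (pderiv i q)
    have hprod : (∏ j, ((m + Finsupp.single i 1 : Fin d →₀ ℕ) j).factorial) =
        (m i + 1) * ∏ j, (m j).factorial := by
      rw [← Finset.mul_prod_erase _ _ (Finset.mem_univ i),
        ← Finset.mul_prod_erase Finset.univ (fun j => (m j).factorial) (Finset.mem_univ i)]
      rw [Finset.prod_congr rfl (g := fun j => (m j).factorial)]
      · simp [Nat.factorial_succ, mul_assoc]
      · intro j hj
        simp [(Finset.ne_of_mem_erase hj).symm]
    rw [X, monomial_mul, form_monomial, form_monomial, coeff_pderiv, add_comm, hprod]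
    push_cast
    ring
  | add p p' h h' => rw [mul_add, map_add, map_add, LinearMap.add_apply, LinearMap.add_apply, h, h']

/-- The linear form `⟨y, ·⟩`. -/
def lin (y : Fin d → ℝ) : MvPolynomial (Fin d) ℝ := ∑ i, C (y i) * X i

/-- The quadratic form `|·|²`. -/
def rad (d : ℕ) : MvPolynomial (Fin d) ℝ := ∑ i, X i * X i

/-- The directional derivative along `y`. -/
def dir (y : Fin d → ℝ) : Derivation ℝ (MvPolynomial (Fin d) ℝ) (MvPolynomial (Fin d) ℝ) :=
  ∑ i, y i • pderiv i

/-- The Laplacian. -/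
def lap (p : MvPolynomial (Fin d) ℝ) : MvPolynomial (Fin d) ℝ := ∑ i, pderiv i (pderiv i p)

lemma dir_apply (y : Fin d → ℝ) (p : MvPolynomial (Fin d) ℝ) :
    dir y p = ∑ i, C (y i) * pderiv i p := by
  have h : ⇑(dir y) = ∑ i, ⇑(y i • pderiv i : Derivation ℝ _ (MvPolynomial (Fin d) ℝ)) :=
    map_sum (Derivation.coeFnAddMonoidHom (R := ℝ)) _ _
  simp [h, Finset.sum_apply, smul_eq_C_mul]

lemma bil_lin_mul (y : Fin d → ℝ) (p q : MvPolynomial (Fin d) ℝ) :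
    bil d (lin y * p) q = bil d p (dir y q) := by
  rw [lin, dir_apply, Finset.sum_mul, map_sum, map_sum, LinearMap.sum_apply]
  refine Finset.sum_congr rfl fun i _ => ?_
  rw [mul_assoc, C_mul', C_mul', map_smul, map_smul, LinearMap.smul_apply, bil_X_mul]

lemma bil_rad_mul (p q : MvPolynomial (Fin d) ℝ) : bil d (rad d * p) q = bil d p (lap q) := by
  rw [rad, lap, Finset.sum_mul, map_sum, map_sum, LinearMap.sum_apply]
  refine Finset.sum_congr rfl fun i _ => ?_
  rw [mul_assoc, bil_X_mul, bil_X_mul]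

lemma pderiv_lin (y : Fin d → ℝ) (i : Fin d) : pderiv i (lin y) = C (y i) := by
  simp [lin, Pi.single_apply]

lemma pderiv_rad (i : Fin d) : pderiv i (rad d) = 2 * X i := by
  simp [rad, Pi.single_apply, Finset.sum_add_distrib, two_mul]

lemma lap_sub (p q : MvPolynomial (Fin d) ℝ) : lap (p - q) = lap p - lap q := by
  simp [lap]

lemma lap_C_mul (a : ℝ) (p : MvPolynomial (Fin d) ℝ) : lap (C a * p) = C a * lap p := by
  simp only [lap, pderiv_C_mul, Finset.mul_sum]

lemma lap_lin_mul (y : Fin d → ℝ) (p : MvPolynomial (Fin d) ℝ) :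
    lap (lin y * p) = 2 * dir y p + lin y * lap p := by
  simp only [lap, dir_apply, Finset.mul_sum, ← Finset.sum_add_distrib]
  refine Finset.sum_congr rfl fun i _ => ?_
  simp only [pderiv_mul, pderiv_lin, map_add, pderiv_C]
  ring

lemma lap_rad_mul {n : ℕ} (p : MvPolynomial (Fin d) ℝ) (hp : p.IsHomogeneous n) :
    lap (rad d * p) = C (2 * d + 4 * n : ℝ) * p + rad d * lap p := by
  have hE := hp.sum_X_mul_pderiv
  have h : lap (rad d * p) =
      ∑ i : Fin d, 2 * p + 4 * ∑ i, X i * pderiv i p + rad d * lap p := by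
    simp only [lap, Finset.mul_sum, ← Finset.sum_add_distrib]
    refine Finset.sum_congr rfl fun i _ => ?_
    have h2 : pderiv i (2 : MvPolynomial (Fin d) ℝ) = 0 := pderiv_C (a := (2 : ℝ))
    simp only [pderiv_mul, pderiv_rad, map_add, pderiv_X_self, h2]
    ring
  rw [h, hE]
  have h2 : (C 2 : MvPolynomial (Fin d) ℝ) = 2 := rfl
  have h4 : (C 4 : MvPolynomial (Fin d) ℝ) = 4 := rfl
  simp [h2, h4]
  ring

lemma dir_lin {y : Fin d → ℝ} (hy : ∑ i, y i * y i = 1) : dir y (lin y) = 1 := by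
  rw [dir_apply]
  simp only [pderiv_lin, ← C_mul, ← map_sum, hy, C_1]

lemma dir_rad (y : Fin d → ℝ) : dir y (rad d) = 2 * lin y := by
  rw [dir_apply, lin, Finset.mul_sum]
  simp only [pderiv_rad]
  exact Finset.sum_congr rfl fun i _ => by ring

lemma lin_isHomogeneous (y : Fin d → ℝ) : (lin y).IsHomogeneous 1 :=
  IsHomogeneous.sum _ _ _ fun i _ => by
    simpa using (isHomogeneous_C (Fin d) (y i)).mul (isHomogeneous_X ℝ i)

lemma rad_isHomogeneous : (rad d).IsHomogeneous 2 :=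
  IsHomogeneous.sum _ _ _ fun i _ => (isHomogeneous_X ℝ i).mul (isHomogeneous_X ℝ i)

/-- The zonal harmonic `|x|^n G_n(⟨y, x⟩ / |x|)`, the homogenization of the Gegenbauer
polynomial `G_n`. -/
def zon (y : Fin d → ℝ) : ℕ → MvPolynomial (Fin d) ℝ
  | 0 => 1
  | 1 => lin y
  | n + 2 => lin y * zon y (n + 1) - C (gegB d n) * (rad d * zon y n)

lemma zon_isHomogeneous (y : Fin d → ℝ) (n : ℕ) : (zon y n).IsHomogeneous n := by
  induction n using Nat.strong_induction_on with
  | _ n ih =>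
    match n with
    | 0 => exact isHomogeneous_one _ _
    | 1 => exact lin_isHomogeneous y
    | n + 2 =>
      refine IsHomogeneous.sub ?_ ?_
      · have := (lin_isHomogeneous y).mul (ih (n + 1) (by omega))
        rwa [show 1 + (n + 1) = n + 2 by ring] at this
      · have := (isHomogeneous_C (Fin d) (gegB d n)).mul (rad_isHomogeneous.mul (ih n (by omega)))
        rwa [show 0 + (2 + n) = n + 2 by ring] at this

lemma eval_zon (x y : Fin d → ℝ) (hx : ∑ i, x i * x i = 1) (n : ℕ) :
    eval x (zon y n) = (geg d n).eval (∑ i, y i * x i) := by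
  have hl : eval x (lin y) = ∑ i, y i * x i := by simp [lin]
  have hr : eval x (rad d) = 1 := by simpa [rad] using hx
  induction n using Nat.strong_induction_on with
  | _ n ih =>
    match n with
    | 0 => simp [zon, geg]
    | 1 => simp [zon, geg, hl]
    | n + 2 => simp [zon, geg, hl, hr, ih (n + 1) (by omega), ih n (by omega)]

/-- The derivative of a zonal harmonic along its pole is a multiple of the previous zonal harmonic.
The second relation rewrites this through the recurrence and is what the induction step uses. -/
lemma dir_zon (hd : 2 ≤ d) {y : Fin d → ℝ} (hy : ∑ i, y i * y i = 1) (n : ℕ) :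
    dir y (zon y (n + 1)) = C (gegB d n * (d + 2 * n)) * zon y n ∧
    rad d * dir y (zon y n) = C (d + 2 * n - 2 : ℝ) * (lin y * zon y n - zon y (n + 1)) := by
  have h : (2 : ℝ) ≤ d := by exact_mod_cast hd
  induction n with
  | zero =>
    have h0 : gegB d 0 * (d + 2 * (0 : ℕ)) = 1 := by simp only [gegB]; push_cast; field_simp; ring
    rw [h0]
    simp [zon, dir_lin hy]
  | succ n ih =>
    obtain ⟨hA, hB⟩ := ih
    have hC2 : (C 2 : MvPolynomial (Fin d) ℝ) = 2 := rfl
    have hs := congrArg (C (R := ℝ) (σ := Fin d)) (gegB_succ hd n)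
    have hc : ((n + 1 : ℕ) : ℝ) = n + 1 := by push_cast; ring
    rw [hc,
      show gegB d (n + 1) * (d + 2 * ((n : ℝ) + 1)) = gegB d (n + 1) * (d + 2 * n + 2) by ring, hs,
      show zon y (n + 1 + 1) = lin y * zon y (n + 1) - C (gegB d n) * (rad d * zon y n) from rfl]
    constructor
    · have hCd : dir y (C (gegB d n)) = 0 := derivation_C _ _
      simp only [map_sub, Derivation.leibniz, smul_eq_mul, dir_lin hy, dir_rad, hCd, hA]
      simp only [map_add, map_sub, map_mul, map_one, hC2] at hB ⊢
      linear_combination - C (gegB d n) * hB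
    · rw [hA]
      simp only [map_add, map_sub, map_mul, map_one, hC2]
      ring

lemma lap_zon (hd : 2 ≤ d) {y : Fin d → ℝ} (hy : ∑ i, y i * y i = 1) (n : ℕ) :
    lap (zon y n) = 0 := by
  induction n using Nat.strong_induction_on with
  | _ n ih =>
    match n with
    | 0 => simp [zon, lap]
    | 1 => simp [zon, lap, pderiv_lin]
    | n + 2 =>
      have hC2 : (C 2 : MvPolynomial (Fin d) ℝ) = 2 := rfl
      have hC4 : (C 4 : MvPolynomial (Fin d) ℝ) = 4 := rfl
      rw [zon, lap_sub, lap_C_mul, lap_lin_mul, lap_rad_mul _ (zon_isHomogeneous y n),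
        ih (n + 1) (by omega), ih n (by omega), (dir_zon hd hy n).1]
      simp only [map_add, map_mul, hC2, hC4]
      ring

/-- Modulo multiples of `|·|²`, the zonal harmonic is a power of its linear form. -/
lemma zon_eq (y : Fin d → ℝ) (n : ℕ) : ∃ s, zon y n = lin y ^ n + rad d * s := by
  induction n using Nat.strong_induction_on with
  | _ n ih =>
    match n with
    | 0 => exact ⟨0, by simp [zon]⟩
    | 1 => exact ⟨0, by simp [zon]⟩
    | n + 2 =>
      obtain ⟨s, hs⟩ := ih (n + 1) (by omega)
      exact ⟨lin y * s - C (gegB d n) * zon y n, by rw [zon, hs]; ring⟩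

/-- Powers of linear forms reproduce point values of homogeneous polynomials. -/
lemma bil_lin_pow (x : Fin d → ℝ) (n : ℕ) (q : MvPolynomial (Fin d) ℝ) (hq : q.IsHomogeneous n) :
    bil d (lin x ^ n) q = n.factorial * eval x q := by
  induction n generalizing q with
  | zero =>
    have hc : q = C (coeff 0 q) := (totalDegree_eq_zero_iff_eq_C).1 (Nat.le_zero.1 hq.totalDegree_le)
    rw [hc]
    change form (lin x ^ 0) (C (coeff 0 q)) = _
    rw [pow_zero, show (1 : MvPolynomial (Fin d) ℝ) = monomial 0 1 from rfl, form_monomial]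
    simp
  | succ n ih =>
    have hdir : (dir x q).IsHomogeneous n := by
      rw [dir_apply]
      refine IsHomogeneous.sum _ _ _ fun i _ => ?_
      simpa using (isHomogeneous_C (Fin d) (x i)).mul hq.pderiv
    have hE := congrArg (eval x) hq.sum_X_mul_pderiv
    have hE' : eval x (dir x q) = (n + 1) * eval x q := by
      rw [dir_apply]
      simpa using hE
    rw [pow_succ', bil_lin_mul, ih _ hdir, hE', Nat.factorial_succ]
    push_cast
    ring

lemma bil_zon_zon (hd : 2 ≤ d) {x y : Fin d → ℝ} (hx : ∑ i, x i * x i = 1)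
    (hy : ∑ i, y i * y i = 1) (n : ℕ) :
    bil d (zon x n) (zon y n) = n.factorial * (geg d n).eval (∑ i, y i * x i) := by
  obtain ⟨s, hs⟩ := zon_eq x n
  rw [hs, map_add, LinearMap.add_apply, bil_rad_mul, lap_zon hd hy, map_zero, add_zero,
    bil_lin_pow x n _ (zon_isHomogeneous y n), eval_zon x y hx]

end Fischer

/-! ### Positive definiteness -/

lemma re_kernel_sum {N : ℕ} (K : Fin N → Fin N → ℝ) (c : Fin N → ℂ) :
    (∑ i, ∑ j, (K i j : ℂ) * c i * (starRingEnd ℂ) (c j)).re =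
      ∑ i, ∑ j, (c i).re * (c j).re * K i j + ∑ i, ∑ j, (c i).im * (c j).im * K i j := by
  simp only [Complex.re_sum, ← Finset.sum_add_distrib]
  refine Finset.sum_congr rfl fun i _ => Finset.sum_congr rfl fun j _ => ?_
  simp
  ring

lemma sph_sum_sq (x : Sph d) :
    ∑ i, (x : EuclideanSpace ℝ (Fin d)) i * (x : EuclideanSpace ℝ (Fin d)) i = 1 := by
  have h : ‖(x : EuclideanSpace ℝ (Fin d))‖ = 1 := by simp
  have h2 := EuclideanSpace.real_norm_sq_eq (x : EuclideanSpace ℝ (Fin d))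
  rw [h] at h2
  simpa [sq] using h2.symm

open Fischer in
/-- The Gegenbauer kernels are Gram matrices of zonal harmonics, hence positive definite. -/
lemma geg_posDef (hd : 2 ≤ d) (n : ℕ) : IsPosDefOn d (fun t => (geg d n).eval t) := by
  intro N x c
  rw [re_kernel_sum (fun i j => (geg d n).eval
    ⟪(x i : EuclideanSpace ℝ (Fin d)), (x j : EuclideanSpace ℝ (Fin d))⟫)]
  have key : ∀ a : Fin N → ℝ, 0 ≤ ∑ i, ∑ j, a i * a j * (geg d n).eval
      ⟪(x i : EuclideanSpace ℝ (Fin d)), (x j : EuclideanSpace ℝ (Fin d))⟫ := by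
    intro a
    have h := bil_self_nonneg (∑ i, a i • zon (fun k => (x i : EuclideanSpace ℝ (Fin d)) k) n)
    simp only [map_sum, map_smul, LinearMap.sum_apply, LinearMap.smul_apply, smul_eq_mul,
      bil_zon_zon hd (sph_sum_sq _) (sph_sum_sq _)] at h
    refine nonneg_of_mul_nonneg_right (a := (n.factorial : ℝ)) ?_ (by positivity)
    refine h.trans_eq ?_
    simp only [Finset.mul_sum]
    rw [Finset.sum_comm]
    refine Finset.sum_congr rfl fun i _ => Finset.sum_congr rfl fun j _ => ?_
    rw [PiLp.inner_apply]
    simp only [RCLike.inner_apply, conj_trivial]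
    simp only [mul_comm]
    ring
  exact add_nonneg (key _) (key _)

lemma geg_eval_one_nonneg (hd : 2 ≤ d) (n : ℕ) : 0 ≤ (geg d n).eval 1 := by
  have := geg_posDef hd n 1 (fun _ => ⟨EuclideanSpace.single (⟨0, by omega⟩ : Fin d) (1 : ℝ),
    by simp⟩) (fun _ => 1)
  simpa using this

/-- A nonnegative combination of Gegenbauer polynomials is positive definite. -/
lemma posDef_of_expansion (hd : 2 ≤ d) (m : ℕ) (a : ℕ → ℝ) (ha : ∀ k < m, 0 ≤ a k)
    (Q : Polynomial ℝ) (hQ : Q = ∑ k ∈ Finset.range m, Polynomial.C (a k) * geg d k) :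
    IsPosDefOn d (fun t => Q.eval t) := by
  intro N x c
  have h : 0 ≤ ∑ k ∈ Finset.range m, a k * (∑ i, ∑ j,
      (((geg d k).eval ⟪(x i : EuclideanSpace ℝ (Fin d)), (x j : EuclideanSpace ℝ (Fin d))⟫ : ℝ) : ℂ)
        * c i * (starRingEnd ℂ) (c j)).re :=
    Finset.sum_nonneg fun k hk => mul_nonneg (ha k (Finset.mem_range.mp hk)) (geg_posDef hd k N x c)
  refine h.trans_eq ?_
  simp only [← Complex.re_ofReal_mul, ← Complex.re_sum, Finset.mul_sum]
  congr 1
  rw [Finset.sum_comm]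
  refine Finset.sum_congr rfl fun i _ => ?_
  rw [Finset.sum_comm]
  refine Finset.sum_congr rfl fun j _ => ?_
  rw [hQ, Polynomial.eval_finsetSum]
  push_cast
  simp only [Finset.sum_mul, Polynomial.eval_mul, Polynomial.eval_C]
  refine Finset.sum_congr rfl fun k _ => ?_
  push_cast
  ring

/-- Let `Q` be the monic polynomial of degree `n` orthogonal to all
lower powers with respect to the weight `(1-t)^{(d-1)/2} (1+t)^{(d-3)/2}` on `[-1,1]`
(the adjacent Jacobi polynomial `Q_n^{1,0}`). Then `Q` is positive definite on
`S^{d-1}`. -/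
theorem adjacent_jacobi_left_posdef
    {d n : ℕ} (hd : 2 ≤ d) (Q : Polynomial ℝ) (hmonic : Q.Monic)
    (hdeg : Q.natDegree = n)
    (horth : ∀ j < n,
      ∫ t in (-1 : ℝ)..1, Q.eval t * t ^ j *
        ((1 - t) ^ (((d : ℝ) - 1) / 2) * (1 + t) ^ (((d : ℝ) - 3) / 2)) = 0) :
    IsPosDefOn d (fun t => Q.eval t) := by
  have horth' : ∀ j < n, gI hd ((1 - Polynomial.X) * Q * Polynomial.X ^ j) = 0 := by
    intro j hj
    rw [← horth j hj]
    change ∫ t in (-1 : ℝ)..1, _ = _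
    rw [intervalIntegral.integral_of_le (by norm_num), intervalIntegral.integral_of_le (by norm_num),
      integral_Ioc_eq_integral_Ioo, integral_Ioc_eq_integral_Ioo]
    refine setIntegral_congr_fun measurableSet_Ioo fun t ht => ?_
    have h1 : 0 < 1 - t := by linarith [ht.2]
    have e1 : (1 - t) ^ (((d : ℝ) - 1) / 2) = (1 - t) * (1 - t) ^ (((d : ℝ) - 3) / 2) := by
      rw [show ((d : ℝ) - 3) / 2 = ((d : ℝ) - 1) / 2 - 1 by ring, Real.rpow_sub_one h1.ne']
      field_simp
    simp only [e1, gw, Polynomial.eval_mul, Polynomial.eval_sub, Polynomial.eval_one,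
      Polynomial.eval_X, Polynomial.eval_pow]
    ring
  -- Against `w`, the polynomial `Q` acts on degree `≤ n` as a multiple of evaluation at `1`.
  have hrep : ∀ k ≤ n, gI hd (Q * geg d k) = (geg d k).eval 1 * gI hd Q := by
    intro k hk
    obtain ⟨s, hs⟩ := Polynomial.X_sub_C_dvd_sub_C_eval (a := (1 : ℝ)) (p := geg d k)
    have hsdeg : s.degree < n := by
      rcases eq_or_ne s 0 with rfl | hs0
      · simp
      rw [← Polynomial.natDegree_lt_iff_degree_lt hs0]
      have h1 := congrArg Polynomial.natDegree hs
      rw [Polynomial.natDegree_sub_C, (geg_monic_natDegree d k).2,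
        (Polynomial.monic_X_sub_C (1 : ℝ)).natDegree_mul' hs0, Polynomial.natDegree_X_sub_C] at h1
      omega
    have h0 := map_mul_eq_zero_of_X_pow (gI hd) ((1 - Polynomial.X) * Q) n horth' s hsdeg
    rw [← gI_C_mul, ← sub_eq_zero, ← map_sub, ← neg_eq_zero, ← map_neg]
    rw [← h0]
    congr 1
    rw [Polynomial.C_1] at hs
    linear_combination -Q * hs
  obtain ⟨a, ha⟩ := exists_geg_expansion d (n + 1) Q (by
    rw [Polynomial.degree_eq_natDegree hmonic.ne_zero, hdeg]; exact_mod_cast n.lt_succ_self)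
  have hcoef : ∀ k ≤ n, a k * gI hd (geg d k * geg d k) = (geg d k).eval 1 * gI hd Q := by
    intro k hk
    rw [← hrep k hk]
    conv_rhs => rw [ha, Finset.sum_mul, map_sum]
    rw [Finset.sum_eq_single_of_mem k (Finset.mem_range.mpr (by omega)), mul_assoc, gI_C_mul]
    intro j _ hjk
    rw [mul_assoc, gI_C_mul, gI_geg_mul_geg hd hjk, mul_zero]
  -- Comparing leading coefficients.
  have han : a n = 1 := by
    have h1 := congrArg (fun p => Polynomial.coeff p n) ha
    simp only [Polynomial.finsetSum_coeff, Polynomial.coeff_C_mul] at h1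
    rw [Finset.sum_range_succ, Finset.sum_eq_zero, zero_add] at h1
    · have h2 := (geg_monic_natDegree d n).1.coeff_natDegree
      have h3 := hmonic.coeff_natDegree
      rw [(geg_monic_natDegree d n).2] at h2
      rw [hdeg] at h3
      rw [h2, h3, mul_one] at h1
      exact h1.symm
    · intro k hk
      rw [Polynomial.coeff_eq_zero_of_natDegree_lt (p := geg d k), mul_zero]
      rw [(geg_monic_natDegree d k).2]
      exact Finset.mem_range.mp hk
  have hpos : 0 < gI hd Q := by
    have h1 := hcoef n le_rfl
    rw [han, one_mul] at h1
    exact pos_of_mul_pos_right (h1 ▸ gI_geg_sq_pos hd n) (geg_eval_one_nonneg hd n)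
  refine posDef_of_expansion hd (n + 1) a (fun k hk => ?_) Q ha
  refine nonneg_of_mul_nonneg_left (b := gI hd (geg d k * geg d k)) ?_ (gI_geg_sq_pos hd k)
  rw [hcoef k (by omega)]
  exact mul_nonneg (geg_eval_one_nonneg hd k) hpos.le
end
end

section
/- Let μ be a finite Borel measure on ℝ with all moments finite, and let p_0, p_1, …, p_n be real polynomials with deg p_i = i, each p_i monic, that are pairwise orthogonal in L²(μ) (∫ p_i p_j dμ = 0 for i ≠ j) and satisfy ∫ p_i² dμ > 0 for each i. Let γ ∈ ℝ and suppose p_n + γ p_{n-1} = Π_{i=1}^{n} (X − t_i) where t_1 < t_2 < … < t_n are real numbers. Then for every k with 1 ≤ k < n, there exist real coefficients c_0, c_1, …, c_k, all strictly positive, such that Π_{i=1}^{k} (X − t_i) = Σ_{j=0}^{k} c_j p_j. -/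
/-!
The polynomial `p_n + γ p_{n-1}` is orthogonal to all polynomials of degree at most `n - 2`, so
its roots `t_i` are the nodes of a quadrature rule with positive weights, exact up to degree
`2n - 2` (`quadrature`). Hence `p_0, …, p_{n-1}` are also orthogonal for a positive discrete
measure `ν` on the nodes, and it suffices to treat `ν` (`discrete_main`), by induction on the
number of nodes.

Let `s` be the largest node. Each `p_j` is positive at `s` (`eval_last_pos`). The product over all
nodes but `s` vanishes on the support of `ν` except at `s`, so its Fourier coefficients are
positive multiples of the values `p_j(s)`. For shorter products, pass to the measure `(s - x) dν`,
which lives on the other nodes and has the kernel polynomials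
`K_j(X, s) = ∑_{i ≤ j} p_i(s) p_i / ‖p_i‖²` as orthogonal polynomials, by the reproducing property.
By induction the product is a positive combination of the `K_j`, and these are positive
combinations of the `p_i`.
-/

open MeasureTheory Polynomial

noncomputable section

namespace SubproductsPositive

/-! ### Orthogonal expansions with respect to a linear functional -/

/-- One step of the reduction of `f` modulo a polynomial `g` of degree exactly `m`. -/
lemma degree_sub_lt (m : ℕ) (f g : ℝ[X]) (hg : g.degree = m)
    (hf : f.degree < (m + 1 : ℕ)) :
    (f - C (f.coeff m / g.leadingCoeff) * g).degree < m := by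
  have hg0 : g ≠ 0 := by
    rintro rfl
    simp at hg
  have hl : g.leadingCoeff ≠ 0 := leadingCoeff_ne_zero.2 hg0
  have hc : g.coeff m = g.leadingCoeff := by
    rw [leadingCoeff, natDegree_eq_of_degree_eq_some hg]
  rw [degree_lt_iff_coeff_zero] at hf ⊢
  intro j hj
  rw [coeff_sub, coeff_C_mul]
  rcases Nat.eq_or_lt_of_le hj with h | h
  · subst h
    rw [hc]
    field_simp
    simp
  · rw [hf j h, coeff_eq_zero_of_degree_lt (p := g) (n := j) (by rw [hg]; exact_mod_cast h)]
    simp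

/-- Pairwise orthogonality upgrades to orthogonality against every polynomial of lower degree. -/
lemma orth_of_pairwise (L : ℝ[X] →ₗ[ℝ] ℝ) (p : ℕ → ℝ[X]) (j : ℕ)
    (hdeg : ∀ i < j, (p i).degree = i) (h : ∀ i < j, L (p j * p i) = 0)
    (f : ℝ[X]) (hf : f.degree < j) : L (p j * f) = 0 := by
  have key : ∀ m ≤ j, ∀ f : ℝ[X], f.degree < m → L (p j * f) = 0 := by
    intro m
    induction m with
    | zero =>
      intro _ f hf
      have : f = 0 := by
        rw [← degree_eq_bot]
        exact Nat.WithBot.lt_zero_iff.1 (by simpa using hf)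
      simp [this]
    | succ m ih =>
      intro hm f hf
      have h1 := ih (by omega) _ (degree_sub_lt m f (p m) (hdeg m (by omega)) hf)
      rw [mul_sub, map_sub, mul_left_comm, ← smul_eq_C_mul, map_smul, h m (by omega)] at h1
      simpa using h1
  exact key j le_rfl f hf

/-- The Fourier expansion of a polynomial in an orthogonal system. -/
lemma expansion (L : ℝ[X] →ₗ[ℝ] ℝ) (p : ℕ → ℝ[X]) (N : ℕ)
    (hdeg : ∀ i < N, (p i).degree = i)
    (horth : ∀ j < N, ∀ f : ℝ[X], f.degree < j → L (p j * f) = 0)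
    (hne : ∀ j < N, L (p j * p j) ≠ 0) :
    ∀ k ≤ N, ∀ f : ℝ[X], f.degree < k →
      f = ∑ j ∈ Finset.range k, C (L (p j * f) / L (p j * p j)) * p j := by
  intro k
  induction k with
  | zero =>
    intro _ f hf
    have : f = 0 := by
      rw [← degree_eq_bot]
      exact Nat.WithBot.lt_zero_iff.1 (by simpa using hf)
    simp [this]
  | succ k ih =>
    intro hk f hf
    set a := f.coeff k / (p k).leadingCoeff with ha
    have hlt := degree_sub_lt k f (p k) (hdeg k hk) hf
    rw [← ha] at hlt
    have h1 := ih (by omega) _ hlt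
    have h2 := horth k hk _ hlt
    rw [mul_sub, map_sub, mul_left_comm, ← smul_eq_C_mul, map_smul, smul_eq_mul,
      sub_eq_zero] at h2
    rw [Finset.sum_range_succ, h2, mul_div_cancel_right₀ _ (hne k hk), ← sub_eq_iff_eq_add, h1]
    refine Finset.sum_congr rfl fun j hj => ?_
    have hj := Finset.mem_range.1 hj
    have h3 : L (p j * p k) = 0 := by
      rw [mul_comm]
      exact horth k hk _ (by rw [hdeg j (by omega)]; exact_mod_cast hj)
    rw [mul_sub, map_sub, mul_left_comm, ← smul_eq_C_mul (p := p j * p k), map_smul, h3]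
    simp

/-- `L` is positive definite on the span of an orthogonal system with positive norms,
by Parseval's identity. -/
lemma posDef_of_orth (L : ℝ[X] →ₗ[ℝ] ℝ) (p : ℕ → ℝ[X]) (N : ℕ)
    (hdeg : ∀ i < N, (p i).degree = i)
    (horth : ∀ j < N, ∀ f : ℝ[X], f.degree < j → L (p j * f) = 0)
    (hpos : ∀ j < N, 0 < L (p j * p j)) (g : ℝ[X]) (hg : g.degree < N) (hg0 : g ≠ 0) :
    0 < L (g * g) := by
  have he := expansion L p N hdeg horth (fun j hj => (hpos j hj).ne') N le_rfl g hg
  have h1 : L (g * g) = ∑ j ∈ Finset.range N, L (p j * g) ^ 2 / L (p j * p j) := by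
    conv_lhs => enter [2, 1]; rw [he]
    rw [Finset.sum_mul, map_sum]
    refine Finset.sum_congr rfl fun j _ => ?_
    rw [mul_assoc, ← smul_eq_C_mul, map_smul, smul_eq_mul]
    ring
  rw [h1]
  have hnn : ∀ j ∈ Finset.range N, 0 ≤ L (p j * g) ^ 2 / L (p j * p j) := fun j hj =>
    div_nonneg (sq_nonneg _) (hpos j (Finset.mem_range.1 hj)).le
  refine lt_of_le_of_ne (Finset.sum_nonneg hnn) fun h => hg0 ?_
  rw [he]
  refine Finset.sum_eq_zero fun j hj => ?_
  have h2 := (Finset.sum_eq_zero_iff_of_nonneg hnn).1 h.symm j hj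
  have h3 := (hpos j (Finset.mem_range.1 hj)).ne'
  have h4 : L (p j * g) = 0 := by simpa [h3] using h2
  simp [h4]

/-! ### Discrete functionals -/

/-- Integration against the discrete measure `∑_{i < n} w i • δ_{t i}`. -/
def discr (w t : ℕ → ℝ) (n : ℕ) : ℝ[X] →ₗ[ℝ] ℝ :=
  ∑ i ∈ Finset.range n, w i • leval (t i)

lemma discr_apply (w t : ℕ → ℝ) (n : ℕ) (f : ℝ[X]) :
    discr w t n f = ∑ i ∈ Finset.range n, w i * f.eval (t i) := by
  simp [discr, LinearMap.sum_apply]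

lemma injOn_of_mono {t : ℕ → ℝ} {n : ℕ} (ht : ∀ i j, i < j → j < n → t i < t j) :
    Set.InjOn t (Finset.range n) := by
  intro i hi j hj h
  simp only [Finset.coe_range, Set.mem_Iio] at hi hj
  rcases lt_trichotomy i j with hij | hij | hij
  · exact absurd h (ht i j hij hj).ne
  · exact hij
  · exact absurd h (ht j i hij hi).ne'

lemma eq_zero_of_vanish {t : ℕ → ℝ} {n : ℕ} (ht : ∀ i j, i < j → j < n → t i < t j)
    (g : ℝ[X]) (hg : g.degree < n) (h : ∀ i < n, g.eval (t i) = 0) : g = 0 := by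
  refine eq_zero_of_degree_lt_of_eval_index_eq_zero (Finset.range n)
    (injOn_of_mono ht) (by simpa using hg) ?_
  intro i hi
  exact h i (Finset.mem_range.1 hi)

lemma discr_posDef {w t : ℕ → ℝ} {n : ℕ} (ht : ∀ i j, i < j → j < n → t i < t j)
    (hw : ∀ i < n, 0 < w i) (g : ℝ[X]) (hg : g.degree < n) (hg0 : g ≠ 0) :
    0 < discr w t n (g * g) := by
  rw [discr_apply]
  have hnn : ∀ i ∈ Finset.range n, 0 ≤ w i * (g * g).eval (t i) := fun i hi => by
    rw [eval_mul]
    exact mul_nonneg (hw i (Finset.mem_range.1 hi)).le (mul_self_nonneg _)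
  refine lt_of_le_of_ne (Finset.sum_nonneg hnn) fun h => hg0 ?_
  refine eq_zero_of_vanish ht g hg fun i hi => ?_
  have h2 := (Finset.sum_eq_zero_iff_of_nonneg hnn).1 h.symm i (Finset.mem_range.2 hi)
  simpa [(hw i hi).ne'] using h2

/-- An orthogonal polynomial of degree at most `n`, for a measure on `n + 1` points, is positive
at the largest point. Otherwise it has a root `r` with `t n ≤ r`, so it is `(X - r) * g`;
orthogonality to `g` reads `∑ w i (t i - r) g(t i)² = 0` with all terms nonpositive, which
forces `g` to vanish at the first `n` points. -/
lemma eval_last_pos {w t : ℕ → ℝ} {n : ℕ} (ht : ∀ i j, i < j → j < n + 1 → t i < t j)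
    (hw : ∀ i < n + 1, 0 < w i) (j : ℕ) (hj : j < n + 1) (p : ℝ[X]) (hdeg : p.degree = j)
    (hlc : 0 < p.leadingCoeff)
    (horth : ∀ f : ℝ[X], f.degree < j → discr w t (n + 1) (p * f) = 0) :
    0 < p.eval (t n) := by
  by_contra hcon
  push Not at hcon
  have hp0 : p ≠ 0 := leadingCoeff_ne_zero.1 hlc.ne'
  obtain ⟨r, hr, hroot⟩ : ∃ r, t n ≤ r ∧ p.eval r = 0 := by
    rcases Nat.eq_zero_or_pos j with h0 | h0
    · subst h0
      have := eq_C_of_degree_eq_zero (by simpa using hdeg)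
      rw [this] at hcon hlc
      simp at hcon hlc
      linarith
    · have htend := p.tendsto_atTop_of_leadingCoeff_nonneg
        (by rw [hdeg]; exact_mod_cast h0) hlc.le
      obtain ⟨b, hb, hb'⟩ :=
        ((htend.eventually_ge_atTop 0).and (Filter.eventually_ge_atTop (t n))).exists
      obtain ⟨r, hr, hr'⟩ := intermediate_value_Icc hb' p.continuous.continuousOn ⟨hcon, hb⟩
      exact ⟨r, hr.1, hr'⟩
  obtain ⟨g, rfl⟩ := dvd_iff_isRoot.2 hroot
  have hg0 : g ≠ 0 := right_ne_zero_of_mul hp0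
  have hgdeg : g.degree < j := by
    rw [← hdeg, degree_mul, degree_X_sub_C, degree_eq_natDegree hg0]
    norm_cast
    omega
  have h := horth g hgdeg
  rw [discr_apply] at h
  have hnp : ∀ i ∈ Finset.range (n + 1),
      w i * ((X - C r) * g * g).eval (t i) ≤ 0 := by
    intro i hi
    have hi := Finset.mem_range.1 hi
    have hle : t i ≤ t n := by
      rcases Nat.eq_or_lt_of_le (Nat.lt_succ_iff.1 hi) with h | h
      · rw [h]
      · exact (ht i n h (by omega)).le
    simp only [eval_mul, eval_sub, eval_X, eval_C]
    refine mul_nonpos_of_nonneg_of_nonpos (hw i hi).le ?_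
    rw [mul_assoc]
    exact mul_nonpos_of_nonpos_of_nonneg (by linarith) (mul_self_nonneg _)
  refine hg0 (eq_zero_of_vanish (n := n) (t := t) (fun i k h1 h2 => ht i k h1 (by omega)) g
    (lt_of_lt_of_le hgdeg (by exact_mod_cast Nat.lt_succ_iff.1 hj)) fun i hi => ?_)
  have h2 := (Finset.sum_eq_zero_iff_of_nonpos hnp).1 h i (Finset.mem_range.2 (by omega))
  have h3 : t i - r ≠ 0 := (sub_neg.2 ((ht i n hi (by omega)).trans_le hr)).ne
  simpa [(hw i (by omega)).ne', h3] using h2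

/-! ### The induction on the number of nodes -/

/-- The kernel polynomial `K_j(X, s) = ∑_{i ≤ j} p_i(s) p_i / ‖p_i‖²`. -/
def kernelPoly (L : ℝ[X] →ₗ[ℝ] ℝ) (p : ℕ → ℝ[X]) (s : ℝ) (j : ℕ) : ℝ[X] :=
  ∑ i ∈ Finset.range (j + 1), C ((p i).eval s / L (p i * p i)) * p i

/-- The reproducing property of the kernel polynomials. -/
lemma kernelPoly_reproducing (L : ℝ[X] →ₗ[ℝ] ℝ) (p : ℕ → ℝ[X]) (N : ℕ)
    (hdeg : ∀ i < N, (p i).degree = i)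
    (horth : ∀ j < N, ∀ f : ℝ[X], f.degree < j → L (p j * f) = 0)
    (hne : ∀ j < N, L (p j * p j) ≠ 0) (s : ℝ) (j : ℕ) (hj : j < N) (f : ℝ[X])
    (hf : f.degree < (j + 1 : ℕ)) : L (kernelPoly L p s j * f) = f.eval s := by
  conv_rhs => rw [expansion L p N hdeg horth hne (j + 1) hj f hf]
  rw [kernelPoly, Finset.sum_mul, map_sum, eval_finsetSum]
  refine Finset.sum_congr rfl fun i _ => ?_
  rw [mul_assoc, ← smul_eq_C_mul, map_smul, smul_eq_mul, eval_mul, eval_C]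
  ring

lemma kernelPoly_degree (L : ℝ[X] →ₗ[ℝ] ℝ) (p : ℕ → ℝ[X]) (s : ℝ) (j : ℕ)
    (hdeg : ∀ i ≤ j, (p i).degree = i) (hlc : 0 < (p j).leadingCoeff)
    (hpos : 0 < (p j).eval s / L (p j * p j)) :
    (kernelPoly L p s j).degree = j ∧ 0 < (kernelPoly L p s j).leadingCoeff := by
  rw [kernelPoly, Finset.sum_range_succ]
  have h1 : (C ((p j).eval s / L (p j * p j)) * p j).degree = j := by
    rw [degree_C_mul hpos.ne', hdeg j le_rfl]
  have h2 : (∑ i ∈ Finset.range j, C ((p i).eval s / L (p i * p i)) * p i).degree < j := by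
    rw [degree_lt_iff_coeff_zero]
    intro m hm
    rw [finsetSum_coeff]
    refine Finset.sum_eq_zero fun i hi => ?_
    have hi := Finset.mem_range.1 hi
    rw [coeff_C_mul, coeff_eq_zero_of_degree_lt, mul_zero]
    rw [hdeg i hi.le]
    exact_mod_cast (by omega : i < m)
  rw [degree_add_eq_right_of_degree_lt (by rwa [h1]),
    leadingCoeff_add_of_degree_lt (by rwa [h1])]
  refine ⟨h1, ?_⟩
  rw [leadingCoeff_mul, leadingCoeff_C]
  exact mul_pos hpos hlc

/-- The theorem for discrete measures, by induction on the number of nodes. Removing the last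
node `s = t n` amounts to the weight change `w i ↦ w i * (s - t i)`, whose orthogonal polynomials
are the kernel polynomials `K_j(X, s)`. -/
lemma discrete_main (t : ℕ → ℝ) (n : ℕ) : ∀ (w : ℕ → ℝ) (p : ℕ → ℝ[X]),
    (∀ i j, i < j → j < n → t i < t j) → (∀ i < n, 0 < w i) →
    (∀ i < n, (p i).degree = i) → (∀ i < n, 0 < (p i).leadingCoeff) →
    (∀ j < n, ∀ f : ℝ[X], f.degree < j → discr w t n (p j * f) = 0) →
    ∀ k < n, ∃ c : ℕ → ℝ, (∀ j ≤ k, 0 < c j) ∧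
      ∏ i ∈ Finset.range k, (X - C (t i)) = ∑ j ∈ Finset.range (k + 1), C (c j) * p j := by
  induction n with
  | zero => intro w p _ _ _ _ _ k hk; omega
  | succ n ih =>
    intro w p ht hw hdeg hlc horth k hk
    have hnorm : ∀ j < n + 1, 0 < discr w t (n + 1) (p j * p j) := fun j hj =>
      discr_posDef ht hw (p j) (by rw [hdeg j hj]; exact_mod_cast hj)
        (leadingCoeff_ne_zero.1 (hlc j hj).ne')
    have hlast : ∀ j < n + 1, 0 < (p j).eval (t n) := fun j hj =>
      eval_last_pos ht hw j hj (p j) (hdeg j hj) (hlc j hj) (horth j hj)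
    have ha : ∀ j < n + 1, 0 < (p j).eval (t n) / discr w t (n + 1) (p j * p j) := fun j hj =>
      div_pos (hlast j hj) (hnorm j hj)
    -- For `k = n` the product vanishes at every node but the last, so its Fourier coefficients
    -- are single terms.
    rcases Nat.eq_or_lt_of_le (Nat.lt_succ_iff.1 hk) with rfl | hkn
    · refine ⟨fun j => discr w t (k + 1) (p j * ∏ i ∈ Finset.range k, (X - C (t i))) /
        discr w t (k + 1) (p j * p j), ?_, ?_⟩
      · intro j hj
        refine div_pos ?_ (hnorm j (by omega))
        rw [discr_apply, Finset.sum_range_succ, Finset.sum_eq_zero, zero_add]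
        · rw [eval_mul, eval_prod]
          refine mul_pos (hw k (by omega)) (mul_pos (hlast j (by omega)) ?_)
          refine Finset.prod_pos fun i hi => ?_
          have := ht i k (Finset.mem_range.1 hi) (by omega)
          simpa using this
        · intro i hi
          rw [eval_mul, eval_prod, Finset.prod_eq_zero hi (by simp)]
          simp
      · refine expansion _ p (k + 1) hdeg horth (fun j hj => (hnorm j hj).ne') (k + 1) le_rfl _ ?_
        rw [degree_prod]
        simp only [degree_X_sub_C, Finset.sum_const, Finset.card_range, nsmul_eq_mul, mul_one]
        exact_mod_cast Nat.lt_succ_self k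
    · have hK : ∀ j < n, _ := fun j hj => kernelPoly_degree (discr w t (n + 1)) p (t n) j
        (fun i hi => hdeg i (by omega)) (hlc j (by omega)) (ha j (by omega))
      obtain ⟨c, hc, hprod⟩ := ih (fun i => w i * (t n - t i))
        (kernelPoly (discr w t (n + 1)) p (t n))
        (fun i j h1 h2 => ht i j h1 (by omega))
        (fun i hi => mul_pos (hw i (by omega)) (sub_pos.2 (ht i n hi (by omega))))
        (fun j hj => (hK j hj).1) (fun j hj => (hK j hj).2)
        (by
          intro j hj f hf
          have hd : ((C (t n) - X) * f).degree < ((j + 1 : ℕ) : WithBot ℕ) := by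
            rw [degree_lt_iff_coeff_zero] at hf ⊢
            intro m hm
            obtain ⟨m, rfl⟩ : ∃ m', m = m' + 1 := ⟨m - 1, by omega⟩
            rw [sub_mul, coeff_sub, coeff_C_mul, coeff_X_mul, hf _ (by omega), hf _ (by omega)]
            simp
          have h := kernelPoly_reproducing (discr w t (n + 1)) p (n + 1) hdeg horth
            (fun j hj => (hnorm j hj).ne') (t n) j (by omega) _ hd
          rw [discr_apply, Finset.sum_range_succ] at h
          simp only [eval_mul, eval_sub, eval_C, eval_X, sub_self, zero_mul, mul_zero,
            add_zero] at h
          rw [discr_apply, ← h]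
          refine Finset.sum_congr rfl fun i _ => ?_
          rw [eval_mul]
          ring) k hkn
      refine ⟨fun i => (∑ j ∈ Finset.Ico i (k + 1), c j) *
        ((p i).eval (t n) / discr w t (n + 1) (p i * p i)), ?_, ?_⟩
      · intro i hi
        refine mul_pos (Finset.sum_pos (fun j hj => hc j ?_) ⟨i, ?_⟩) (ha i (by omega))
        · have := Finset.mem_Ico.1 hj
          omega
        · simp
          omega
      · rw [hprod]
        simp only [kernelPoly, Finset.mul_sum, map_mul, map_sum, Finset.sum_mul]
        rw [Finset.sum_comm' (t' := Finset.range (k + 1))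
          (s' := fun i => Finset.Ico i (k + 1))]
        · simp only [mul_assoc]
        · intro a b
          simp only [Finset.mem_range, Finset.mem_Ico]
          omega

/-! ### Quadrature -/

/-- Quadrature at the zeros of a quasi-orthogonal polynomial: a positive definite functional
agrees, up to degree `2n - 2`, with a positive discrete one. -/
lemma quadrature (L : ℝ[X] →ₗ[ℝ] ℝ) (t : ℕ → ℝ) (n : ℕ)
    (ht : ∀ i j, i < j → j < n → t i < t j)
    (horth : ∀ f : ℝ[X], f.degree < (n - 1 : ℕ) →
      L ((∏ i ∈ Finset.range n, (X - C (t i))) * f) = 0)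
    (hpos : ∀ g : ℝ[X], g.degree < n → g ≠ 0 → 0 < L (g * g)) :
    ∃ w : ℕ → ℝ, (∀ i < n, 0 < w i) ∧
      ∀ f : ℝ[X], f.degree < (2 * n - 1 : ℕ) → L f = discr w t n f := by
  have hinj := injOn_of_mono ht
  set q : ℝ[X] := ∏ i ∈ Finset.range n, (X - C (t i)) with hq
  have hqm : q.Monic := monic_prod_of_monic _ _ fun i _ => monic_X_sub_C _
  have hqdeg : q.natDegree = n := by
    rw [hq, natDegree_prod_of_monic _ _ fun i _ => monic_X_sub_C _]
    simp
  have hqz : ∀ i < n, q.eval (t i) = 0 := fun i hi => by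
    rw [hq, eval_prod, Finset.prod_eq_zero (Finset.mem_range.2 hi) (by simp)]
  have hquad : ∀ f : ℝ[X], f.degree < (2 * n - 1 : ℕ) →
      L f = discr (fun i => L (Lagrange.basis (Finset.range n) t i)) t n f := by
    intro f hf
    have hmod := modByMonic_add_div f q
    have hrdeg : (f %ₘ q).degree < n := by
      have := degree_modByMonic_lt f hqm
      rwa [degree_eq_natDegree hqm.ne_zero, hqdeg] at this
    have hddeg : (f /ₘ q).degree < (n - 1 : ℕ) := by
      rcases eq_or_ne (f /ₘ q) 0 with h0 | h0
      · rw [h0, degree_zero]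
        exact WithBot.bot_lt_coe _
      · have hf0 : f ≠ 0 := by
          rintro rfl
          simp at h0
        rw [degree_eq_natDegree hf0] at hf
        rw [degree_eq_natDegree h0, natDegree_divByMonic f hqm, hqdeg]
        have hf' : f.natDegree < 2 * n - 1 := by exact_mod_cast hf
        have hge : n ≤ f.natDegree := by
          by_contra hlt
          apply h0
          rw [divByMonic_eq_zero_iff hqm, degree_eq_natDegree hf0,
            degree_eq_natDegree hqm.ne_zero, hqdeg]
          exact_mod_cast (by omega : f.natDegree < n)
        exact_mod_cast (by omega : f.natDegree - n < n - 1)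
    have hL : L f = L (f %ₘ q) := by
      conv_lhs => rw [← hmod]
      rw [map_add, horth _ hddeg, add_zero]
    have heval : ∀ i < n, f.eval (t i) = (f %ₘ q).eval (t i) := fun i hi => by
      conv_lhs => rw [← hmod]
      rw [eval_add, eval_mul, hqz i hi]
      simp
    rw [hL, Lagrange.eq_interpolate (s := Finset.range n) (v := t) (f := f %ₘ q) hinj
      (by simpa using hrdeg), Lagrange.interpolate_apply, map_sum, discr_apply]
    refine Finset.sum_congr rfl fun i hi => ?_
    rw [← smul_eq_C_mul, map_smul, smul_eq_mul, heval i (Finset.mem_range.1 hi), mul_comm]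
  refine ⟨_, fun i hi => ?_, hquad⟩
  have hi' := Finset.mem_range.2 hi
  have hb0 := Lagrange.basis_ne_zero hinj hi'
  have hbdeg := Lagrange.degree_basis hinj hi'
  rw [Finset.card_range] at hbdeg
  have h1 := hpos _ (by rw [hbdeg]; exact_mod_cast (by omega : n - 1 < n)) hb0
  rw [hquad _ (by rw [degree_mul, hbdeg]; exact_mod_cast (by omega : n - 1 + (n - 1) < 2 * n - 1)),
    discr_apply, Finset.sum_eq_single i] at h1
  · simpa [Lagrange.eval_basis_self hinj hi'] using h1
  · intro j hj hji
    rw [eval_mul, Lagrange.eval_basis_of_ne hji.symm hj]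
    simp
  · intro h
    exact absurd hi' h

/-! ### The functional of a measure with finite moments -/

lemma integrable_eval {μ : Measure ℝ} (hmom : ∀ m : ℕ, Integrable (fun t : ℝ => t ^ m) μ)
    (f : ℝ[X]) : Integrable (fun t => f.eval t) μ := by
  simp only [eval_eq_sum_range]
  exact integrable_finsetSum _ fun i _ => (hmom i).const_mul _

/-- `f ↦ ∫ f dμ` on polynomials. -/
def integralFunctional (μ : Measure ℝ) (hmom : ∀ m : ℕ, Integrable (fun t : ℝ => t ^ m) μ) :
    ℝ[X] →ₗ[ℝ] ℝ where
  toFun f := ∫ t, f.eval t ∂μ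
  map_add' f g := by
    simp only [eval_add]
    exact integral_add (integrable_eval hmom f) (integrable_eval hmom g)
  map_smul' a f := by
    simp only [eval_smul, smul_eq_mul, RingHom.id_apply]
    exact integral_const_mul _ _

end SubproductsPositive

open SubproductsPositive

/-- Let `μ` be a finite Borel measure on `ℝ` with all moments finite and
let `p_0, …, p_n` be monic orthogonal polynomials with `deg p_i = i` and positive
`L²(μ)`-norms. If `p_n + γ p_{n-1}` has simple real roots `t_1 < … < t_n`, then for every
`1 ≤ k < n` the partial product `∏_{i=1}^k (X - t_i)` is a linear combination of
`p_0, …, p_k` with strictly positive coefficients. -/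
theorem subproducts_positive_combination
    (μ : Measure ℝ) [IsFiniteMeasure μ]
    (hmom : ∀ m : ℕ, Integrable (fun t : ℝ => t ^ m) μ)
    (n : ℕ) (hn : 1 ≤ n) (p : ℕ → Polynomial ℝ)
    (hmonic : ∀ i ≤ n, (p i).Monic)
    (hdeg : ∀ i ≤ n, (p i).natDegree = i)
    (horth : ∀ i ≤ n, ∀ j ≤ n, i ≠ j → ∫ t, (p i).eval t * (p j).eval t ∂μ = 0)
    (hpos : ∀ i ≤ n, 0 < ∫ t, ((p i).eval t) ^ 2 ∂μ)
    (γ : ℝ) (t : ℕ → ℝ) (hmono : ∀ i j, i < j → j < n → t i < t j)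
    (hroots : p n + Polynomial.C γ * p (n - 1)
      = ∏ i ∈ Finset.range n, (Polynomial.X - Polynomial.C (t i))) :
    ∀ k, 1 ≤ k → k < n → ∃ c : ℕ → ℝ, (∀ j ≤ k, 0 < c j) ∧
      ∏ i ∈ Finset.range k, (Polynomial.X - Polynomial.C (t i))
        = ∑ j ∈ Finset.range (k + 1), Polynomial.C (c j) * p j := by
  intro k _ hk
  set L := integralFunctional μ hmom with hLdef
  have hL : ∀ f g : ℝ[X], L (f * g) = ∫ t, f.eval t * g.eval t ∂μ := fun f g => by
    simp [hLdef, integralFunctional]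
  have hdeg' : ∀ i ≤ n, (p i).degree = i := fun i hi => by
    rw [degree_eq_natDegree (hmonic i hi).ne_zero, hdeg i hi]
  have hort : ∀ j ≤ n, ∀ f : ℝ[X], f.degree < j → L (p j * f) = 0 := fun j hj f hf =>
    orth_of_pairwise L p j (fun i hi => hdeg' i (by omega))
      (fun i hi => by rw [hL]; exact horth j hj i (by omega) (by omega)) f hf
  have hnorm : ∀ j < n, 0 < L (p j * p j) := fun j hj => by
    rw [hL]
    simpa only [sq] using hpos j hj.le
  obtain ⟨w, hw, hquad⟩ := quadrature L t n hmono
    (fun f hf => by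
      have hf' : f.degree < n := hf.trans (by exact_mod_cast (by omega : n - 1 < n))
      rw [← hroots, add_mul, map_add, hort n le_rfl f hf', mul_assoc, ← smul_eq_C_mul, map_smul,
        hort (n - 1) (by omega) f hf]
      simp)
    (posDef_of_orth L p n (fun i hi => hdeg' i hi.le) (fun j hj => hort j hj.le) hnorm)
  refine discrete_main t n w p hmono hw (fun i hi => hdeg' i hi.le)
    (fun i hi => by rw [(hmonic i hi.le).leadingCoeff]; exact one_pos) ?_ k hk
  intro j hj f hf
  rw [← hquad, hort j hj.le f hf]
  rcases eq_or_ne f 0 with rfl | hf0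
  · rw [mul_zero, degree_zero]
    exact WithBot.bot_lt_coe _
  · rw [degree_eq_natDegree hf0] at hf
    rw [degree_mul, hdeg' j hj.le, degree_eq_natDegree hf0]
    have hf' : f.natDegree < j := by exact_mod_cast hf
    exact_mod_cast (by omega : j + f.natDegree < 2 * n - 1)
end
end

section
/- Let M ≥ 0 be an integer, and let f : [−1,1] → ℝ be continuous on [−1,1] and (M+1)-times differentiable on (−1,1), with f^{(k)}(t) ≥ 0 for all t ∈ (−1,1) and 0 ≤ k ≤ M, and f^{(M+1)}(t) ≤ 0 for all t ∈ (−1,1). Let t_0 ≤ t_1 ≤ … ≤ t_M be points of [−1,1] such that any t_i equal to −1 or 1 occurs only once in the list, and let g(t) = Π_{i=0}^{M} (t − t_i); assume g(t) ≤ 0 for all t ∈ [−1,1]. Let H be a real polynomial of degree at most M such that for each distinct value s among the t_i, occurring with multiplicity m in the list, one has H^{(j)}(s) = f^{(j)}(s) for all 0 ≤ j < m. Then f(t) ≥ H(t) for all t ∈ [−1,1]. -/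
/-!
The classical error formula for Hermite interpolation gives, for `s` outside the nodes,
`f s - H s = f^{(M+1)}(ξ) / (M+1)! * g s` for some `ξ ∈ (-1,1)`; both factors on the right are
nonpositive, so `H s ≤ f s`.

The error formula is obtained by applying Rolle's theorem repeatedly to `f - (H + K g)`, where `K`
is chosen so that this function vanishes at `s` as well. It then has `M + 2` zeros counted with
multiplicity, so its `(M+1)`-st derivative `f^{(M+1)} - K (M+1)!` vanishes somewhere. The version
of Rolle's theorem with multiplicities is `exists_zero_of_hermite_zeros`.
-/

open MeasureTheory Set

noncomputable section

/-- Rolle's theorem with multiplicities. `G k` plays the role of the `k`-th derivative of `G 0`.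
The zeros of `G 0` are listed in increasing order as `x 0 ≤ … ≤ x (n + 1)`, and multiplicities are
encoded by: if the `d + 1` consecutive entries from `x i` to `x (i + d)` coincide, then `G d`
vanishes there. The set `S` is an interval inside `Icc a b`; letting it vary allows zeros of
`G 0` at the endpoints while the induction continues with `S = Ioo a b`. -/
theorem exists_zero_of_hermite_zeros {a b : ℝ} (n : ℕ) :
    ∀ (S : Set ℝ) (G : ℕ → ℝ → ℝ) (x : ℕ → ℝ),
      S ⊆ Icc a b → S.OrdConnected → ContinuousOn (G 0) S →
      (∀ k ≤ n, ∀ y ∈ Ioo a b, HasDerivAt (G k) (G (k + 1) y) y) →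
      (∀ i ≤ n + 1, x i ∈ S) →
      (∀ i j, i ≤ j → j ≤ n + 1 → x i ≤ x j) →
      (∀ i d, i + d ≤ n + 1 → x i = x (i + d) → G d (x i) = 0) →
      (∀ i d, 0 < d → i + d ≤ n + 1 → x i = x (i + d) → x i ∈ Ioo a b) →
      ∃ ξ ∈ Ioo a b, G (n + 1) ξ = 0 := by
  induction n with
  | zero =>
    intro S G x hS hconn hcont hder hxS hmono hzero hint
    rcases (hmono 0 1 (by omega) (by omega)).eq_or_lt with h | h
    · exact ⟨x 0, hint 0 1 (by omega) (by omega) h, hzero 0 1 (by omega) h⟩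
    · have hsub : Ioo (x 0) (x 1) ⊆ Ioo a b :=
        Ioo_subset_Ioo (hS (hxS 0 (by omega))).1 (hS (hxS 1 (by omega))).2
      obtain ⟨c, hc, hc0⟩ := exists_hasDerivAt_eq_zero (f := G 0) (f' := G 1) h
        (hcont.mono (hconn.out (hxS 0 (by omega)) (hxS 1 (by omega))))
        ((hzero 0 0 (by omega) rfl).trans (hzero 1 0 (by omega) rfl).symm)
        (fun y hy => hder 0 (by omega) y (hsub hy))
      exact ⟨c, hsub hc, hc0⟩
  | succ n ih =>
    intro S G x hS hconn hcont hder hxS hmono hzero hint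
    -- A zero `y` of `G 1` between consecutive zeros of `G 0`, equal to both if they coincide.
    have step : ∀ i, ∃ y, i ≤ n + 1 → y ∈ Ioo a b ∧ G 1 y = 0 ∧
        ((x i = y ∧ x (i + 1) = y) ∨ (x i < y ∧ y < x (i + 1))) := by
      intro i
      by_cases hi : i ≤ n + 1
      swap
      · exact ⟨0, fun h => absurd h hi⟩
      rcases (hmono i (i + 1) (by omega) (by omega)).eq_or_lt with h | h
      · exact ⟨x i, fun _ => ⟨hint i 1 (by omega) (by omega) h, hzero i 1 (by omega) h,
          Or.inl ⟨rfl, h.symm⟩⟩⟩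
      · have hsub : Ioo (x i) (x (i + 1)) ⊆ Ioo a b :=
          Ioo_subset_Ioo (hS (hxS i (by omega))).1 (hS (hxS (i + 1) (by omega))).2
        obtain ⟨c, hc, hc0⟩ := exists_hasDerivAt_eq_zero (f := G 0) (f' := G 1) h
          (hcont.mono (hconn.out (hxS i (by omega)) (hxS (i + 1) (by omega))))
          ((hzero i 0 (by omega) rfl).trans (hzero (i + 1) 0 (by omega) rfl).symm)
          (fun y hy => hder 0 (by omega) y (hsub hy))
        exact ⟨c, fun _ => ⟨hsub hc, hc0, Or.inr hc⟩⟩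
    choose y hy using step
    have hxy : ∀ i ≤ n + 1, x i ≤ y i ∧ y i ≤ x (i + 1) := by
      intro i hi
      rcases (hy i hi).2.2 with h | h
      · exact ⟨h.1.le, h.2.ge⟩
      · exact ⟨h.1.le, h.2.le⟩
    refine ih (Ioo a b) (fun k => G (k + 1)) y Ioo_subset_Icc_self ordConnected_Ioo
      (fun z hz => (hder 1 (by omega) z hz).continuousAt.continuousWithinAt)
      (fun k hk z hz => hder (k + 1) (by omega) z hz) (fun i hi => (hy i hi).1) ?_ ?_
      (fun i d _ hid _ => (hy i (by omega)).1)
    · intro i j hij hj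
      rcases hij.eq_or_lt with rfl | hij
      · exact le_rfl
      · exact (hxy i (by omega)).2.trans
          ((hmono (i + 1) j (by omega) (by omega)).trans (hxy j hj).1)
    · intro i d hid heq
      rcases Nat.eq_zero_or_pos d with rfl | hd
      · exact (hy i (by omega)).2.1
      -- The chain `y i ≤ x (i + 1) ≤ x (i + d) ≤ y (i + d)` collapses, which rules out the
      -- strict alternative at both ends.
      have h1 := hxy i (by omega)
      have h2 := hmono (i + 1) (i + d) (by omega) (by omega)
      have h3 := hxy (i + d) (by omega)
      have e1 : x i = y i := by
        rcases (hy i (by omega)).2.2 with h | h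
        · exact h.1
        · linarith [h.2]
      have e2 : x (i + d + 1) = y (i + d) := by
        rcases (hy (i + d) (by omega)).2.2 with h | h
        · exact h.2
        · linarith [h.1]
      rw [← e1]
      exact hzero i (d + 1) (by omega) (by rw [e1, heq, ← e2]; rfl)

/-- Inserting a new value `s` into an increasing list `T 0 ≤ … ≤ T M` gives an increasing list `x`
whose only coincidences are those already present in `T`. -/
theorem exists_sorted_insert (M : ℕ) (T : ℕ → ℝ) (s : ℝ)
    (hT : ∀ i j, i ≤ j → j ≤ M → T i ≤ T j) (hs : ∀ i ≤ M, T i ≠ s) :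
    ∃ x : ℕ → ℝ, (∀ i j, i ≤ j → j ≤ M + 1 → x i ≤ x j) ∧
      (∀ i ≤ M + 1, x i = s ∨ ∃ j ≤ M, x i = T j) ∧
      (∀ i d, 0 < d → i + d ≤ M + 1 → x i = x (i + d) →
        ∃ j, j + d ≤ M ∧ x i = T j ∧ T j = T (j + d)) := by
  classical
  have hex : ∃ p, p = M + 1 ∨ s < T p := ⟨M + 1, Or.inl rfl⟩
  obtain ⟨p, hp, hpM, hlt⟩ : ∃ p, (p = M + 1 ∨ s < T p) ∧ p ≤ M + 1 ∧ ∀ i < p, T i < s := by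
    have hle := Nat.find_min' hex (Or.inl rfl)
    refine ⟨Nat.find hex, Nat.find_spec hex, hle, fun i hi => ?_⟩
    have h := Nat.find_min hex hi
    push Not at h
    exact lt_of_le_of_ne h.2 (hs i (by omega))
  have hgt : ∀ i, p ≤ i → i ≤ M → s < T i := by
    intro i hi hiM
    rcases hp with hp | hp
    · omega
    · exact hp.trans_le (hT p i hi hiM)
  refine ⟨fun i => if i < p then T i else if i = p then s else T (i - 1), ?_, ?_, ?_⟩
  · intro i j hij hj
    dsimp only
    split_ifs with h1 h2 h3 h4 h5 h6 h7
    · exact hT i j hij (by omega)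
    · exact (hlt i h1).le
    · exact hT i (j - 1) (by omega) (by omega)
    · omega
    · exact le_rfl
    · exact (hgt (j - 1) (by omega) (by omega)).le
    · omega
    · omega
    · exact hT _ _ (by omega) (by omega)
  · intro i hi
    dsimp only
    split_ifs with h1 h2
    · exact Or.inr ⟨i, by omega, rfl⟩
    · exact Or.inl rfl
    · exact Or.inr ⟨i - 1, by omega, rfl⟩
  · intro i d hd hid
    dsimp only
    split_ifs with h1 h2 h3 h4 h5 h6 h7
    · exact fun h => ⟨i, by omega, rfl, h⟩
    · exact fun h => absurd h (hs i (by omega))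
    · intro h
      have := hlt i h1
      have := hgt (i + d - 1) (by omega) (by omega)
      linarith
    · omega
    · omega
    · exact fun h => absurd h.symm (hs _ (by omega))
    · omega
    · omega
    · refine fun h => ⟨i - 1, by omega, rfl, ?_⟩
      rw [h]
      congr 1
      omega

/-- The left-hand side is constant because the product is monic of degree `n`. -/
theorem iterate_derivative_prod_X_sub_C (n : ℕ) (t : Fin n → ℝ) (y : ℝ) :
    (Polynomial.derivative^[n] (∏ i, (Polynomial.X - Polynomial.C (t i)))).eval y
      = (n.factorial : ℝ) := by
  have hm : (∏ i, (Polynomial.X - Polynomial.C (t i))).Monic :=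
    Polynomial.monic_prod_of_monic _ _ fun i _ => Polynomial.monic_X_sub_C (t i)
  have hd : (∏ i, (Polynomial.X - Polynomial.C (t i))).natDegree = n := by
    rw [Polynomial.natDegree_prod_of_monic _ _ fun i _ => Polynomial.monic_X_sub_C (t i)]
    simp
  have h0 : (Polynomial.derivative^[n] (∏ i, (Polynomial.X - Polynomial.C (t i)))).natDegree
      ≤ 0 := (Polynomial.natDegree_iterate_derivative _ _).trans (by omega)
  rw [Polynomial.eq_C_of_natDegree_le_zero h0, Polynomial.eval_C,
    Polynomial.coeff_iterate_derivative]
  have hc : (∏ i, (Polynomial.X - Polynomial.C (t i))).coeff n = 1 := by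
    have := hm.coeff_natDegree
    rwa [hd] at this
  simp [hc, Nat.descFactorial_self]

theorem eval_iterate_derivative_prod_eq_zero {n : ℕ} (t : Fin n → ℝ) (a : ℝ) (d : ℕ)
    (hd : d < Set.ncard {i | t i = a}) :
    (Polynomial.derivative^[d] (∏ i, (Polynomial.X - Polynomial.C (t i)))).eval a = 0 := by
  classical
  refine Polynomial.isRoot_iterate_derivative_of_lt_rootMultiplicity (hd.trans_le ?_)
  have hne : (∏ i, (Polynomial.X - Polynomial.C (t i))) ≠ 0 :=
    (Polynomial.monic_prod_of_monic _ _ fun i _ => Polynomial.monic_X_sub_C (t i)).ne_zero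
  rw [Polynomial.le_rootMultiplicity_iff hne]
  have hcard : Set.ncard {i | t i = a} = (Finset.univ.filter fun i => t i = a).card := by
    rw [← Set.ncard_coe_finset]
    simp
  rw [hcard, ← Finset.prod_const]
  have : ∏ _i ∈ Finset.univ.filter (fun i => t i = a), (Polynomial.X - Polynomial.C a)
      = ∏ i ∈ Finset.univ.filter (fun i => t i = a), (Polynomial.X - Polynomial.C (t i)) :=
    Finset.prod_congr rfl fun i hi => by rw [(Finset.mem_filter.1 hi).2]
  rw [this]
  exact Finset.prod_dvd_prod_of_subset _ _ _ (Finset.filter_subset _ _)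

/-- Hermite interpolation below an absolutely monotonic function.
Let `f : [-1,1] → ℝ` be continuous, `(M+1)`-times differentiable on `(-1,1)`, absolutely
monotonic of degree `M` (all derivatives of order `≤ M` are nonnegative on `(-1,1)`) and
with `f^{(M+1)} ≤ 0` on `(-1,1)`. Let `t_0 ≤ … ≤ t_M` be points of `[-1,1]` in which the
endpoints `±1` occur at most once, let `g(s) = ∏ (s - t_i)` be nonpositive on `[-1,1]`,
and let `H` be the Hermite interpolating polynomial of `f` at the `t_i` (of degree at
most `M`, agreeing with `f` and its derivatives at each `t_i` to the order of its
multiplicity). Then `f ≥ H` on `[-1,1]`. -/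
theorem hermite_interpolant_le_absolutely_monotonic
    (M : ℕ) (f : ℝ → ℝ) (hfc : ContinuousOn f (Icc (-1) 1))
    (hdiff : ∀ k < M + 1,
      DifferentiableOn ℝ (iteratedDerivWithin k f (Ioo (-1) 1)) (Ioo (-1) 1))
    (habs : ∀ k ≤ M, ∀ s ∈ Ioo (-1 : ℝ) 1, 0 ≤ iteratedDerivWithin k f (Ioo (-1) 1) s)
    (hlast : ∀ s ∈ Ioo (-1 : ℝ) 1, iteratedDerivWithin (M + 1) f (Ioo (-1) 1) s ≤ 0)
    (t : Fin (M + 1) → ℝ) (hmem : ∀ i, t i ∈ Icc (-1 : ℝ) 1) (hmono : Monotone t)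
    (hend : ∀ i j, i ≠ j → t i = t j → t i ≠ -1 ∧ t i ≠ 1)
    (hg : ∀ s ∈ Icc (-1 : ℝ) 1, (∏ i, (s - t i)) ≤ 0)
    (H : Polynomial ℝ) (hHdeg : H.natDegree ≤ M)
    (hH0 : ∀ i, H.eval (t i) = f (t i))
    (hHder : ∀ i, ∀ j : ℕ, 0 < j → j < Set.ncard {i' : Fin (M + 1) | t i' = t i} →
      (Polynomial.derivative^[j] H).eval (t i)
        = iteratedDerivWithin j f (Ioo (-1) 1) (t i)) :
    ∀ s ∈ Icc (-1 : ℝ) 1, H.eval s ≤ f s := by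
  intro s hs
  by_cases hst : ∃ i, t i = s
  · obtain ⟨i, rfl⟩ := hst
    exact (hH0 i).le
  push Not at hst
  have hgs : (∏ i, (s - t i)) ≠ 0 :=
    Finset.prod_ne_zero_iff.2 fun i _ => sub_ne_zero.2 (hst i).symm
  set g : Polynomial ℝ := ∏ i, (Polynomial.X - Polynomial.C (t i)) with hgdef
  have hgeval : ∀ y, g.eval y = ∏ i, (y - t i) := by
    intro y
    simp [hgdef, Polynomial.eval_prod]
  -- `K` is chosen so that `f - (H + K g)` vanishes at `s`.
  set K : ℝ := (f s - H.eval s) / (∏ i, (s - t i)) with hK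
  have hKs : f s - H.eval s = K * ∏ i, (s - t i) := (div_mul_cancel₀ _ hgs).symm
  set P : Polynomial ℝ := H + Polynomial.C K * g with hP
  have hPiter : ∀ k y, (Polynomial.derivative^[k] P).eval y
      = (Polynomial.derivative^[k] H).eval y + K * (Polynomial.derivative^[k] g).eval y := by
    intro k y
    rw [hP, iterate_map_add, Polynomial.iterate_derivative_C_mul]
    simp
  set G : ℕ → ℝ → ℝ := fun k y =>
    iteratedDerivWithin k f (Ioo (-1) 1) y - (Polynomial.derivative^[k] P).eval y with hG
  have hG0 : ∀ y, G 0 y = f y - P.eval y := by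
    intro y
    simp [hG]
  have hGt : ∀ i, ∀ d < Set.ncard {i' | t i' = t i}, G d (t i) = 0 := by
    intro i d hd
    have hgz := eval_iterate_derivative_prod_eq_zero t (t i) d hd
    simp only [hG, hPiter, hgdef, hgz]
    rcases Nat.eq_zero_or_pos d with rfl | hd0
    · simp [hH0 i]
    · simp [hHder i d hd0 hd]
  have hGs : G 0 s = 0 := by
    rw [hG0, hP, Polynomial.eval_add, Polynomial.eval_mul, Polynomial.eval_C, hgeval]
    linarith
  -- The nodes as a sequence on `ℕ`; the values beyond index `M` play no role.
  set T : ℕ → ℝ := fun i => if h : i < M + 1 then t ⟨i, h⟩ else 0 with hTdef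
  have hTt : ∀ i (h : i < M + 1), T i = t ⟨i, h⟩ := fun i h => dif_pos h
  obtain ⟨x, hxmono, hxval, hxeq⟩ := exists_sorted_insert M T s
    (fun i j hij hj => by
      rw [hTt i (by omega), hTt j (by omega)]
      exact hmono (by simpa using hij))
    (fun i hi => by
      rw [hTt i (by omega)]
      exact hst _)
  -- `d + 1` coinciding consecutive nodes have multiplicity greater than `d`.
  have hcount : ∀ j d, ∀ h : j + d < M + 1, T j = T (j + d) →
      d < Set.ncard {i' | t i' = t ⟨j, by omega⟩} := by
    intro j d h hjd
    have hsub : ((Finset.Icc (⟨j, by omega⟩ : Fin (M + 1)) ⟨j + d, h⟩ : Finset _) : Set _) ⊆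
        {i' | t i' = t ⟨j, by omega⟩} := by
      intro i hi
      rw [Finset.coe_Icc] at hi
      have h1 := hmono hi.1
      have h2 := hmono hi.2
      rw [hTt j (by omega), hTt (j + d) h] at hjd
      rw [← hjd] at h2
      exact le_antisymm h2 h1
    have hle := Set.ncard_le_ncard hsub (Set.toFinite _)
    rw [Set.ncard_coe_finset, Fin.card_Icc] at hle
    simp only at hle
    omega
  obtain ⟨ξ, hξ, hξ0⟩ := exists_zero_of_hermite_zeros (a := -1) (b := 1) M (Icc (-1) 1) G x
    subset_rfl ordConnected_Icc
    (by
      have : G 0 = fun y => f y - P.eval y := funext hG0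
      rw [this]
      exact hfc.sub P.continuous.continuousOn)
    (by
      intro k hk y hy
      have h1 := ((hdiff k (by omega)) y hy).hasDerivWithinAt.hasDerivAt (isOpen_Ioo.mem_nhds hy)
      rw [← iteratedDerivWithin_succ] at h1
      have h2 := (Polynomial.derivative^[k] P).hasDerivAt y
      rw [← Function.iterate_succ_apply' Polynomial.derivative] at h2
      exact h1.sub h2)
    (by
      intro i hi
      rcases hxval i hi with h | ⟨j, hj, h⟩
      · rw [h]
        exact hs
      · rw [h, hTt j (by omega)]
        exact hmem _)
    hxmono
    (by
      intro i d hid heq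
      rcases Nat.eq_zero_or_pos d with rfl | hd
      · rcases hxval i (by omega) with h | ⟨j, hj, h⟩
        · rw [h]
          exact hGs
        · have hc := hcount j 0 (by omega) rfl
          rw [h, hTt j (by omega)]
          exact hGt _ 0 hc
      · obtain ⟨j, hj, h, hjd⟩ := hxeq i d hd hid heq
        rw [h, hTt j (by omega)]
        exact hGt _ d (hcount j d (by omega) hjd))
    (by
      intro i d hd hid heq
      obtain ⟨j, hj, h, hjd⟩ := hxeq i d hd hid heq
      rw [hTt j (by omega), hTt (j + d) (by omega)] at hjd
      have hne := hend _ _ (by simp; omega) hjd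
      rw [h, hTt j (by omega)]
      exact ⟨lt_of_le_of_ne (hmem _).1 hne.1.symm, lt_of_le_of_ne (hmem _).2 hne.2⟩)
  have hHz : Polynomial.derivative^[M + 1] H = 0 :=
    Polynomial.iterate_derivative_eq_zero (by omega)
  have hfact : (0 : ℝ) < ((M + 1).factorial : ℝ) := by exact_mod_cast Nat.factorial_pos _
  have hKle : K ≤ 0 := by
    have h := hlast ξ hξ
    simp only [hG, hPiter, hHz, hgdef, iterate_derivative_prod_X_sub_C] at hξ0
    rw [Polynomial.eval_zero] at hξ0
    by_contra hpos
    push Not at hpos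
    have := mul_pos hpos hfact
    linarith
  have := mul_nonneg_of_nonpos_of_nonpos hKle (hg s hs)
  linarith
end
end

section
/- Let d ≥ 2 and let M ≥ 1 be an integer. Let f : [−1,1] → ℝ be continuous on [−1,1] and (M+1)-times differentiable on (−1,1), with f^{(k)}(t) ≥ 0 for all t ∈ (−1,1) and 0 ≤ k ≤ M, and f^{(M+1)}(t) ≤ 0 for all t ∈ (−1,1). Let C ⊂ S^{d-1} be a tight spherical M-design. Then the uniform probability measure μ_C = (1/|C|) Σ_{x∈C} δ_x minimizes the energy I_f(μ) = ∫∫ f(⟨x,y⟩) dμ(x)dμ(y) over all Borel probability measures μ on S^{d-1}. -/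
/-! The proof is the linear programming method with Hermite interpolation at the inner products
of the design. For a tight design the inner products between distinct points split into a set
`B ⊆ {-1}` and a set `T` of points of `(-1, 1)` with `2 |T| + |B| = M` (`exists_tight_nodes`; for
even `M` one must first exclude antipodal pairs, `neg_one_notMem_of_even`). Let `p` be the
polynomial of degree at most `M` that agrees with `f` at `B` and `1` and to second order at `T`.

*Minorant.* The error `f - p` at `t` is `f^{(M+1)}(ξ) / (M+1)!` times
`(t - 1) ∏_B (t - b) ∏_T (t - a)²`. Both factors are nonpositive, so `p ≤ f` on `[-1, 1]`
(`exists_minorant`).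

*Positive definiteness.* In the Newton basis with the nodes taken in increasing order, the
coefficients of `p` are values `f^{(k)}(ξ) / k!` with `k ≤ M`, hence nonnegative, and the basis
elements are products of polynomials `∏_{a ∈ J} (X - a)` with `J = B` or `J` an initial segment
of `T`. Each of these is a positive definite function of `⟪x, y⟫`. Indeed the orthogonal
polynomials for the distance distribution of the design are positive definite, because
convolution over the design reproduces them up to a positive factor (`design_orth_isPD`).
Multiplying the weight by `s - t` at the largest node `s` yields orthogonal polynomials that are
nonnegative combinations of the previous ones (`mem_cone_of_remove_max`), and similarly for
`1 - t²` and a symmetric weight (`isPD_of_remove_endpoints`). Removing the nodes one at a time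
from the right, the node polynomial of each initial segment appears as the last orthogonal
polynomial (`nodePoly_mem_cone`). Products of positive definite functions are positive definite.

*Energies.* A positive definite polynomial of degree at most `M` is minimized in energy by every
`M`-design (`energy_unifOn_le_of_isPD`), and `p` agrees with `f` at all inner products of `C`, so
`I_f(μ_C) = I_p(μ_C) ≤ I_p(μ) ≤ I_f(μ)`. -/

open MeasureTheory Metric
open scoped RealInnerProductSpace

noncomputable section

variable {d : ℕ}

/-! ### Orthogonal polynomials for a finitely supported weight -/

open Polynomial in
/-- The linear functional `p ↦ ∑_{t ∈ N} w(t) p(t)` on polynomials. -/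
def wsum (N : Finset ℝ) (w : ℝ → ℝ) (p : ℝ[X]) : ℝ := ∑ t ∈ N, w t * p.eval t

open Polynomial in
/-- `p` is the monic orthogonal polynomial of degree `k` for the weight `w` on the nodes `N`. -/
def IsOrth (N : Finset ℝ) (w : ℝ → ℝ) (k : ℕ) (p : ℝ[X]) : Prop :=
  p.Monic ∧ p.natDegree = k ∧ ∀ h : ℝ[X], h.degree < k → wsum N w (p * h) = 0

section Orth
open Polynomial

lemma wsum_add (N : Finset ℝ) (w : ℝ → ℝ) (p q : ℝ[X]) :
    wsum N w (p + q) = wsum N w p + wsum N w q := by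
  simp [wsum, mul_add, Finset.sum_add_distrib]

lemma wsum_sub (N : Finset ℝ) (w : ℝ → ℝ) (p q : ℝ[X]) :
    wsum N w (p - q) = wsum N w p - wsum N w q := by
  simp [wsum, mul_sub, Finset.sum_sub_distrib]

lemma wsum_C_mul (N : Finset ℝ) (w : ℝ → ℝ) (c : ℝ) (p : ℝ[X]) :
    wsum N w (C c * p) = c * wsum N w p := by
  simp only [wsum, eval_mul, eval_C, Finset.mul_sum]
  exact Finset.sum_congr rfl fun _ _ => by ring

/-- The functional is positive definite on polynomials of degree below the number of nodes. -/
lemma eq_zero_of_wsum_sq {N : Finset ℝ} {w : ℝ → ℝ} (hw : ∀ t ∈ N, 0 < w t) {p : ℝ[X]}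
    (hd : p.degree < N.card) (h : wsum N w (p * p) = 0) : p = 0 := by
  refine Polynomial.eq_zero_of_degree_lt_of_eval_finset_eq_zero N hd fun t ht => ?_
  have := (Finset.sum_eq_zero_iff_of_nonneg (fun t ht => ?_)).1 h t ht
  · have h2 := (hw t ht).ne'
    simpa [h2] using this
  · simp only [eval_mul]
    exact mul_nonneg (hw t ht).le (mul_self_nonneg _)

lemma wsum_sq_pos {N : Finset ℝ} {w : ℝ → ℝ} (hw : ∀ t ∈ N, 0 < w t) {p : ℝ[X]}
    (hd : p.degree < N.card) (hp : p ≠ 0) : 0 < wsum N w (p * p) := by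
  refine lt_of_le_of_ne ?_ fun h => hp (eq_zero_of_wsum_sq hw hd h.symm)
  refine Finset.sum_nonneg fun t ht => ?_
  simp only [eval_mul]
  exact mul_nonneg (hw t ht).le (mul_self_nonneg _)

lemma IsOrth.degree_eq {N : Finset ℝ} {w : ℝ → ℝ} {k : ℕ} {p : ℝ[X]} (hp : IsOrth N w k p) :
    p.degree = k := by
  rw [degree_eq_natDegree hp.1.ne_zero, hp.2.1]

/-- Existence of orthogonal polynomials: the Gram form on polynomials of degree `< k` is
nondegenerate, so the functional `-⟨X ^ k, ·⟩` is represented by such a polynomial. -/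
lemma exists_isOrth {N : Finset ℝ} {w : ℝ → ℝ} (hw : ∀ t ∈ N, 0 < w t) {k : ℕ}
    (hk : k ≤ N.card) : ∃ p, IsOrth N w k p := by
  let φ : ℝ[X] →ₗ[ℝ] ℝ :=
    { toFun := wsum N w
      map_add' := wsum_add N w
      map_smul' := fun c p => by simp [smul_eq_C_mul, wsum_C_mul] }
  let B : degreeLT ℝ k →ₗ[ℝ] Module.Dual ℝ (degreeLT ℝ k) :=
    ((LinearMap.mul ℝ ℝ[X]).compr₂ φ).domRestrict₁₂ (degreeLT ℝ k) (degreeLT ℝ k)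
  have hB : ∀ a b, B a b = wsum N w (a.1 * b.1) := fun a b => rfl
  have : FiniteDimensional ℝ (degreeLT ℝ k) :=
    Module.Finite.equiv (degreeLTEquiv ℝ k).symm
  have hinj : Function.Injective B := by
    refine (injective_iff_map_eq_zero B).2 fun a ha => ?_
    have h0 := hB a a
    rw [ha] at h0
    refine Subtype.ext (eq_zero_of_wsum_sq hw (lt_of_lt_of_le (mem_degreeLT.1 a.2) ?_) h0.symm)
    exact_mod_cast hk
  have hsurj : Function.Surjective B :=
    (LinearMap.injective_iff_surjective_of_finrank_eq_finrank
      (Subspace.dual_finrank_eq).symm).1 hinj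
  obtain ⟨a, ha⟩ := hsurj
    (-((LinearMap.mul ℝ ℝ[X]).compr₂ φ (X ^ k)).domRestrict (degreeLT ℝ k))
  have had : a.1.degree < k := mem_degreeLT.1 a.2
  refine ⟨X ^ k + a.1, monic_X_pow_add had, ?_, fun h hh => ?_⟩
  · apply natDegree_eq_of_degree_eq_some
    rw [degree_add_eq_left_of_degree_lt (by simpa using had)]
    simp
  · have := congrArg (fun ψ => ψ ⟨h, mem_degreeLT.2 hh⟩) ha
    simp only [hB] at this
    have h3 : wsum N w (a.1 * h) = - wsum N w (X ^ k * h) := this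
    rw [add_mul, wsum_add, h3]; ring

/-- A polynomial whose pairings with the orthogonal polynomials are nonnegative is a nonnegative
combination of them, hence lies in every convex cone `K` containing them. -/
lemma mem_cone_of_wsum_nonneg {N : Finset ℝ} {w : ℝ → ℝ} (hw : ∀ t ∈ N, 0 < w t)
    {K : ℝ[X] → Prop} (K0 : K 0) (Kadd : ∀ p q, K p → K q → K (p + q))
    (Ksmul : ∀ (c : ℝ) p, 0 ≤ c → K p → K (C c * p)) :
    ∀ k ≤ N.card, ∀ u : ℝ[X], u.degree < k →
      (∀ i < k, ∀ p, IsOrth N w i p → K p ∧ 0 ≤ wsum N w (u * p)) → K u := by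
  intro k
  induction k with
  | zero =>
    intro _ u hu _
    have : u = 0 := by simpa using hu
    rwa [this]
  | succ k ih =>
    intro hk u hu H
    obtain ⟨p, hp⟩ := exists_isOrth (N := N) (w := w) hw (k := k) (by omega)
    have hpd : p.degree = k := hp.degree_eq
    have hpos : 0 < wsum N w (p * p) :=
      wsum_sq_pos hw (by rw [hpd]; exact_mod_cast hk) hp.1.ne_zero
    set c := u.coeff k
    set v := u - C c * p with hv
    have hvd : v.degree < k := by
      rw [degree_lt_iff_coeff_zero]
      intro j hj
      rcases eq_or_lt_of_le hj with rfl | hj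
      · have : p.coeff k = 1 := by have := hp.1.coeff_natDegree; rwa [hp.2.1] at this
        simp [hv, this, c]
      · have h1 : u.coeff j = 0 := coeff_eq_zero_of_degree_lt
          (lt_of_lt_of_le hu (by exact_mod_cast hj))
        have h2 : p.coeff j = 0 := coeff_eq_zero_of_degree_lt
          (by rw [hpd]; exact_mod_cast hj)
        simp [hv, h1, h2]
    have hu_eq : u = v + C c * p := by simp [hv]
    have hup : wsum N w (u * p) = c * wsum N w (p * p) := by
      have h0 : wsum N w (p * v) = 0 := hp.2.2 v hvd
      rw [hu_eq, add_mul, wsum_add, mul_comm v p, h0, mul_assoc, wsum_C_mul, zero_add]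
    have hc : 0 ≤ c := by
      have := (H k (by omega) p hp).2
      rw [hup] at this
      exact nonneg_of_mul_nonneg_left this hpos
    rw [hu_eq]
    refine Kadd _ _ (ih (by omega) v hvd fun i hi q hq => ⟨(H i (by omega) q hq).1, ?_⟩)
      (Ksmul _ _ hc (H k (by omega) p hp).1)
    have h0 : wsum N w (p * q) = 0 := hp.2.2 q (by rw [hq.degree_eq]; exact_mod_cast hi)
    have := (H i (by omega) q hq).2
    rwa [hu_eq, add_mul, wsum_add, mul_assoc, wsum_C_mul, h0, mul_zero, add_zero] at this

/-- An orthogonal polynomial is positive at and to the right of the largest node: a root `z` there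
would give `0 = ∑ w(t) (t - z) q(t) ^ 2` with `p = (X - z) q`, a sum of nonpositive terms. -/
lemma IsOrth.eval_pos {N : Finset ℝ} {w : ℝ → ℝ} (hw : ∀ t ∈ N, 0 < w t) {k : ℕ} {p : ℝ[X]}
    (hp : IsOrth N w k p) (hk : k < N.card) {s : ℝ} (hs : ∀ t ∈ N, t ≤ s) : 0 < p.eval s := by
  by_contra hneg
  push Not at hneg
  have hk0 : k ≠ 0 := by
    rintro rfl
    have := hp.1.natDegree_eq_zero.1 hp.2.1
    simp [this] at hneg
    linarith
  have hdeg : 0 < p.degree := by rw [hp.degree_eq]; exact_mod_cast Nat.pos_of_ne_zero hk0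
  have htop : Filter.Tendsto (fun x => p.eval x) Filter.atTop Filter.atTop :=
    p.tendsto_atTop_of_leadingCoeff_nonneg hdeg (by rw [hp.1.leadingCoeff]; norm_num)
  obtain ⟨b, hb0, hbs⟩ := ((htop.eventually_ge_atTop 0).and
    (Filter.eventually_ge_atTop s)).exists
  obtain ⟨z, hz, hz0⟩ := intermediate_value_Icc hbs p.continuous.continuousOn ⟨hneg, hb0⟩
  obtain ⟨q, hq⟩ := dvd_iff_isRoot.2 (show p.IsRoot z from hz0)
  have hq0 : q ≠ 0 := by rintro rfl; exact hp.1.ne_zero (by simp [hq])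
  have hqd : q.natDegree + 1 = k := by
    rw [← hp.2.1, hq, natDegree_mul (X_sub_C_ne_zero z) hq0, natDegree_X_sub_C, add_comm]
  have horth := hp.2.2 q (by
    rw [degree_eq_natDegree hq0]; exact_mod_cast (by omega : q.natDegree < k))
  have hterm : ∀ t ∈ N, w t * (p * q).eval t ≤ 0 := fun t ht => by
    have h1 : t - z ≤ 0 := by linarith [hs t ht, hz.1]
    have : w t * (p * q).eval t = w t * (q.eval t * q.eval t) * (t - z) := by
      rw [hq]; simp; ring
    rw [this]
    exact mul_nonpos_of_nonneg_of_nonpos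
      (mul_nonneg (hw t ht).le (mul_self_nonneg _)) h1
  have hz' := (Finset.sum_eq_zero_iff_of_nonpos hterm).1 horth
  refine hq0 (Polynomial.eq_zero_of_degree_lt_of_eval_finset_eq_zero (N.erase z) ?_ ?_)
  · rw [degree_eq_natDegree hq0]
    have : N.card - 1 ≤ (N.erase z).card := Finset.pred_card_le_card_erase
    exact_mod_cast (by omega : q.natDegree < (N.erase z).card)
  · intro t ht
    have h1 := hz' t (Finset.mem_of_mem_erase ht)
    have h2 := (hw t (Finset.mem_of_mem_erase ht)).ne'
    have h3 : t - z ≠ 0 := sub_ne_zero.2 (Finset.ne_of_mem_erase ht)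
    rw [hq] at h1
    simpa [h2, h3] using h1

/-- `r - p` has degree below `k`, so it is orthogonal to `p`. -/
lemma IsOrth.wsum_mul_monic {N : Finset ℝ} {w : ℝ → ℝ} {k : ℕ} {p r : ℝ[X]}
    (hp : IsOrth N w k p) (hr : r.Monic) (hrd : r.natDegree = k) :
    wsum N w (r * p) = wsum N w (p * p) := by
  have hrd' : r.degree = k := by rw [degree_eq_natDegree hr.ne_zero, hrd]
  have hd : (r - p).degree < k := by
    rw [← hrd']
    exact degree_sub_lt_left (by rw [hrd', hp.degree_eq]) hr.ne_zero
      (by rw [hr.leadingCoeff, hp.1.leadingCoeff])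
  have := hp.2.2 _ hd
  rw [mul_sub, wsum_sub, mul_comm p r] at this
  linarith

/-- Removing the largest node `s` and multiplying the weight by `s - t` produces orthogonal
polynomials that are nonnegative combinations of the original ones. -/
lemma mem_cone_of_remove_max {N : Finset ℝ} {w : ℝ → ℝ} {s : ℝ} (hs : ∀ t ∈ N, t < s)
    (hw : ∀ t ∈ insert s N, 0 < w t)
    {K : ℝ[X] → Prop} (K0 : K 0) (Kadd : ∀ p q, K p → K q → K (p + q))
    (Ksmul : ∀ (c : ℝ) p, 0 ≤ c → K p → K (C c * p))
    (H : ∀ k ≤ N.card, ∀ p, IsOrth (insert s N) w k p → K p)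
    {k : ℕ} (hk : k ≤ N.card) {r : ℝ[X]} (hr : IsOrth N (fun t => (s - t) * w t) k r) : K r := by
  have hsN : s ∉ N := fun h => lt_irrefl _ (hs s h)
  have hcard : (insert s N).card = N.card + 1 := Finset.card_insert_of_notMem hsN
  have hle : ∀ t ∈ insert s N, t ≤ s := by
    intro t ht
    rcases Finset.mem_insert.1 ht with rfl | h
    · exact le_rfl
    · exact (hs t h).le
  have hconv : ∀ h : ℝ[X], wsum (insert s N) w ((X - C s) * h)
      = - wsum N (fun t => (s - t) * w t) h := by
    intro h
    simp only [wsum, Finset.sum_insert hsN, ← Finset.sum_neg_distrib]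
    simp only [eval_mul, eval_sub, eval_X, eval_C, sub_self, zero_mul, mul_zero, zero_add]
    exact Finset.sum_congr rfl fun _ _ => by ring
  -- modulo `X - s`, each factor may be replaced by its value at `s`
  have key : ∀ i ≤ k, ∀ p, IsOrth (insert s N) w i p →
      wsum (insert s N) w (r * p) = p.eval s * wsum (insert s N) w r := by
    intro i hi p hp
    obtain ⟨q, hq⟩ := X_sub_C_dvd_sub_C_eval (p := p) (a := s)
    have hqd : q.degree < k := by
      by_cases hq0 : q = 0
      · simp [hq0]
      · have h1 : (p - C (p.eval s)).natDegree = q.natDegree + 1 := by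
          rw [hq, natDegree_mul (X_sub_C_ne_zero s) hq0, natDegree_X_sub_C, add_comm]
        have h2 : (p - C (p.eval s)).natDegree = i := by rw [natDegree_sub_C, hp.2.1]
        rw [degree_eq_natDegree hq0]
        exact_mod_cast (by omega : q.natDegree < k)
    have h3 : r * p = C (p.eval s) * r + (X - C s) * (r * q) := by
      have : p = C (p.eval s) + (X - C s) * q := by rw [← hq]; ring
      calc r * p = r * (C (p.eval s) + (X - C s) * q) := by rw [← this]
        _ = _ := by ring
    rw [h3, wsum_add, wsum_C_mul, hconv, hr.2.2 q hqd]; ring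
  obtain ⟨p, hp⟩ := exists_isOrth (N := insert s N) (w := w) hw (k := k) (by omega)
  have hpos : 0 < wsum (insert s N) w (p * p) :=
    wsum_sq_pos hw (by rw [hp.degree_eq, hcard]; exact_mod_cast (by omega)) hp.1.ne_zero
  have hps := hp.eval_pos hw (by omega) hle
  have hr1 : 0 < wsum (insert s N) w r := by
    rw [← hp.wsum_mul_monic hr.1 hr.2.1, key k le_rfl p hp] at hpos
    exact pos_of_mul_pos_right hpos hps.le
  refine mem_cone_of_wsum_nonneg hw K0 Kadd Ksmul (k + 1) (by omega) r ?_ ?_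
  · rw [hr.degree_eq]; exact_mod_cast Nat.lt_succ_self k
  · intro i hi q hq
    refine ⟨H i (by omega) q hq, ?_⟩
    rw [key i (by omega) q hq]
    exact mul_nonneg (hq.eval_pos hw (by omega) hle).le hr1.le

/-- `∏_{a ∈ J} (X - a)`. -/
def nodePoly (J : Finset ℝ) : ℝ[X] := ∏ a ∈ J, (X - C a)

/-- `J` consists of the smallest elements of `N`. -/
def IsLowerPart (J N : Finset ℝ) : Prop := J ⊆ N ∧ ∀ a ∈ J, ∀ b ∈ N, b ∉ J → a < b

lemma nodePoly_monic (J : Finset ℝ) : (nodePoly J).Monic := monic_prod_X_sub_C _ _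

lemma nodePoly_natDegree (J : Finset ℝ) : (nodePoly J).natDegree = J.card :=
  natDegree_finsetProd_X_sub_C_eq_card _ _

lemma nodePoly_eval (J : Finset ℝ) (t : ℝ) : (nodePoly J).eval t = ∏ a ∈ J, (t - a) := by
  simp [nodePoly, eval_prod]

lemma nodePoly_eval_eq_zero {J : Finset ℝ} {t : ℝ} (ht : t ∈ J) : (nodePoly J).eval t = 0 := by
  rw [nodePoly_eval]; exact Finset.prod_eq_zero ht (sub_self t)

lemma nodePoly_eval_ne_zero {J : Finset ℝ} {t : ℝ} (ht : t ∉ J) : (nodePoly J).eval t ≠ 0 := by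
  rw [nodePoly_eval]
  exact Finset.prod_ne_zero_iff.2 fun a ha => sub_ne_zero.2 fun h => ht (h ▸ ha)

/-- If a convex cone of polynomials contains all orthogonal polynomials of degree at most the
number of nodes, it contains the node polynomial of every initial segment of the nodes. -/
lemma nodePoly_mem_cone
    {K : ℝ[X] → Prop} (K0 : K 0) (Kadd : ∀ p q, K p → K q → K (p + q))
    (Ksmul : ∀ (c : ℝ) p, 0 ≤ c → K p → K (C c * p)) (N : Finset ℝ) :
    ∀ w : ℝ → ℝ, (∀ t ∈ N, 0 < w t) → (∀ k ≤ N.card, ∀ p, IsOrth N w k p → K p) →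
      ∀ J, IsLowerPart J N → K (nodePoly J) := by
  have full : ∀ (N : Finset ℝ) (w : ℝ → ℝ), IsOrth N w N.card (nodePoly N) := fun N w =>
    ⟨nodePoly_monic N, nodePoly_natDegree N, fun h _ => Finset.sum_eq_zero fun t ht => by
      simp [nodePoly_eval_eq_zero ht]⟩
  induction N using Finset.induction_on_max with
  | empty =>
    intro w _ H J hJ
    have : J = ∅ := Finset.subset_empty.1 hJ.1
    subst this
    exact H 0 le_rfl _ (full ∅ w)
  | insert s N hs ih =>
    intro w hw H J hJ
    have hsN : s ∉ N := fun h => lt_irrefl _ (hs s h)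
    have hcard : (insert s N).card = N.card + 1 := Finset.card_insert_of_notMem hsN
    by_cases hsJ : s ∈ J
    · have : J = insert s N := by
        refine Finset.Subset.antisymm hJ.1 fun b hb => ?_
        by_contra hbJ
        have h1 := hJ.2 s hsJ b hb hbJ
        rcases Finset.mem_insert.1 hb with rfl | h
        · exact hbJ hsJ
        · exact lt_asymm h1 (hs b h)
      subst this
      exact H _ le_rfl _ (full _ w)
    · refine ih (fun t => (s - t) * w t)
        (fun t ht => mul_pos (sub_pos.2 (hs t ht)) (hw t (Finset.mem_insert_of_mem ht)))
        (fun k hk p hp => mem_cone_of_remove_max hs hw K0 Kadd Ksmul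
          (fun k hk p hp => H k (by omega) p hp) hk hp) J
        ⟨fun a ha => ?_, fun a ha b hb => hJ.2 a ha b (Finset.mem_insert_of_mem hb)⟩
      rcases Finset.mem_insert.1 (hJ.1 ha) with rfl | h
      · exact absurd ha hsJ
      · exact h

end Orth

/-! ### Hermite interpolation with nonnegative Newton coefficients -/

section Interp
open Polynomial Set

/-- Rolle's theorem between consecutive zeros. The bound `z' < z` keeps the new zeros
separated in the induction on the largest zero. -/
lemma rolle_finset {S : Set ℝ} (hS : S.OrdConnected) (hS1 : S ⊆ Icc (-1) 1) {g g' : ℝ → ℝ}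
    (hgc : ContinuousOn g S) (hg : ∀ s ∈ Ioo (-1 : ℝ) 1, HasDerivAt g (g' s) s)
    (Z : Finset ℝ) (hZS : ∀ z ∈ Z, z ∈ S) (hZ : ∀ z ∈ Z, g z = 0) :
    ∃ Z' : Finset ℝ, Z.card ≤ Z'.card + 1 ∧ Disjoint Z Z' ∧
      (∀ z ∈ Z', z ∈ Ioo (-1 : ℝ) 1 ∧ g' z = 0) ∧ ∀ z' ∈ Z', ∃ z ∈ Z, z' < z := by
  induction Z using Finset.induction_on_max with
  | empty => exact ⟨∅, by simp⟩
  | insert s Z hs ih =>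
    obtain ⟨Z', hc, hdis, hz', hlt⟩ := ih (fun z hz => hZS z (Finset.mem_insert_of_mem hz))
      (fun z hz => hZ z (Finset.mem_insert_of_mem hz))
    have hsZ : s ∉ Z := fun h => lt_irrefl _ (hs s h)
    rcases Z.eq_empty_or_nonempty with rfl | hne
    · exact ⟨∅, by simp⟩
    · set a := Z.max' hne with ha
      have haZ : a ∈ Z := Z.max'_mem hne
      have has : a < s := hs a haZ
      have haS := hZS a (Finset.mem_insert_of_mem haZ)
      have hsS := hZS s (Finset.mem_insert_self s Z)
      have hsub : Icc a s ⊆ S := hS.out haS hsS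
      have ha1 := hS1 haS
      have hs1 := hS1 hsS
      obtain ⟨ξ, hξ, hξ0⟩ := exists_hasDerivAt_eq_zero has (hgc.mono hsub)
        (by rw [hZ a (Finset.mem_insert_of_mem haZ), hZ s (Finset.mem_insert_self s Z)])
        (fun x hx => hg x ⟨by linarith [ha1.1, hx.1], by linarith [hs1.2, hx.2]⟩)
      have hle : ∀ z ∈ Z, z ≤ a := fun z hz => Z.le_max' z hz
      have hξZ' : ξ ∉ Z' := fun h => by
        obtain ⟨z, hz, hzl⟩ := hlt ξ h
        linarith [hle z hz, hξ.1]
      refine ⟨insert ξ Z', ?_, ?_, ?_, ?_⟩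
      · rw [Finset.card_insert_of_notMem hsZ, Finset.card_insert_of_notMem hξZ']; omega
      · rw [Finset.disjoint_left]
        intro z hz hz2
        rcases Finset.mem_insert.1 hz with rfl | hz <;>
          rcases Finset.mem_insert.1 hz2 with rfl | hz2
        · exact lt_irrefl _ hξ.2
        · obtain ⟨y, hy, hyl⟩ := hlt _ hz2
          exact lt_asymm hyl (hs y hy)
        · linarith [hle _ hz, hξ.1]
        · exact Finset.disjoint_left.1 hdis hz hz2
      · intro z hz
        rcases Finset.mem_insert.1 hz with rfl | hz
        · exact ⟨⟨by linarith [ha1.1, hξ.1], by linarith [hs1.2, hξ.2]⟩, hξ0⟩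
        · exact hz' z hz
      · intro z hz
        rcases Finset.mem_insert.1 hz with rfl | hz
        · exact ⟨s, Finset.mem_insert_self _ _, hξ.2⟩
        · obtain ⟨y, hy, hyl⟩ := hlt z hz
          exact ⟨y, Finset.mem_insert_of_mem hy, hyl⟩

lemma rolle_iterate (n : ℕ) : ∀ (G : ℕ → ℝ → ℝ),
    (∀ k < n, ∀ s ∈ Ioo (-1 : ℝ) 1, HasDerivAt (G k) (G (k + 1) s) s) →
    ∀ Z : Finset ℝ, (∀ z ∈ Z, z ∈ Ioo (-1 : ℝ) 1 ∧ G 0 z = 0) → n + 1 ≤ Z.card →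
    ∃ ξ ∈ Ioo (-1 : ℝ) 1, G n ξ = 0 := by
  induction n with
  | zero =>
    intro G _ Z hZ hc
    obtain ⟨z, hz⟩ := Finset.card_pos.1 (by omega : 0 < Z.card)
    exact ⟨z, hZ z hz⟩
  | succ n ih =>
    intro G hG Z hZ hc
    obtain ⟨Z', h1, _, h3, _⟩ := rolle_finset ordConnected_Ioo Ioo_subset_Icc_self
      (g := G 0) (g' := G 1)
      (fun s hs => (hG 0 (by omega) s hs).continuousAt.continuousWithinAt)
      (hG 0 (by omega)) Z (fun z hz => (hZ z hz).1) (fun z hz => (hZ z hz).2)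
    exact ih (fun k => G (k + 1)) (fun k hk => hG (k + 1) (by omega)) Z' h3 (by omega)

/-- Rolle's theorem for `n + 1` zeros counted with multiplicity: the zeros in `Z`, of which
those in `D` are interior and counted twice. -/
lemma rolle_double {n : ℕ} (hn : n ≠ 0) (G : ℕ → ℝ → ℝ) (hc : ContinuousOn (G 0) (Icc (-1) 1))
    (hG : ∀ k < n, ∀ s ∈ Ioo (-1 : ℝ) 1, HasDerivAt (G k) (G (k + 1) s) s)
    (Z D : Finset ℝ) (hZ : ∀ z ∈ Z, z ∈ Icc (-1 : ℝ) 1 ∧ G 0 z = 0) (hDZ : D ⊆ Z)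
    (hD : ∀ z ∈ D, z ∈ Ioo (-1 : ℝ) 1 ∧ G 1 z = 0) (hcard : n + 1 ≤ Z.card + D.card) :
    ∃ ξ ∈ Ioo (-1 : ℝ) 1, G n ξ = 0 := by
  obtain ⟨n, rfl⟩ := Nat.exists_eq_succ_of_ne_zero hn
  obtain ⟨Z', h1, h2, h3, _⟩ := rolle_finset ordConnected_Icc subset_rfl
    hc (hG 0 (by omega)) Z (fun z hz => (hZ z hz).1) (fun z hz => (hZ z hz).2)
  have hdis : Disjoint Z' D := (h2.mono_left hDZ).symm
  refine rolle_iterate n (fun k => G (k + 1)) (fun k hk => hG (k + 1) (by omega)) (Z' ∪ D) ?_ ?_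
  · intro z hz
    rcases Finset.mem_union.1 hz with h | h
    · exact h3 z h
    · exact hD z h
  · rw [Finset.card_union_of_disjoint hdis]; omega

/-- `F k` is the `k`-th derivative of the continuous function `F 0`, for `k ≤ n`. -/
def IsDerivSeq (F : ℕ → ℝ → ℝ) (n : ℕ) : Prop :=
  ContinuousOn (F 0) (Icc (-1) 1) ∧
    ∀ k < n, ∀ s ∈ Ioo (-1 : ℝ) 1, HasDerivAt (F k) (F (k + 1) s) s

/-- The leading Newton coefficient `c` of an interpolant `p + c ω` of degree `n` equals
`F n ξ / n!` at some interior point. -/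
lemma newton_coeff {F : ℕ → ℝ → ℝ} {n : ℕ} (hn : n ≠ 0) (hF : IsDerivSeq F n)
    {p ω : ℝ[X]} (hp : p.degree < n) (hω : ω.Monic) (hωd : ω.natDegree = n) (c : ℝ)
    (Z D : Finset ℝ) (hZ : ∀ z ∈ Z, z ∈ Icc (-1 : ℝ) 1 ∧ F 0 z = (p + C c * ω).eval z)
    (hDZ : D ⊆ Z)
    (hD : ∀ z ∈ D, z ∈ Ioo (-1 : ℝ) 1 ∧ F 1 z = (derivative (p + C c * ω)).eval z)
    (hcard : n + 1 ≤ Z.card + D.card) :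
    ∃ ξ ∈ Ioo (-1 : ℝ) 1, F n ξ = n.factorial * c := by
  set q := p + C c * ω with hq
  obtain ⟨ξ, hξ, h0⟩ := rolle_double hn (fun k s => F k s - (derivative^[k] q).eval s)
    (hF.1.sub q.continuous.continuousOn)
    (fun k hk s hs => by
      refine (hF.2 k hk s hs).sub ?_
      rw [Function.iterate_succ_apply']
      exact Polynomial.hasDerivAt _ _)
    Z D (fun z hz => ⟨(hZ z hz).1, by simp [(hZ z hz).2]⟩) hDZ
    (fun z hz => ⟨(hD z hz).1, by simp [(hD z hz).2]⟩) hcard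
  refine ⟨ξ, hξ, ?_⟩
  have hcoef : q.coeff n = c := by
    have h1 : p.coeff n = 0 := coeff_eq_zero_of_degree_lt hp
    have h2 : ω.coeff n = 1 := by have := hω.coeff_natDegree; rwa [hωd] at this
    simp [hq, h1, h2]
  have hqd : q.natDegree ≤ n := by
    refine natDegree_add_le_of_degree_le (natDegree_le_of_degree_le hp.le) ?_
    exact (natDegree_C_mul_le _ _).trans hωd.le
  have hconst : derivative^[n] q = C (n.factorial * c) := by
    have hd0 : (derivative^[n] q).natDegree ≤ 0 :=
      (natDegree_iterate_derivative q n).trans (by omega)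
    rw [eq_C_of_natDegree_le_zero hd0, coeff_iterate_derivative]
    simp [hcoef, Nat.descFactorial_self]
  rw [hconst, eval_C] at h0
  linarith

lemma newton_coeff_nonneg {F : ℕ → ℝ → ℝ} {n : ℕ} (hF : IsDerivSeq F n)
    (hpos : ∀ s ∈ Ioo (-1 : ℝ) 1, 0 ≤ F n s)
    {p ω : ℝ[X]} (hp : p.degree < n) (hω : ω.Monic) (hωd : ω.natDegree = n) (c : ℝ)
    (Z D : Finset ℝ) (hZ : ∀ z ∈ Z, z ∈ Icc (-1 : ℝ) 1 ∧ F 0 z = (p + C c * ω).eval z)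
    (hDZ : D ⊆ Z)
    (hD : ∀ z ∈ D, z ∈ Ioo (-1 : ℝ) 1 ∧ F 1 z = (derivative (p + C c * ω)).eval z)
    (hcard : n + 1 ≤ Z.card + D.card) : 0 ≤ c := by
  rcases Nat.eq_zero_or_pos n with rfl | hn
  · have hp0 : p = 0 := by simpa using hp
    have hω1 : ω = 1 := hω.natDegree_eq_zero.1 hωd
    have hne : Z.Nonempty := by
      have := Finset.card_le_card hDZ
      exact Finset.card_pos.1 (by omega)
    obtain ⟨z, hz⟩ := hne
    have hzc := (hZ z hz).2
    simp only [hp0, hω1, zero_add, mul_one, eval_C] at hzc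
    rw [← hzc]
    -- nonnegativity extends to the endpoints by continuity
    have hcl : z ∈ closure (Ioo (-1 : ℝ) 1) := by
      rw [closure_Ioo (by norm_num)]; exact (hZ z hz).1
    have hmaps : MapsTo (F 0) (Ioo (-1) 1) (Ici 0) := fun s hs => hpos s hs
    have := (((hF.1 z (hZ z hz).1).mono Ioo_subset_Icc_self)).mem_closure hcl hmaps
    simpa using this
  · obtain ⟨ξ, hξ, h⟩ := newton_coeff hn.ne' hF hp hω hωd c Z D hZ hDZ hD hcard
    have h1 := hpos ξ hξ
    rw [h] at h1
    exact nonneg_of_mul_nonneg_right h1 (by positivity)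

end Interp

section Hermite
open Polynomial Set

/-- The polynomial with simple roots at `B` and double roots at `T`. -/
def omegaPoly (B T : Finset ℝ) : ℝ[X] := nodePoly B * nodePoly T * nodePoly T

lemma omegaPoly_monic (B T : Finset ℝ) : (omegaPoly B T).Monic :=
  ((nodePoly_monic B).mul (nodePoly_monic T)).mul (nodePoly_monic T)

lemma omegaPoly_natDegree (B T : Finset ℝ) : (omegaPoly B T).natDegree = 2 * T.card + B.card := by
  rw [omegaPoly, ((nodePoly_monic B).mul (nodePoly_monic T)).natDegree_mul (nodePoly_monic T),
    (nodePoly_monic B).natDegree_mul (nodePoly_monic T)]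
  simp only [nodePoly_natDegree]; ring

lemma omegaPoly_eval_eq_zero {B T : Finset ℝ} {z : ℝ} (hz : z ∈ B ∪ T) :
    (omegaPoly B T).eval z = 0 := by
  rcases Finset.mem_union.1 hz with h | h <;> simp [omegaPoly, nodePoly_eval_eq_zero h]

lemma omegaPoly_derivative_eval_eq_zero {B T : Finset ℝ} {z : ℝ} (hz : z ∈ T) :
    (derivative (omegaPoly B T)).eval z = 0 := by
  simp [omegaPoly, derivative_mul, nodePoly_eval_eq_zero hz]

lemma omegaPoly_eval_ne_zero {B T : Finset ℝ} {z : ℝ} (hz : z ∉ B ∪ T) :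
    (omegaPoly B T).eval z ≠ 0 := by
  rw [Finset.mem_union, not_or] at hz
  simp [omegaPoly, nodePoly_eval_ne_zero hz.1, nodePoly_eval_ne_zero hz.2]

lemma omegaPoly_eval_nonneg {B T : Finset ℝ} (hB : B ⊆ {-1}) {z : ℝ} (hz : -1 ≤ z) :
    0 ≤ (omegaPoly B T).eval z := by
  have : 0 ≤ (nodePoly B).eval z := by
    rw [nodePoly_eval]
    refine Finset.prod_nonneg fun a ha => ?_
    have := Finset.mem_singleton.1 (hB ha)
    linarith
  simp only [omegaPoly, eval_mul, mul_assoc]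
  exact mul_nonneg this (mul_self_nonneg _)

/-- Hermite interpolation, simple at `B` and double at `T`, by a polynomial in the cone `K`. The
Newton basis runs through the nodes of `T` in increasing order, so that its members are products
of node polynomials of initial segments. -/
lemma exists_hermite {F : ℕ → ℝ → ℝ} {M : ℕ} (hF : IsDerivSeq F (M + 1))
    (hpos : ∀ k ≤ M, ∀ s ∈ Ioo (-1 : ℝ) 1, 0 ≤ F k s)
    {K : ℝ[X] → Prop} (K0 : K 0) (Kadd : ∀ p q, K p → K q → K (p + q))
    (Ksmul : ∀ (c : ℝ) p, 0 ≤ c → K p → K (C c * p)) (Kmul : ∀ p q, K p → K q → K (p * q))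
    {B : Finset ℝ} (hB : B ⊆ {-1}) (KB : K (nodePoly B)) (T : Finset ℝ) :
    (∀ t ∈ T, t ∈ Ioo (-1 : ℝ) 1) → (∀ J, IsLowerPart J T → K (nodePoly J)) →
    2 * T.card + B.card ≤ M + 1 →
    ∃ p : ℝ[X], K p ∧ p.degree < (2 * T.card + B.card : ℕ) ∧
      (∀ z ∈ B ∪ T, F 0 z = p.eval z) ∧ ∀ z ∈ T, F 1 z = (derivative p).eval z := by
  have mono : ∀ k ≤ M, IsDerivSeq F k := fun k hk => ⟨hF.1, fun j hj => hF.2 j (by omega)⟩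
  have hBI : ∀ z ∈ B, z ∈ Icc (-1 : ℝ) 1 := fun z hz => by
    rw [Finset.mem_singleton.1 (hB hz)]; norm_num
  induction T using Finset.induction_on_max with
  | empty =>
    intro _ hpre _
    have K1 : K 1 := by
      have := hpre ∅ ⟨subset_rfl, by simp⟩
      simpa [nodePoly] using this
    rcases Finset.subset_singleton_iff.1 hB with rfl | rfl
    · exact ⟨0, K0, by simp, by simp, by simp⟩
    · refine ⟨C (F 0 (-1)) * 1, Ksmul _ _ ?_ K1, ?_, by simp, by simp⟩
      · exact newton_coeff_nonneg (n := 0) (mono 0 (by omega)) (hpos 0 (by omega)) (p := 0)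
          (ω := 1) (by simp) monic_one (by simp) _ {-1} ∅ (by simp) (by simp) (by simp) (by simp)
      · rw [mul_one]
        exact lt_of_le_of_lt degree_C_le (by simp)
  | insert s T hs ih =>
    intro hT hpre hcard
    have hsT : s ∉ T := fun h => lt_irrefl _ (hs s h)
    have hsI := hT s (Finset.mem_insert_self _ _)
    have hsB : s ∉ B := fun h => by
      have := Finset.mem_singleton.1 (hB h)
      linarith [hsI.1]
    have hsBT : s ∉ B ∪ T := by simp [hsB, hsT]
    rw [Finset.card_insert_of_notMem hsT] at hcard ⊢
    obtain ⟨p, hpK, hpd, hp0, hp1⟩ := ih (fun t ht => hT t (Finset.mem_insert_of_mem ht))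
      (fun J hJ => hpre J ⟨hJ.1.trans (Finset.subset_insert _ _), fun a ha b hb hbJ => by
        rcases Finset.mem_insert.1 hb with rfl | hb
        · exact hs a (hJ.1 ha)
        · exact hJ.2 a ha b hb hbJ⟩) (by omega)
    have KT : K (nodePoly T) := hpre T ⟨Finset.subset_insert _ _, fun a ha b hb hbT => by
      rcases Finset.mem_insert.1 hb with rfl | hb
      · exact hs a ha
      · exact absurd hb hbT⟩
    have KsT : K (nodePoly (insert s T)) :=
      hpre _ ⟨subset_rfl, fun a ha b hb hbT => absurd hb hbT⟩
    have hTI : ∀ t ∈ T, t ∈ Ioo (-1 : ℝ) 1 := fun t ht => hT t (Finset.mem_insert_of_mem ht)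
    have hdisj : Disjoint B T := Finset.disjoint_left.2 fun a ha haT => by
      have := Finset.mem_singleton.1 (hB ha)
      linarith [(hTI a haT).1]
    set n := 2 * T.card + B.card with hn
    set Z := insert s (B ∪ T) with hZdef
    have hZc : Z.card = B.card + T.card + 1 := by
      rw [hZdef, Finset.card_insert_of_notMem hsBT, Finset.card_union_of_disjoint hdisj]
    have hZI : ∀ z ∈ Z, z ∈ Icc (-1 : ℝ) 1 := by
      intro z hz
      rcases Finset.mem_insert.1 hz with rfl | hz
      · exact Ioo_subset_Icc_self hsI
      · rcases Finset.mem_union.1 hz with hz | hz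
        · exact hBI z hz
        · exact Ioo_subset_Icc_self (hTI z hz)
    -- first visit of the node `s`: match the value
    set ω := omegaPoly B T with hω
    have hωs : ω.eval s ≠ 0 := omegaPoly_eval_ne_zero hsBT
    set c := (F 0 s - p.eval s) / ω.eval s with hc
    set p₁ := p + C c * ω with hp₁
    have hp₁0 : ∀ z ∈ Z, F 0 z = p₁.eval z := by
      intro z hz
      rcases Finset.mem_insert.1 hz with rfl | hz
      · simp [hp₁, hc, hωs]
      · simp [hp₁, hp0 z hz, hω, omegaPoly_eval_eq_zero hz]
    have hp₁1 : ∀ z ∈ T, F 1 z = (derivative p₁).eval z := by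
      intro z hz
      simp [hp₁, hp1 z hz, hω, omegaPoly_derivative_eval_eq_zero hz]
    have hc0 : 0 ≤ c := newton_coeff_nonneg (mono n (by omega)) (hpos n (by omega)) hpd
      (omegaPoly_monic B T) (omegaPoly_natDegree B T) c Z T
      (fun z hz => ⟨hZI z hz, hp₁0 z hz⟩) (fun z hz => by simp [hZdef, hz])
      (fun z hz => ⟨hTI z hz, hp₁1 z hz⟩) (by omega)
    have hp₁K : K p₁ := Kadd _ _ hpK (Ksmul _ _ hc0 (Kmul _ _ (Kmul _ _ KB KT) KT))
    have hωd : ω.degree = n := by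
      rw [degree_eq_natDegree (omegaPoly_monic B T).ne_zero, omegaPoly_natDegree]
    have hCω : ∀ (c : ℝ) (q : ℝ[X]), (C c * q).degree ≤ q.degree := fun c q => by
      rw [← smul_eq_C_mul]; exact degree_smul_le c q
    have hp₁d : p₁.degree < (n + 1 : ℕ) := by
      refine lt_of_le_of_lt (degree_add_le _ _) (max_lt ?_ ?_)
      · exact hpd.trans (by exact_mod_cast Nat.lt_succ_self n)
      · refine lt_of_le_of_lt (hCω _ _) ?_
        rw [hωd]; exact_mod_cast Nat.lt_succ_self n
    -- second visit: match the derivative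
    set ω' := ω * (X - C s) with hω'
    have hω'K : K ω' := by
      have : ω' = nodePoly B * nodePoly T * nodePoly (insert s T) := by
        rw [hω', hω, omegaPoly, nodePoly, nodePoly, nodePoly, Finset.prod_insert hsT]; ring
      rw [this]
      exact Kmul _ _ (Kmul _ _ KB KT) KsT
    have hω'm : ω'.Monic := (omegaPoly_monic B T).mul (monic_X_sub_C s)
    have hω'd : ω'.natDegree = n + 1 := by
      rw [hω', (omegaPoly_monic B T).natDegree_mul (monic_X_sub_C s), omegaPoly_natDegree,
        natDegree_X_sub_C]
    have hω'1 : ∀ z, (derivative ω').eval z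
        = (derivative ω).eval z * (z - s) + ω.eval z := by
      intro z; simp [hω', derivative_mul]
    set c' := (F 1 s - (derivative p₁).eval s) / ω.eval s with hc'
    set p₂ := p₁ + C c' * ω' with hp₂
    have hp₂0 : ∀ z ∈ Z, F 0 z = p₂.eval z := by
      intro z hz
      have : ω'.eval z = 0 := by
        rcases Finset.mem_insert.1 hz with rfl | hz
        · simp [hω']
        · simp [hω', hω, omegaPoly_eval_eq_zero hz]
      simp [hp₂, hp₁0 z hz, this]
    have hp₂1 : ∀ z ∈ insert s T, F 1 z = (derivative p₂).eval z := by
      intro z hz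
      rcases Finset.mem_insert.1 hz with rfl | hz
      · simp [hp₂, hω'1, hc', hωs]
      · have h1 : ω.eval z = 0 := omegaPoly_eval_eq_zero (Finset.mem_union_right _ hz)
        have h2 : (derivative ω).eval z = 0 := omegaPoly_derivative_eval_eq_zero hz
        simp [hp₂, hω'1, hp₁1 z hz, h1, h2]
    have hc'0 : 0 ≤ c' := newton_coeff_nonneg (mono (n + 1) (by omega)) (hpos (n + 1) (by omega))
      hp₁d hω'm hω'd c' Z (insert s T)
      (fun z hz => ⟨hZI z hz, hp₂0 z hz⟩)
      (fun z hz => by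
        rcases Finset.mem_insert.1 hz with rfl | hz <;> simp [*])
      (fun z hz => ⟨hT z hz, hp₂1 z hz⟩) (by rw [Finset.card_insert_of_notMem hsT]; omega)
    refine ⟨p₂, Kadd _ _ hp₁K (Ksmul _ _ hc'0 hω'K), ?_, ?_, hp₂1⟩
    · have : 2 * (T.card + 1) + B.card = n + 2 := by omega
      rw [this]
      refine lt_of_le_of_lt (degree_add_le _ _) (max_lt ?_ ?_)
      · exact hp₁d.trans (by exact_mod_cast Nat.lt_succ_self (n + 1))
      · refine lt_of_le_of_lt (hCω _ _) ?_
        rw [degree_eq_natDegree hω'm.ne_zero, hω'd]; exact_mod_cast Nat.lt_succ_self (n + 1)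
    · intro z hz
      refine hp₂0 z ?_
      simp only [hZdef, Finset.mem_insert, Finset.mem_union] at hz ⊢
      tauto

/-- The interpolant of `f = F 0` of degree `M`, simple at `B` and `1` and double at `T`, lies
in the cone `K` and stays below `f` on `[-1, 1]`. -/
lemma exists_minorant {F : ℕ → ℝ → ℝ} {M : ℕ} (hF : IsDerivSeq F (M + 1))
    (hpos : ∀ k ≤ M, ∀ s ∈ Ioo (-1 : ℝ) 1, 0 ≤ F k s)
    (hlast : ∀ s ∈ Ioo (-1 : ℝ) 1, F (M + 1) s ≤ 0)
    {K : ℝ[X] → Prop} (K0 : K 0) (Kadd : ∀ p q, K p → K q → K (p + q))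
    (Ksmul : ∀ (c : ℝ) p, 0 ≤ c → K p → K (C c * p)) (Kmul : ∀ p q, K p → K q → K (p * q))
    {B : Finset ℝ} (hB : B ⊆ {-1}) (KB : K (nodePoly B)) (T : Finset ℝ)
    (hT : ∀ t ∈ T, t ∈ Ioo (-1 : ℝ) 1) (hpre : ∀ J, IsLowerPart J T → K (nodePoly J))
    (hcard : 2 * T.card + B.card = M) :
    ∃ p : ℝ[X], K p ∧ p.natDegree ≤ M ∧ (∀ z ∈ insert 1 (B ∪ T), F 0 z = p.eval z) ∧
      ∀ t ∈ Icc (-1 : ℝ) 1, p.eval t ≤ F 0 t := by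
  obtain ⟨p, hpK, hpd, hp0, hp1⟩ := exists_hermite hF hpos K0 Kadd Ksmul Kmul hB KB T hT hpre
    (by omega)
  rw [hcard] at hpd
  have KT : K (nodePoly T) := hpre _ ⟨subset_rfl, fun a ha b hb hbT => absurd hb hbT⟩
  have hBI : ∀ z ∈ B, z ∈ Icc (-1 : ℝ) 1 := fun z hz => by
    rw [Finset.mem_singleton.1 (hB hz)]; norm_num
  have h1BT : (1 : ℝ) ∉ B ∪ T := by
    intro h
    rcases Finset.mem_union.1 h with h | h
    · have := Finset.mem_singleton.1 (hB h); norm_num at this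
    · exact lt_irrefl _ (hT 1 h).2
  have hdisj : Disjoint B T := Finset.disjoint_left.2 fun a ha haT => by
    have := Finset.mem_singleton.1 (hB ha)
    linarith [(hT a haT).1]
  set Z := insert 1 (B ∪ T) with hZdef
  have hZc : Z.card = B.card + T.card + 1 := by
    rw [hZdef, Finset.card_insert_of_notMem h1BT, Finset.card_union_of_disjoint hdisj]
  have hTZ : T ⊆ Z := fun z hz => by simp [hZdef, hz]
  have hZI : ∀ z ∈ Z, z ∈ Icc (-1 : ℝ) 1 := by
    intro z hz
    rcases Finset.mem_insert.1 hz with rfl | hz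
    · norm_num
    · rcases Finset.mem_union.1 hz with hz | hz
      · exact hBI z hz
      · exact Ioo_subset_Icc_self (hT z hz)
  set ω := omegaPoly B T with hω
  have hω1 : ω.eval 1 ≠ 0 := omegaPoly_eval_ne_zero h1BT
  set c := (F 0 1 - p.eval 1) / ω.eval 1 with hc
  set p₁ := p + C c * ω with hp₁
  have hp₁0 : ∀ z ∈ Z, F 0 z = p₁.eval z := by
    intro z hz
    rcases Finset.mem_insert.1 hz with rfl | hz
    · simp [hp₁, hc, hω1]
    · simp [hp₁, hp0 z hz, hω, omegaPoly_eval_eq_zero hz]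
  have hp₁1 : ∀ z ∈ T, F 1 z = (derivative p₁).eval z := by
    intro z hz
    simp [hp₁, hp1 z hz, hω, omegaPoly_derivative_eval_eq_zero hz]
  have hc0 : 0 ≤ c := newton_coeff_nonneg
    (⟨hF.1, fun j hj => hF.2 j (by omega)⟩ : IsDerivSeq F M) (hpos M le_rfl) hpd
    (omegaPoly_monic B T) ((omegaPoly_natDegree B T).trans hcard) c Z T
    (fun z hz => ⟨hZI z hz, hp₁0 z hz⟩) hTZ
    (fun z hz => ⟨hT z hz, hp₁1 z hz⟩) (by omega)
  have hp₁d : p₁.natDegree ≤ M := by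
    refine natDegree_add_le_of_degree_le (natDegree_le_of_degree_le hpd.le) ?_
    exact (natDegree_C_mul_le _ _).trans ((omegaPoly_natDegree B T).trans hcard).le
  refine ⟨p₁, Kadd _ _ hpK (Ksmul _ _ hc0 (Kmul _ _ (Kmul _ _ KB KT) KT)), hp₁d, hp₁0, ?_⟩
  intro t ht
  by_cases htZ : t ∈ Z
  · exact (hp₁0 t htZ).ge
  -- the error at `t` is the next Newton coefficient times `(t - 1) ω(t)`
  set ω' := ω * (X - C 1) with hω'
  have hω'm : ω'.Monic := (omegaPoly_monic B T).mul (monic_X_sub_C 1)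
  have hω'd : ω'.natDegree = M + 1 := by
    rw [hω', (omegaPoly_monic B T).natDegree_mul (monic_X_sub_C 1), omegaPoly_natDegree,
      natDegree_X_sub_C, hcard]
  have ht1 : t ≠ 1 := fun h => htZ (by simp [hZdef, h])
  have hωt : ω'.eval t ≠ 0 := by
    have h1 : ω.eval t ≠ 0 := omegaPoly_eval_ne_zero fun h => htZ (Finset.mem_insert_of_mem h)
    have h2 : t - 1 ≠ 0 := sub_ne_zero.2 ht1
    simp [hω', h1, h2]
  set e := (F 0 t - p₁.eval t) / ω'.eval t with he
  obtain ⟨ξ, hξ, hξe⟩ := newton_coeff (n := M + 1) (by omega) hF (p := p₁) (ω := ω')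
    (lt_of_le_of_lt (degree_le_of_natDegree_le hp₁d) (by exact_mod_cast Nat.lt_succ_self M))
    hω'm hω'd e (insert t Z) T
    (fun z hz => by
      rcases Finset.mem_insert.1 hz with rfl | hz
      · exact ⟨ht, by simp [he, hωt]⟩
      · refine ⟨hZI z hz, ?_⟩
        have : ω'.eval z = 0 := by
          rcases Finset.mem_insert.1 hz with rfl | hz
          · simp [hω']
          · simp [hω', hω, omegaPoly_eval_eq_zero hz]
        simp [hp₁0 z hz, this])
    (hTZ.trans (Finset.subset_insert _ _))
    (fun z hz => by
      refine ⟨hT z hz, ?_⟩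
      have h1 : ω.eval z = 0 := omegaPoly_eval_eq_zero (Finset.mem_union_right _ hz)
      have h2 : (derivative ω).eval z = 0 := omegaPoly_derivative_eval_eq_zero hz
      simp [hp₁1 z hz, hω', derivative_mul, h1, h2])
    (by rw [Finset.card_insert_of_notMem htZ]; omega)
  have he0 : e ≤ 0 := by
    have h1 := hlast ξ hξ
    rw [hξe] at h1
    by_contra hcon
    push Not at hcon
    have : (0 : ℝ) < (M + 1).factorial := by positivity
    nlinarith
  have hω'0 : ω'.eval t ≤ 0 := by
    simp only [hω', eval_mul, eval_sub, eval_X, eval_C]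
    exact mul_nonpos_of_nonneg_of_nonpos (omegaPoly_eval_nonneg hB ht.1) (by linarith [ht.2])
  have : F 0 t - p₁.eval t = e * ω'.eval t := by rw [he]; field_simp
  nlinarith [mul_nonneg_of_nonpos_of_nonpos he0 hω'0]

end Hermite

/-! ### Rotation invariance and moments of a spherical design -/

section Moments
open Polynomial
open scoped Pointwise

/-- The action of a linear isometry on the sphere. -/
def sphMap (A : EuclideanSpace ℝ (Fin d) ≃ₗᵢ[ℝ] EuclideanSpace ℝ (Fin d)) (x : Sph d) : Sph d :=
  ⟨A x, by have := x.2; simp_all⟩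

lemma measurable_sphMap (A : EuclideanSpace ℝ (Fin d) ≃ₗᵢ[ℝ] EuclideanSpace ℝ (Fin d)) :
    Measurable (sphMap A) :=
  (A.continuous.comp continuous_subtype_val).subtype_mk _ |>.measurable

lemma toSphere_map_sphMap
    (A : EuclideanSpace ℝ (Fin d) ≃ₗᵢ[ℝ] EuclideanSpace ℝ (Fin d)) :
    ((volume : Measure (EuclideanSpace ℝ (Fin d))).toSphere).map (sphMap A)
      = (volume : Measure (EuclideanSpace ℝ (Fin d))).toSphere := by
  ext s hs
  rw [Measure.map_apply (measurable_sphMap A) hs, Measure.toSphere_apply' _ hs,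
    Measure.toSphere_apply' _ (measurable_sphMap A hs)]
  congr 1
  rw [← A.measurePreserving.measure_preimage_equiv (f := A.toMeasurableEquiv)
    (Set.Ioo (0 : ℝ) 1 • (Subtype.val '' s))]
  congr 1
  ext v
  simp only [Set.mem_smul, Set.mem_image, Set.mem_preimage]
  constructor
  · rintro ⟨r, hr, _, ⟨x, hx, rfl⟩, rfl⟩
    exact ⟨r, hr, _, ⟨_, hx, rfl⟩, by simp [sphMap]⟩
  · rintro ⟨r, hr, _, ⟨x, hx, rfl⟩, h⟩
    refine ⟨r, hr, _, ⟨sphMap A.symm x, ?_, rfl⟩, ?_⟩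
    · have : sphMap A (sphMap A.symm x) = x := Subtype.ext (by simp [sphMap])
      simpa [this] using hx
    · apply A.injective
      simpa [sphMap] using h

lemma integral_sphσ_comp
    (A : EuclideanSpace ℝ (Fin d) ≃ₗᵢ[ℝ] EuclideanSpace ℝ (Fin d)) {φ : Sph d → ℝ}
    (hφ : Continuous φ) : ∫ x, φ (sphMap A x) ∂(sphσ d) = ∫ x, φ x ∂(sphσ d) := by
  simp only [sphσ, integral_smul_measure]
  congr 1
  conv_rhs => rw [← toSphere_map_sphMap A]
  rw [integral_map (measurable_sphMap A).aemeasurable hφ.aestronglyMeasurable]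

/-- The degree-`n` form `⟨u, ·⟩ ^ n` as a polynomial in the coordinates. -/
def powPoly (u : EuclideanSpace ℝ (Fin d)) (n : ℕ) : MvPolynomial (Fin d) ℝ :=
  (∑ i, MvPolynomial.C (u i) * MvPolynomial.X i) ^ n

lemma evalPt_powPoly (u : EuclideanSpace ℝ (Fin d)) (n : ℕ) (x : Sph d) :
    evalPt (powPoly u n) x = ⟪u, (x : EuclideanSpace ℝ (Fin d))⟫ ^ n := by
  simp [evalPt, powPoly, PiLp.inner_apply, mul_comm]

lemma totalDegree_powPoly (u : EuclideanSpace ℝ (Fin d)) (n : ℕ) :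
    (powPoly u n).totalDegree ≤ n := by
  refine (MvPolynomial.totalDegree_pow _ _).trans ?_
  have : (∑ i, MvPolynomial.C (u i) * MvPolynomial.X i : MvPolynomial (Fin d) ℝ).totalDegree
      ≤ 1 := by
    refine MvPolynomial.totalDegree_finsetSum_le fun i _ => ?_
    refine (MvPolynomial.totalDegree_mul _ _).trans ?_
    simp
  nlinarith

lemma integral_inner_pow_eq {u v : EuclideanSpace ℝ (Fin d)} (huv : ‖u‖ = ‖v‖) (n : ℕ) :
    ∫ x : Sph d, ⟪u, (x : EuclideanSpace ℝ (Fin d))⟫ ^ n ∂(sphσ d)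
      = ∫ x : Sph d, ⟪v, (x : EuclideanSpace ℝ (Fin d))⟫ ^ n ∂(sphσ d) := by
  set A := (Submodule.span ℝ {u - v})ᗮ.reflection
  have hA : A u = v := Submodule.reflection_sub huv
  rw [← integral_sphσ_comp A (φ := fun x : Sph d => ⟪v, (x : EuclideanSpace ℝ (Fin d))⟫ ^ n)
    (by fun_prop)]
  congr 1
  ext x
  rw [← hA]
  simp [sphMap]

/-- Over an `M`-design the moments of order `n ≤ M` in direction `u` are a multiple of
`⟪u, u⟫ ^ (n / 2)`; they vanish for odd `n`, which is the case `c = 0`. -/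
lemma design_moment {M : ℕ} {C : Finset (Sph d)} (hC : IsSphDesign d M C) {n : ℕ}
    (hn : n ≤ M) : ∃ (c : ℝ) (l : ℕ), ∀ u : EuclideanSpace ℝ (Fin d),
      ∑ y ∈ C, ⟪u, (y : EuclideanSpace ℝ (Fin d))⟫ ^ n = c * ⟪u, u⟫ ^ l := by
  have hcard : (C.card : ℝ) ≠ 0 := by
    exact_mod_cast (Finset.card_pos.2 hC.1).ne'
  have hsum : ∀ u : EuclideanSpace ℝ (Fin d),
      ∑ y ∈ C, ⟪u, (y : EuclideanSpace ℝ (Fin d))⟫ ^ n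
        = C.card * ∫ x : Sph d, ⟪u, (x : EuclideanSpace ℝ (Fin d))⟫ ^ n ∂(sphσ d) := by
    intro u
    have := hC.2 (powPoly u n) ((totalDegree_powPoly u n).trans hn)
    simp only [evalPt_powPoly] at this
    rw [← this]; field_simp
  obtain ⟨e, _⟩ := hC.1
  rcases Nat.even_or_odd n with ⟨l, hl⟩ | hodd
  · refine ⟨∑ y ∈ C, ⟪(e : EuclideanSpace ℝ (Fin d)), (y : EuclideanSpace ℝ (Fin d))⟫ ^ n, l,
      fun u => ?_⟩
    have h1 : ‖u‖ = ‖‖u‖ • (e : EuclideanSpace ℝ (Fin d))‖ := by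
      have := e.2; simp_all [norm_smul]
    rw [hsum u, integral_inner_pow_eq h1, ← hsum, Finset.sum_mul]
    refine Finset.sum_congr rfl fun y _ => ?_
    rw [real_inner_smul_left, mul_pow, real_inner_self_eq_norm_sq, hl]; ring
  · refine ⟨0, 0, fun u => ?_⟩
    have h1 := hsum u
    rw [integral_inner_pow_eq (norm_neg u).symm, ← hsum] at h1
    simp only [inner_neg_left, hodd.neg_pow, Finset.sum_neg_distrib] at h1
    linarith

/-- `(1 + 2 τ Y + Y²) ^ l` as a polynomial in `Y` over `ℝ[τ]`. -/
def normPoly (l : ℕ) : ℝ[X][X] := (1 + C (C 2 * X) * X + X ^ 2) ^ l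

/-- In `(1 + 2 τ Y + Y²) ^ l` the power of `τ` never exceeds the power of `Y`. -/
lemma natDegree_coeff_normPoly (l b : ℕ) : ((normPoly l).coeff b).natDegree ≤ b := by
  induction l generalizing b with
  | zero => simp [normPoly, coeff_one]; split_ifs <;> simp
  | succ l ih =>
    rw [normPoly, pow_succ, ← normPoly, coeff_mul]
    refine natDegree_sum_le_of_forall_le _ _ fun ij hij => ?_
    have hij' := Finset.HasAntidiagonal.mem_antidiagonal.1 hij
    refine natDegree_mul_le.trans ?_
    have h2 : ((1 + C (C 2 * X) * X + X ^ 2 : ℝ[X][X]).coeff ij.2).natDegree ≤ ij.2 := by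
      rcases ij.2 with _ | _ | _ | j
      · simp
      · simp [coeff_one, coeff_X_pow]
      · simp [coeff_one]
      · simp [coeff_one, coeff_X_pow]
    have := ih ij.1
    omega

lemma coeff_linear_pow (α β : ℝ) (a b : ℕ) :
    ((C β * X + C α) ^ (a + b) : ℝ[X]).coeff b = (a + b).choose b * (α ^ a * β ^ b) := by
  rw [add_pow, finsetSum_coeff, Finset.sum_eq_single b]
  · rw [mul_pow, ← C_pow, ← C_pow, ← C_eq_natCast, coeff_mul_C, coeff_mul_C, coeff_C_mul,
      coeff_X_pow]
    simp; ring
  · intro m _ hm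
    rw [mul_pow, ← C_pow, ← C_pow, ← C_eq_natCast, coeff_mul_C, coeff_mul_C, coeff_C_mul,
      coeff_X_pow]
    simp [hm.symm]
  · intro h; exact absurd (Finset.mem_range.2 (by omega)) h

lemma inner_self_sph (x : Sph d) :
    ⟪(x : EuclideanSpace ℝ (Fin d)), (x : EuclideanSpace ℝ (Fin d))⟫ = 1 := by
  have := x.2
  rw [real_inner_self_eq_norm_sq]; simp_all

/-- Mixed moments of a design are polynomials in `⟪x, z⟫` of degree at most `b`: compare the
coefficients of `t ^ b` in the moment of order `a + b` in direction `x + t z`. -/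
lemma design_mixed_moment {M : ℕ} {C : Finset (Sph d)} (hC : IsSphDesign d M C) {a b : ℕ}
    (hab : a + b ≤ M) : ∃ F : ℝ[X], F.natDegree ≤ b ∧ ∀ x z : Sph d,
      ∑ y ∈ C, ⟪(x : EuclideanSpace ℝ (Fin d)), (y : EuclideanSpace ℝ (Fin d))⟫ ^ a *
        ⟪(z : EuclideanSpace ℝ (Fin d)), (y : EuclideanSpace ℝ (Fin d))⟫ ^ b
      = F.eval ⟪(x : EuclideanSpace ℝ (Fin d)), (z : EuclideanSpace ℝ (Fin d))⟫ := by
  obtain ⟨c, l, hcl⟩ := design_moment hC hab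
  have hch : ((a + b).choose b : ℝ) ≠ 0 := by
    exact_mod_cast (Nat.choose_pos (Nat.le_add_left b a)).ne'
  refine ⟨Polynomial.C (c / (a + b).choose b) * (normPoly l).coeff b,
    (natDegree_C_mul_le _ _).trans (natDegree_coeff_normPoly l b), fun x z => ?_⟩
  set τ := ⟪(x : EuclideanSpace ℝ (Fin d)), (z : EuclideanSpace ℝ (Fin d))⟫ with hτ
  have hpoly : (∑ y ∈ C, (Polynomial.C ⟪(z : EuclideanSpace ℝ (Fin d)),
        (y : EuclideanSpace ℝ (Fin d))⟫ * X
      + Polynomial.C ⟪(x : EuclideanSpace ℝ (Fin d)), (y : EuclideanSpace ℝ (Fin d))⟫) ^ (a + b))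
      = Polynomial.C c * (normPoly l).map (evalRingHom τ) := by
    refine Polynomial.funext fun t => ?_
    have := hcl ((x : EuclideanSpace ℝ (Fin d)) + t • (z : EuclideanSpace ℝ (Fin d)))
    simp only [inner_add_left, inner_add_right, real_inner_smul_left, real_inner_smul_right,
      inner_self_sph, real_inner_comm (x : EuclideanSpace ℝ (Fin d)) z, ← hτ] at this
    rw [eval_finsetSum]
    simp only [eval_pow, eval_add, eval_mul, eval_C, eval_X, normPoly, Polynomial.map_pow,
      Polynomial.map_add, Polynomial.map_mul, Polynomial.map_one, map_C, map_X, eval_one,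
      coe_evalRingHom]
    rw [show 1 + 2 * τ * t + t ^ 2 = 1 + t * τ + (t * τ + t * (t * 1)) by ring]
    rw [show ∑ y ∈ C, (⟪(z : EuclideanSpace ℝ (Fin d)), (y : EuclideanSpace ℝ (Fin d))⟫ * t
        + ⟪(x : EuclideanSpace ℝ (Fin d)), (y : EuclideanSpace ℝ (Fin d))⟫) ^ (a + b)
      = ∑ y ∈ C, (⟪(x : EuclideanSpace ℝ (Fin d)), (y : EuclideanSpace ℝ (Fin d))⟫
        + t * ⟪(z : EuclideanSpace ℝ (Fin d)), (y : EuclideanSpace ℝ (Fin d))⟫) ^ (a + b) from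
      Finset.sum_congr rfl fun y _ => by ring]
    rw [this]
  have hb := congrArg (fun P : ℝ[X] => P.coeff b) hpoly
  simp only [finsetSum_coeff, coeff_linear_pow, coeff_C_mul, coeff_map, ← Finset.mul_sum,
    coe_evalRingHom] at hb
  rw [eval_mul, eval_C]
  field_simp
  linarith

/-- Zonal convolution over a design, obtained by expanding `q` and `h` into monomials. The bound
on the degree by that of the second factor is what makes the convolution triangular. -/
lemma design_convolution {M : ℕ} {C : Finset (Sph d)} (hC : IsSphDesign d M C) {a b : ℕ}
    (hab : a + b ≤ M) {q h : ℝ[X]} (hq : q.natDegree ≤ a) (hh : h.natDegree ≤ b) :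
    ∃ Q : ℝ[X], Q.natDegree ≤ b ∧ ∀ x z : Sph d,
      ∑ y ∈ C, q.eval ⟪(x : EuclideanSpace ℝ (Fin d)), (y : EuclideanSpace ℝ (Fin d))⟫ *
        h.eval ⟪(z : EuclideanSpace ℝ (Fin d)), (y : EuclideanSpace ℝ (Fin d))⟫
      = Q.eval ⟪(x : EuclideanSpace ℝ (Fin d)), (z : EuclideanSpace ℝ (Fin d))⟫ := by
  have hF : ∀ i j, ∃ F : ℝ[X], i ≤ a → j ≤ b → (F.natDegree ≤ j ∧ ∀ x z : Sph d,
      ∑ y ∈ C, ⟪(x : EuclideanSpace ℝ (Fin d)), (y : EuclideanSpace ℝ (Fin d))⟫ ^ i *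
        ⟪(z : EuclideanSpace ℝ (Fin d)), (y : EuclideanSpace ℝ (Fin d))⟫ ^ j
      = F.eval ⟪(x : EuclideanSpace ℝ (Fin d)), (z : EuclideanSpace ℝ (Fin d))⟫) := by
    intro i j
    by_cases hij : i ≤ a ∧ j ≤ b
    · obtain ⟨F, h1⟩ := design_mixed_moment hC (show i + j ≤ M by omega)
      exact ⟨F, fun _ _ => h1⟩
    · exact ⟨0, fun h1 h2 => absurd ⟨h1, h2⟩ hij⟩
  choose F hF using hF
  refine ⟨∑ i ∈ Finset.range (a + 1), ∑ j ∈ Finset.range (b + 1),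
    Polynomial.C (q.coeff i * h.coeff j) * F i j, ?_, fun x z => ?_⟩
  · refine natDegree_sum_le_of_forall_le _ _ fun i hi =>
      natDegree_sum_le_of_forall_le _ _ fun j hj => ?_
    rw [Finset.mem_range] at hi hj
    exact (natDegree_C_mul_le _ _).trans ((hF i j (by omega) (by omega)).1.trans (by omega))
  · simp only [eval_finsetSum, eval_mul, eval_C]
    have hR : ∀ i ∈ Finset.range (a + 1), ∀ j ∈ Finset.range (b + 1),
        q.coeff i * h.coeff j * (F i j).eval ⟪(x : EuclideanSpace ℝ (Fin d)),
          (z : EuclideanSpace ℝ (Fin d))⟫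
        = ∑ y ∈ C, (q.coeff i * ⟪(x : EuclideanSpace ℝ (Fin d)),
            (y : EuclideanSpace ℝ (Fin d))⟫ ^ i) *
          (h.coeff j * ⟪(z : EuclideanSpace ℝ (Fin d)), (y : EuclideanSpace ℝ (Fin d))⟫ ^ j) := by
      intro i hi j hj
      rw [Finset.mem_range] at hi hj
      rw [← (hF i j (by omega) (by omega)).2 x z, Finset.mul_sum]
      exact Finset.sum_congr rfl fun y _ => by ring
    rw [Finset.sum_congr rfl fun i hi => Finset.sum_congr rfl fun j hj => hR i hi j hj]
    rw [Finset.sum_congr rfl fun i _ => Finset.sum_comm, Finset.sum_comm]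
    refine Finset.sum_congr rfl fun y _ => ?_
    rw [eval_eq_sum_range' (by omega : q.natDegree < a + 1),
      eval_eq_sum_range' (by omega : h.natDegree < b + 1), Finset.sum_mul_sum]

/-- Zonal polynomials of degree at most `M` have the same sum over the design for every pole. -/
lemma design_zonal_sum {M : ℕ} {C : Finset (Sph d)} (hC : IsSphDesign d M C) {q : ℝ[X]}
    (hq : q.natDegree ≤ M) (x x' : Sph d) :
    ∑ y ∈ C, q.eval ⟪(x : EuclideanSpace ℝ (Fin d)), (y : EuclideanSpace ℝ (Fin d))⟫
      = ∑ y ∈ C, q.eval ⟪(x' : EuclideanSpace ℝ (Fin d)), (y : EuclideanSpace ℝ (Fin d))⟫ := by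
  obtain ⟨Q, hQ, h⟩ := design_convolution hC (a := M) (b := 0) (by omega) hq
    (h := 1) (by simp)
  have h1 := h x x
  have h2 := h x' x'
  rw [eq_C_of_natDegree_le_zero hQ] at h1 h2
  simp only [eval_one, mul_one, eval_C] at h1 h2
  rw [h1, h2]

end Moments

/-! ### Positive definite zonal polynomials -/

section PosDef
open Polynomial

/-- `u` is positive definite on the sphere, in the form of a finite feature expansion
`u(⟪x, y⟫) = ∑ φ_i(x) φ_i(y)` with continuous `φ_i`; in this form stability under products
and integration against measures are immediate. -/
def IsPD (d : ℕ) (u : ℝ[X]) : Prop :=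
  ∃ (ι : Type) (_ : Fintype ι) (φ : ι → Sph d → ℝ), (∀ i, Continuous (φ i)) ∧
    ∀ x y : Sph d, u.eval ⟪(x : EuclideanSpace ℝ (Fin d)), (y : EuclideanSpace ℝ (Fin d))⟫
      = ∑ i, φ i x * φ i y

lemma IsPD.zero : IsPD d 0 := ⟨Empty, inferInstance, fun e => e.elim, fun e => e.elim, by simp⟩

lemma IsPD.one : IsPD d 1 := ⟨Unit, inferInstance, fun _ _ => 1, fun _ => continuous_const, by simp⟩

lemma IsPD.X : IsPD d X :=
  ⟨Fin d, inferInstance, fun i x => (x : EuclideanSpace ℝ (Fin d)) i, fun i => by fun_prop,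
    fun x y => by simp [PiLp.inner_apply, mul_comm]⟩

lemma IsPD.add (p q : ℝ[X]) (hp : IsPD d p) (hq : IsPD d q) : IsPD d (p + q) := by
  obtain ⟨ι, _, φ, hφ, h1⟩ := hp
  obtain ⟨κ, _, ψ, hψ, h2⟩ := hq
  refine ⟨ι ⊕ κ, inferInstance, Sum.elim φ ψ, ?_, fun x y => by simp [h1, h2]⟩
  rintro (i | i)
  exacts [hφ i, hψ i]

lemma IsPD.C_mul (c : ℝ) (p : ℝ[X]) (hc : 0 ≤ c) (hp : IsPD d p) : IsPD d (C c * p) := by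
  obtain ⟨ι, _, φ, hφ, h1⟩ := hp
  refine ⟨ι, inferInstance, fun i x => √c * φ i x, fun i => continuous_const.mul (hφ i),
    fun x y => ?_⟩
  rw [eval_mul, eval_C, h1, Finset.mul_sum]
  refine Finset.sum_congr rfl fun i _ => ?_
  calc c * (φ i x * φ i y) = (√c * √c) * (φ i x * φ i y) := by rw [Real.mul_self_sqrt hc]
    _ = _ := by ring

lemma IsPD.mul (p q : ℝ[X]) (hp : IsPD d p) (hq : IsPD d q) : IsPD d (p * q) := by
  obtain ⟨ι, _, φ, hφ, h1⟩ := hp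
  obtain ⟨κ, _, ψ, hψ, h2⟩ := hq
  refine ⟨ι × κ, inferInstance, fun i x => φ i.1 x * ψ i.2 x, fun i => (hφ _).mul (hψ _),
    fun x y => ?_⟩
  rw [eval_mul, h1, h2, Finset.sum_mul_sum, Fintype.sum_prod_type]
  exact Finset.sum_congr rfl fun i _ => Finset.sum_congr rfl fun j _ => by ring

/-- All inner products between points of `C`, including `1` from the diagonal. -/
def designNodes (C : Finset (Sph d)) : Finset ℝ :=
  (C ×ˢ C).image fun p => ⟪(p.1 : EuclideanSpace ℝ (Fin d)), (p.2 : EuclideanSpace ℝ (Fin d))⟫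

/-- The number of ordered pairs of points of `C` with inner product `t`. -/
def designWeight (C : Finset (Sph d)) (t : ℝ) : ℝ :=
  (((C ×ˢ C).filter fun p =>
    ⟪(p.1 : EuclideanSpace ℝ (Fin d)), (p.2 : EuclideanSpace ℝ (Fin d))⟫ = t).card : ℝ)

lemma designWeight_pos (C : Finset (Sph d)) : ∀ t ∈ designNodes C, 0 < designWeight C t := by
  intro t ht
  obtain ⟨p, hp, rfl⟩ := Finset.mem_image.1 ht
  exact Nat.cast_pos.2 (Finset.card_pos.2 ⟨p, Finset.mem_filter.2 ⟨hp, rfl⟩⟩)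

lemma wsum_design (C : Finset (Sph d)) (q : ℝ[X]) :
    wsum (designNodes C) (designWeight C) q = ∑ x ∈ C, ∑ y ∈ C,
      q.eval ⟪(x : EuclideanSpace ℝ (Fin d)), (y : EuclideanSpace ℝ (Fin d))⟫ := by
  rw [← Finset.sum_product', ← Finset.sum_fiberwise_of_maps_to
    (t := designNodes C) (g := fun p : Sph d × Sph d =>
      ⟪(p.1 : EuclideanSpace ℝ (Fin d)), (p.2 : EuclideanSpace ℝ (Fin d))⟫)
    (fun p hp => Finset.mem_image_of_mem _ hp)]
  refine Finset.sum_congr rfl fun t _ => ?_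
  rw [Finset.sum_congr rfl fun p hp => by rw [(Finset.mem_filter.1 hp).2]]
  rw [Finset.sum_const, nsmul_eq_mul, designWeight]

lemma inner_sph_mem_Icc (x y : Sph d) :
    ⟪(x : EuclideanSpace ℝ (Fin d)), (y : EuclideanSpace ℝ (Fin d))⟫ ∈ Set.Icc (-1 : ℝ) 1 := by
  have h := abs_real_inner_le_norm (x : EuclideanSpace ℝ (Fin d)) (y : EuclideanSpace ℝ (Fin d))
  have hx : ‖(x : EuclideanSpace ℝ (Fin d))‖ = 1 := by have := x.2; simp_all
  have hy : ‖(y : EuclideanSpace ℝ (Fin d))‖ = 1 := by have := y.2; simp_all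
  rw [hx, hy, mul_one] at h
  exact abs_le.1 h

lemma designNodes_mem_Icc {C : Finset (Sph d)} {t : ℝ} (ht : t ∈ designNodes C) :
    t ∈ Set.Icc (-1 : ℝ) 1 := by
  obtain ⟨p, _, rfl⟩ := Finset.mem_image.1 ht
  exact inner_sph_mem_Icc _ _

/-- The orthogonal polynomials of a design (its Gegenbauer polynomials) are positive definite:
convolution of `p` with itself over the design reproduces a positive multiple of `p`. -/
lemma design_orth_isPD {M : ℕ} {C : Finset (Sph d)} (hC : IsSphDesign d M C) {k : ℕ}
    (hkM : 2 * k ≤ M) (hk : k < (designNodes C).card) {p : ℝ[X]}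
    (hp : IsOrth (designNodes C) (designWeight C) k p) : IsPD d p := by
  have hw := designWeight_pos C
  obtain ⟨x₀, hx₀⟩ := hC.1
  have hcard : (0 : ℝ) < C.card := by exact_mod_cast Finset.card_pos.2 hC.1
  obtain ⟨Q, hQd, hQ⟩ := design_convolution hC (a := k) (b := k) (by omega) hp.2.1.le hp.2.1.le
  set l := Q.coeff k with hl
  set D := Q - Polynomial.C l * p with hD
  have hDd : D.degree < k := by
    rw [degree_lt_iff_coeff_zero]
    intro j hj
    rcases eq_or_lt_of_le hj with rfl | hj
    · have : p.coeff k = 1 := by have := hp.1.coeff_natDegree; rwa [hp.2.1] at this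
      simp [hD, this, hl]
    · have h1 : Q.coeff j = 0 := coeff_eq_zero_of_natDegree_lt (by omega)
      have h2 : p.coeff j = 0 := coeff_eq_zero_of_natDegree_lt (by rw [hp.2.1]; exact hj)
      simp [hD, h1, h2]
  have hD0 : D = 0 := by
    by_contra hne
    have hDn : D.natDegree < k := (natDegree_lt_iff_degree_lt hne).2 hDd
    obtain ⟨R, hRd, hR⟩ := design_convolution hC (a := k) (b := D.natDegree) (by omega)
      hp.2.1.le (h := D) le_rfl
    refine hne (eq_zero_of_wsum_sq hw (hDd.trans (by exact_mod_cast hk)) ?_)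
    have h1 : wsum (designNodes C) (designWeight C) (p * D) = 0 := hp.2.2 D hDd
    have h2 : wsum (designNodes C) (designWeight C) (p * R) = 0 :=
      hp.2.2 R (lt_of_le_of_lt (degree_le_of_natDegree_le hRd) (by exact_mod_cast hDn))
    have h3 : wsum (designNodes C) (designWeight C) (Q * D)
        = wsum (designNodes C) (designWeight C) (p * R) := by
      rw [wsum_design, wsum_design]
      refine Finset.sum_congr rfl fun x _ => ?_
      simp only [eval_mul, ← hQ, Finset.sum_mul]
      rw [Finset.sum_comm]
      refine Finset.sum_congr rfl fun y _ => ?_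
      rw [real_inner_comm (y : EuclideanSpace ℝ (Fin d)) (x : EuclideanSpace ℝ (Fin d)), ← hR y x,
        Finset.mul_sum]
      refine Finset.sum_congr rfl fun z _ => ?_
      rw [real_inner_comm (y : EuclideanSpace ℝ (Fin d)) (z : EuclideanSpace ℝ (Fin d))]
      ring
    have h4 : D * D = Q * D - Polynomial.C l * (p * D) := by
      conv_lhs => rw [hD]
      rw [sub_mul, ← hD]; ring
    rw [h4, wsum_sub, wsum_C_mul, h1, h3, h2]; ring
  have hQp : Q = Polynomial.C l * p := sub_eq_zero.1 hD0
  have hp1 : 0 < p.eval 1 := hp.eval_pos hw hk fun t ht => (designNodes_mem_Icc ht).2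
  have hl0 : 0 < l := by
    have h1 := hQ x₀ x₀
    rw [inner_self_sph, hQp, eval_mul, eval_C] at h1
    have hpp : 0 < wsum (designNodes C) (designWeight C) (p * p) :=
      wsum_sq_pos hw (by rw [hp.degree_eq]; exact_mod_cast hk) hp.1.ne_zero
    rw [wsum_design] at hpp
    have hpp2 : ∀ x ∈ C, ∑ y ∈ C, (p * p).eval ⟪(x : EuclideanSpace ℝ (Fin d)),
        (y : EuclideanSpace ℝ (Fin d))⟫ = l * p.eval 1 := by
      intro x _
      rw [design_zonal_sum hC (natDegree_mul_le.trans (by rw [hp.2.1]; omega)) x x₀, ← h1]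
      simp
    rw [Finset.sum_congr rfl hpp2, Finset.sum_const, nsmul_eq_mul] at hpp
    exact pos_of_mul_pos_left (pos_of_mul_pos_right hpp hcard.le) hp1.le
  refine ⟨{y // y ∈ C}, inferInstance, fun y x => p.eval ⟪(x : EuclideanSpace ℝ (Fin d)),
    (y.1 : EuclideanSpace ℝ (Fin d))⟫ / √l, fun y => ?_, fun x z => ?_⟩
  · exact (p.continuous.comp (by fun_prop)).div_const _
  · have h1 := hQ x z
    rw [hQp, eval_mul, eval_C, ← Finset.sum_coe_sort] at h1
    rw [← mul_right_inj' hl0.ne', ← h1, Finset.mul_sum]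
    refine Finset.sum_congr rfl fun y _ => ?_
    have hs : √l * √l = l := Real.mul_self_sqrt hl0.le
    have hs0 : √l ≠ 0 := (Real.sqrt_pos.2 hl0).ne'
    rw [div_mul_div_comm, hs]
    field_simp

/-! ### Symmetric weights -/

lemma natDegree_comp_neg_X (p : ℝ[X]) : (p.comp (-X)).natDegree = p.natDegree := by
  rw [natDegree_comp, natDegree_neg, natDegree_X, mul_one]

/-- Orthogonal polynomials of a symmetric weight are even or odd. -/
lemma IsOrth.comp_neg_X {N : Finset ℝ} {w : ℝ → ℝ} (hw : ∀ t ∈ N, 0 < w t) {k : ℕ}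
    (hk : k ≤ N.card) (hsym : ∀ q : ℝ[X], q.natDegree + 1 ≤ 2 * k →
      wsum N w (q.comp (-X)) = wsum N w q) {p : ℝ[X]} (hp : IsOrth N w k p) :
    p.comp (-X) = C ((-1) ^ k) * p := by
  have hcomp : (-X : ℝ[X]).comp (-X) = X := by simp
  have hneg1 : ((-1 : ℝ) ^ k) * (-1) ^ k = 1 := by rw [← mul_pow]; simp
  set r := C ((-1 : ℝ) ^ k) * p.comp (-X) with hr
  have hrd : r.natDegree = k := by
    rw [hr, natDegree_C_mul (by positivity), natDegree_comp_neg_X, hp.2.1]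
  have hrm : r.Monic := by
    rw [Monic, hr, leadingCoeff_mul, leadingCoeff_C, leadingCoeff_comp (by simp),
      hp.1.leadingCoeff, hp.2.1]
    simpa using hneg1
  have horth : ∀ h : ℝ[X], h.degree < k → wsum N w (r * h) = 0 := by
    intro h hh
    by_cases hh0 : h = 0
    · simp [hh0, wsum]
    have hhn : h.natDegree < k := (natDegree_lt_iff_degree_lt hh0).2 hh
    have h1 : p.comp (-X) * h = (p * h.comp (-X)).comp (-X) := by
      rw [mul_comp, comp_assoc, hcomp, comp_X]
    have hd : (h.comp (-X)).natDegree < k := by rwa [natDegree_comp_neg_X]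
    rw [hr, mul_assoc, wsum_C_mul, h1, hsym, hp.2.2, mul_zero]
    · exact lt_of_le_of_lt degree_le_natDegree (by exact_mod_cast hd)
    · have := natDegree_mul_le (p := p) (q := h.comp (-X))
      rw [hp.2.1] at this
      omega
  have hrd' : r.degree = k := by rw [degree_eq_natDegree hrm.ne_zero, hrd]
  have hdiff : (r - p).degree < k := by
    rw [← hrd']
    exact degree_sub_lt_left (by rw [hrd', hp.degree_eq]) hrm.ne_zero
      (by rw [hrm.leadingCoeff, hp.1.leadingCoeff])
  have h0 : r - p = 0 := by
    refine eq_zero_of_wsum_sq hw (hdiff.trans_le (by exact_mod_cast hk)) ?_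
    rw [sub_mul, wsum_sub, horth _ hdiff, hp.2.2 _ hdiff, sub_zero]
  have hpr : p = r := (sub_eq_zero.1 h0).symm
  conv_rhs => rw [hpr, hr, ← mul_assoc, ← C_mul, hneg1, C_1, one_mul]

end PosDef

/-! ### The nodes of a tight design -/

section Tight
open Polynomial

/-- The distance distribution of a design has symmetric moments up to order `M`: replace the
pole `x` by `-x`. -/
lemma design_wsum_comp_neg_X {M : ℕ} {C : Finset (Sph d)} (hC : IsSphDesign d M C) {q : ℝ[X]}
    (hq : q.natDegree ≤ M) :
    wsum (designNodes C) (designWeight C) (q.comp (-X))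
      = wsum (designNodes C) (designWeight C) q := by
  rw [wsum_design, wsum_design]
  refine Finset.sum_congr rfl fun x _ => ?_
  rw [design_zonal_sum hC hq x (-x)]
  simp [eval_comp]

lemma inner_eq_one_iff_sph (x y : Sph d) :
    ⟪(x : EuclideanSpace ℝ (Fin d)), (y : EuclideanSpace ℝ (Fin d))⟫ = 1 ↔ x = y := by
  have hx : ‖(x : EuclideanSpace ℝ (Fin d))‖ = 1 := by have := x.2; simp_all
  have hy : ‖(y : EuclideanSpace ℝ (Fin d))‖ = 1 := by have := y.2; simp_all
  rw [inner_eq_one_iff_of_norm_eq_one hx hy, Subtype.ext_iff]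

lemma one_mem_designNodes {C : Finset (Sph d)} (hC : C.Nonempty) : 1 ∈ designNodes C := by
  obtain ⟨x, hx⟩ := hC
  exact Finset.mem_image.2 ⟨(x, x), Finset.mk_mem_product hx hx, inner_self_sph x⟩

lemma innerProds_eq (C : Finset (Sph d)) : innerProds C = ↑((designNodes C).erase 1) := by
  ext t
  simp only [innerProds, Set.mem_ofPred_eq, Finset.coe_erase, Set.mem_sdiff, Finset.mem_coe,
    designNodes, Finset.mem_image, Finset.mem_product, Prod.exists, Set.mem_singleton_iff]
  constructor
  · rintro ⟨x, hx, y, hy, hxy, rfl⟩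
    exact ⟨⟨x, y, ⟨hx, hy⟩, rfl⟩, fun h => hxy ((inner_eq_one_iff_sph x y).1 h)⟩
  · rintro ⟨⟨x, y, ⟨hx, hy⟩, rfl⟩, h⟩
    exact ⟨x, hx, y, hy, fun h' => h ((inner_eq_one_iff_sph x y).2 h'), rfl⟩

lemma exists_inner_eq (hd : 2 ≤ d) (y : Sph d) {τ : ℝ} (hτ : τ ∈ Set.Icc (-1 : ℝ) 1) :
    ∃ e : Sph d, ⟪(e : EuclideanSpace ℝ (Fin d)), (y : EuclideanSpace ℝ (Fin d))⟫ = τ := by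
  have hconn : IsPreconnected (sphere (0 : EuclideanSpace ℝ (Fin d)) 1) := by
    refine isPreconnected_sphere ?_ _ _
    rw [← Module.finrank_eq_rank, finrank_euclideanSpace_fin]
    exact_mod_cast hd
  have : PreconnectedSpace (Sph d) := Subtype.preconnectedSpace hconn
  have hcont : Continuous fun e : Sph d =>
      ⟪(e : EuclideanSpace ℝ (Fin d)), (y : EuclideanSpace ℝ (Fin d))⟫ := by fun_prop
  have := intermediate_value_univ (-y) y hcont
  refine this ?_
  simpa [inner_self_sph] using hτ

/-- In an even tight design there are no antipodal points: otherwise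
`(1 - X²) ∏ (X - t)²` over the remaining nodes has degree at most `M` and is nonnegative on
`[-1, 1]`, so its vanishing mean over the design would force it to vanish identically. -/
lemma neg_one_notMem_of_even (hd : 2 ≤ d) {m : ℕ} {C : Finset (Sph d)}
    (hC : IsSphDesign d (2 * m) C) (hm : ((designNodes C).erase 1).card = m) :
    (-1 : ℝ) ∉ (designNodes C).erase 1 := by
  intro hmem
  set T := ((designNodes C).erase 1).erase (-1) with hT
  have hTc : T.card + 1 = m := by rw [hT, Finset.card_erase_add_one hmem, hm]
  set q : ℝ[X] := (1 - X ^ 2) * (nodePoly T) ^ 2 with hq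
  have hqd : q.natDegree ≤ 2 * m := by
    have h1 : (1 - X ^ 2 : ℝ[X]).natDegree ≤ 2 := by compute_degree
    have h2 : ((nodePoly T) ^ 2).natDegree ≤ 2 * T.card := by
      rw [natDegree_pow, nodePoly_natDegree]
    exact natDegree_mul_le.trans (by omega)
  have hqe : ∀ t, q.eval t = (1 - t ^ 2) * (nodePoly T).eval t ^ 2 := fun t => by simp [hq]
  have hqnn : ∀ t ∈ Set.Icc (-1 : ℝ) 1, 0 ≤ q.eval t := fun t ht => by
    rw [hqe]
    have : 0 ≤ 1 - t ^ 2 := by nlinarith [ht.1, ht.2]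
    positivity
  have hq0 : ∀ t ∈ designNodes C, q.eval t = 0 := fun t ht => by
    rw [hqe]
    by_cases h1 : t = 1
    · simp [h1]
    by_cases h2 : t = -1
    · simp [h2]
    rw [nodePoly_eval_eq_zero (Finset.mem_erase.2 ⟨h2, Finset.mem_erase.2 ⟨h1, ht⟩⟩)]
    simp
  obtain ⟨y₀, hy₀⟩ := hC.1
  obtain ⟨τ, hτ, hτT⟩ := (Set.Ioo_infinite (show (-1 : ℝ) < 1 by norm_num)).exists_notMem_finset T
  obtain ⟨e, he⟩ := exists_inner_eq hd y₀ (Set.Ioo_subset_Icc_self hτ)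
  have hsum := design_zonal_sum hC hqd e y₀
  rw [Finset.sum_eq_zero (s := C) (f := fun y : Sph d => q.eval
      ⟪(y₀ : EuclideanSpace ℝ (Fin d)), (y : EuclideanSpace ℝ (Fin d))⟫) fun y hy =>
      hq0 _ (Finset.mem_image.2 ⟨(y₀, y), Finset.mk_mem_product hy₀ hy, rfl⟩),
    Finset.sum_eq_zero_iff_of_nonneg fun y _ => hqnn _ (inner_sph_mem_Icc _ _)] at hsum
  have h0 := hsum y₀ hy₀
  rw [he, hqe] at h0
  have h1 : 1 - τ ^ 2 ≠ 0 := by nlinarith [hτ.1, hτ.2]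
  exact mul_ne_zero h1 (pow_ne_zero _ (nodePoly_eval_ne_zero hτT)) h0

/-- For even strength only the node `1` has to be split off. -/
lemma lowerPart_isPD_of_even {m : ℕ} {C : Finset (Sph d)}
    (hC : IsSphDesign d (2 * m) C) (hm : ((designNodes C).erase 1).card = m) (J : Finset ℝ)
    (hJ : IsLowerPart J ((designNodes C).erase 1)) : IsPD d (nodePoly J) := by
  have h1 := one_mem_designNodes hC.1
  have hins : insert 1 ((designNodes C).erase 1) = designNodes C := Finset.insert_erase h1
  have hlt : ∀ t ∈ (designNodes C).erase 1, t < 1 := fun t ht =>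
    lt_of_le_of_ne (designNodes_mem_Icc (Finset.mem_of_mem_erase ht)).2 (Finset.ne_of_mem_erase ht)
  have hcard : (designNodes C).card = m + 1 := by rw [← hm, Finset.card_erase_add_one h1]
  refine nodePoly_mem_cone IsPD.zero IsPD.add IsPD.C_mul _
    (fun t => (1 - t) * designWeight C t) (fun t ht => mul_pos (sub_pos.2 (hlt t ht))
      (designWeight_pos C t (Finset.mem_of_mem_erase ht))) (fun k hk r hr => ?_) J hJ
  refine mem_cone_of_remove_max hlt (by rw [hins]; exact designWeight_pos C) IsPD.zero IsPD.add
    IsPD.C_mul (fun i hi p hp => ?_) hk hr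
  rw [hins] at hp
  exact design_orth_isPD hC (by omega) (by omega) hp

/-- The Christoffel-type step at both endpoints: for a symmetric weight, the orthogonal
polynomials of `(1 - t²) w` expand nonnegatively in those of `w`, hence are positive definite. -/
lemma isPD_of_remove_endpoints {m : ℕ} {C : Finset (Sph d)}
    (hC : IsSphDesign d (2 * m + 1) C) (hneg : (-1 : ℝ) ∈ (designNodes C).erase 1)
    (hm : (((designNodes C).erase 1).erase (-1)).card = m) {k : ℕ} (hk : k ≤ m) {r : ℝ[X]}
    (hr : IsOrth (((designNodes C).erase 1).erase (-1))
      (fun t => (1 - t ^ 2) * designWeight C t) k r) : IsPD d r := by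
  have h1 := one_mem_designNodes hC.1
  have hw := designWeight_pos C
  set N := designNodes C with hN
  set w := designWeight C with hwdef
  set T := (N.erase 1).erase (-1) with hT
  have hcard : N.card = m + 2 := by
    have e1 := Finset.card_erase_add_one h1
    have e2 := Finset.card_erase_add_one hneg
    rw [← hT] at e2
    omega
  have hTw : ∀ q : ℝ[X], wsum T (fun t => (1 - t ^ 2) * w t) q = wsum N w ((1 - X ^ 2) * q) := by
    intro q
    unfold wsum
    rw [← Finset.add_sum_erase _ _ h1, ← Finset.add_sum_erase _ _ hneg]
    simp only [eval_mul, eval_sub, eval_one, eval_pow, eval_X]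
    norm_num
    exact Finset.sum_congr rfl fun t _ => by ring
  have hw' : ∀ t ∈ T, 0 < (1 - t ^ 2) * w t := by
    intro t ht
    have ht1 := Finset.mem_of_mem_erase ht
    have ht2 := Finset.mem_of_mem_erase ht1
    have hI := designNodes_mem_Icc ht2
    have a1 : t < 1 := lt_of_le_of_ne hI.2 (Finset.ne_of_mem_erase ht1)
    have a2 : -1 < t := lt_of_le_of_ne hI.1 (Finset.ne_of_mem_erase ht).symm
    exact mul_pos (by nlinarith) (hw t ht2)
  have hsym : ∀ q : ℝ[X], q.natDegree ≤ 2 * m + 1 → wsum N w (q.comp (-X)) = wsum N w q :=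
    fun q hq => design_wsum_comp_neg_X hC hq
  have hrpar : r.comp (-X) = Polynomial.C ((-1) ^ k) * r := by
    refine hr.comp_neg_X hw' (by omega) fun q hq => ?_
    have hd2 : (1 - X ^ 2 : ℝ[X]).natDegree ≤ 2 := by compute_degree
    have hcomp : (1 - X ^ 2 : ℝ[X]) * q.comp (-X) = ((1 - X ^ 2) * q).comp (-X) := by
      simp [mul_comp]
    rw [hTw, hTw, hcomp, hsym]
    exact natDegree_mul_le.trans (by omega)
  have hppar : ∀ i ≤ k, ∀ p, IsOrth N w i p → p.comp (-X) = Polynomial.C ((-1) ^ i) * p :=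
    fun i hi p hp => hp.comp_neg_X hw (by omega) fun q hq => hsym q (by omega)
  obtain ⟨pk, hpk⟩ := exists_isOrth hw (show k ≤ N.card by omega)
  have hle1 : ∀ t ∈ N, t ≤ 1 := fun t ht => (designNodes_mem_Icc ht).2
  have hpk1 : 0 < pk.eval 1 := hpk.eval_pos hw (by omega) hle1
  refine mem_cone_of_wsum_nonneg hw IsPD.zero IsPD.add IsPD.C_mul (k + 1) (by omega) r
    (by rw [hr.degree_eq]; exact_mod_cast Nat.lt_succ_self k) fun i hi p hp => ?_
  have hik : i ≤ k := by omega
  refine ⟨design_orth_isPD hC (by omega) (by rw [← hN]; omega) hp, ?_⟩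
  have hp1 : 0 < p.eval 1 := hp.eval_pos hw (by omega) hle1
  by_cases hpar : ((-1 : ℝ) ^ k) = (-1) ^ i
  · -- `u` vanishes at `1`, hence by parity at `-1`, so it is a multiple of `X² - 1`
    set u : ℝ[X] := Polynomial.C (pk.eval 1) * p - Polynomial.C (p.eval 1) * pk with hu
    have hu1 : u.eval 1 = 0 := by simp [hu]; ring
    have hucomp : u.comp (-X) = Polynomial.C ((-1) ^ k) * u := by
      rw [hu, sub_comp, mul_comp, mul_comp, C_comp, C_comp, hppar i hik p hp, hppar k le_rfl pk hpk,
        hpar]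
      ring
    have hum1 : u.eval (-1) = 0 := by
      have := congrArg (eval 1) hucomp
      simpa [eval_comp, hu1] using this
    have hcop : IsCoprime (X - Polynomial.C 1 : ℝ[X]) (X - Polynomial.C (-1)) :=
      isCoprime_X_sub_C_of_isUnit_sub (by norm_num)
    obtain ⟨v, hv⟩ := hcop.mul_dvd (dvd_iff_isRoot.2 hu1) (dvd_iff_isRoot.2 hum1)
    have huv : r * u = (1 - X ^ 2) * (r * (-v)) := by
      rw [hv]; simp only [C_1, C_neg]; ring
    have hud : u.natDegree ≤ k := by
      refine (natDegree_sub_le _ _).trans (max_le ?_ ?_)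
      · exact (natDegree_C_mul_le _ _).trans (by rw [hp.2.1]; exact hik)
      · exact (natDegree_C_mul_le _ _).trans (by rw [hpk.2.1])
    have hru : wsum N w (r * u) = 0 := by
      rw [huv, ← hTw]
      refine hr.2.2 _ ?_
      rw [degree_neg]
      by_cases hv0 : v = 0
      · rw [hv0, degree_zero]; exact WithBot.bot_lt_coe _
      · rw [← natDegree_lt_iff_degree_lt hv0]
        have h2 := congrArg natDegree hv
        rw [natDegree_mul (mul_ne_zero (X_sub_C_ne_zero _) (X_sub_C_ne_zero _)) hv0,
          natDegree_mul (X_sub_C_ne_zero _) (X_sub_C_ne_zero _), natDegree_X_sub_C,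
          natDegree_X_sub_C] at h2
        omega
    have hexp : wsum N w (r * u) = pk.eval 1 * wsum N w (r * p) - p.eval 1 * wsum N w (r * pk) := by
      rw [← wsum_C_mul, ← wsum_C_mul, ← wsum_sub]
      congr 1
      rw [hu]; ring
    rw [hru, hpk.wsum_mul_monic hr.1 hr.2.1] at hexp
    have hpp : 0 < wsum N w (pk * pk) :=
      wsum_sq_pos hw (by rw [hpk.degree_eq]; exact_mod_cast (by omega)) hpk.1.ne_zero
    have : 0 < pk.eval 1 * wsum N w (r * p) := by nlinarith [mul_pos hp1 hpp]
    exact (pos_of_mul_pos_right this hpk1.le).le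
  · have hsgn : ((-1 : ℝ) ^ k) * (-1) ^ i = -1 := by
      rcases neg_one_pow_eq_or ℝ k with a | a <;> rcases neg_one_pow_eq_or ℝ i with b | b <;>
        simp_all
    have hd : (r * p).natDegree ≤ 2 * m + 1 :=
      natDegree_mul_le.trans (by rw [hr.2.1, hp.2.1]; omega)
    have h := hsym (r * p) hd
    have hc : (r * p).comp (-X) = Polynomial.C ((-1) ^ k * (-1) ^ i) * (r * p) := by
      rw [mul_comp, hrpar, hppar i hik p hp, C_mul]; ring
    rw [hc, hsgn, wsum_C_mul] at h
    linarith

/-- For odd strength both endpoints `±1` have to be split off. -/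
lemma lowerPart_isPD_of_odd {m : ℕ} {C : Finset (Sph d)}
    (hC : IsSphDesign d (2 * m + 1) C) (hneg : (-1 : ℝ) ∈ (designNodes C).erase 1)
    (hm : (((designNodes C).erase 1).erase (-1)).card = m) (J : Finset ℝ)
    (hJ : IsLowerPart J (((designNodes C).erase 1).erase (-1))) : IsPD d (nodePoly J) := by
  refine nodePoly_mem_cone IsPD.zero IsPD.add IsPD.C_mul _
    (fun t => (1 - t ^ 2) * designWeight C t) (fun t ht => ?_)
    (fun k hk r hr => isPD_of_remove_endpoints hC hneg hm (by omega) hr) J hJ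
  have ht1 := Finset.mem_of_mem_erase ht
  have ht2 := Finset.mem_of_mem_erase ht1
  have hI := designNodes_mem_Icc ht2
  have a1 : t < 1 := lt_of_le_of_ne hI.2 (Finset.ne_of_mem_erase ht1)
  have a2 : -1 < t := lt_of_le_of_ne hI.1 (Finset.ne_of_mem_erase ht).symm
  exact mul_pos (by nlinarith) (designWeight_pos C t ht2)

/-- The interpolation data of a tight design: simple nodes `B ⊆ {-1}` and double nodes `T`
in the open interval, with positive definite products over initial segments. -/
lemma exists_tight_nodes (hd : 2 ≤ d) {M : ℕ} {C : Finset (Sph d)} (hC : IsTightSphDesign d M C) :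
    ∃ B T : Finset ℝ, B ⊆ {-1} ∧ IsPD d (nodePoly B) ∧ (∀ t ∈ T, t ∈ Set.Ioo (-1 : ℝ) 1) ∧
      (∀ J, IsLowerPart J T → IsPD d (nodePoly J)) ∧ 2 * T.card + B.card = M ∧
      ∀ t ∈ designNodes C, t ∈ insert 1 (B ∪ T) := by
  obtain ⟨hdes, ⟨m, rfl, hm⟩ | ⟨m, hM, hm, hneg⟩⟩ := hC
  · rw [innerProds_eq, Set.ncard_coe_finset] at hm
    have hn := neg_one_notMem_of_even hd hdes hm
    refine ⟨∅, (designNodes C).erase 1, by simp, by simpa [nodePoly] using IsPD.one, fun t ht => ?_,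
      fun J hJ => lowerPart_isPD_of_even hdes hm J hJ, by simp [hm], fun t ht => ?_⟩
    · have hI := designNodes_mem_Icc (Finset.mem_of_mem_erase ht)
      refine ⟨lt_of_le_of_ne hI.1 fun h => hn (h ▸ ht),
        lt_of_le_of_ne hI.2 (Finset.ne_of_mem_erase ht)⟩
    · by_cases h : t = 1 <;> simp [h, ht]
  · rw [innerProds_eq, Set.ncard_coe_finset] at hm
    rw [innerProds_eq, Finset.mem_coe] at hneg
    have hc := Finset.card_erase_add_one hneg
    obtain ⟨n, hn⟩ : ∃ n, n = (((designNodes C).erase 1).erase (-1)).card := ⟨_, rfl⟩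
    obtain rfl : M = 2 * n + 1 := by omega
    refine ⟨{-1}, ((designNodes C).erase 1).erase (-1), subset_rfl, ?_, fun t ht => ?_,
      fun J hJ => lowerPart_isPD_of_odd hdes hneg hn.symm J hJ, by simp [hn], fun t ht => ?_⟩
    · have : nodePoly {-1} = X + 1 := by simp [nodePoly]
      rw [this]
      exact IsPD.add _ _ IsPD.X IsPD.one
    · have ht1 := Finset.mem_of_mem_erase ht
      have hI := designNodes_mem_Icc (Finset.mem_of_mem_erase ht1)
      exact ⟨lt_of_le_of_ne hI.1 (Finset.ne_of_mem_erase ht).symm,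
        lt_of_le_of_ne hI.2 (Finset.ne_of_mem_erase ht1)⟩
    · by_cases h : t = 1
      · simp [h]
      · by_cases h' : t = -1 <;> simp [h, h', ht]

end Tight

/-! ### Energies -/

section Energy
open Polynomial

lemma continuous_comp_inner {f : ℝ → ℝ} (hf : ContinuousOn f (Set.Icc (-1) 1)) :
    Continuous fun z : Sph d × Sph d =>
      f ⟪(z.1 : EuclideanSpace ℝ (Fin d)), (z.2 : EuclideanSpace ℝ (Fin d))⟫ :=
  hf.comp_continuous (by fun_prop) fun z => inner_sph_mem_Icc _ _

lemma integrable_of_continuous_compact {α : Type*} [TopologicalSpace α] [CompactSpace α]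
    [MeasurableSpace α] [OpensMeasurableSpace α] {ν : Measure α} [IsFiniteMeasure ν] {g : α → ℝ}
    (hg : Continuous g) : Integrable g ν := by
  obtain ⟨B, hB⟩ := isCompact_univ.exists_bound_of_continuousOn hg.continuousOn
  exact Integrable.of_bound hg.measurable.aestronglyMeasurable B
    (Filter.Eventually.of_forall fun x => hB x trivial)

lemma energy_mono {f g : ℝ → ℝ} (hf : ContinuousOn f (Set.Icc (-1) 1))
    (hg : ContinuousOn g (Set.Icc (-1) 1)) (h : ∀ t ∈ Set.Icc (-1 : ℝ) 1, g t ≤ f t)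
    (μ : Measure (Sph d)) [IsProbabilityMeasure μ] : energy g μ ≤ energy f μ := by
  have hf' := continuous_comp_inner (d := d) hf
  have hg' := continuous_comp_inner (d := d) hg
  have hfi : Integrable _ (μ.prod μ) := integrable_of_continuous_compact hf'
  have hgi : Integrable _ (μ.prod μ) := integrable_of_continuous_compact hg'
  refine integral_mono hgi.integral_prod_left hfi.integral_prod_left fun x => ?_
  refine integral_mono (integrable_of_continuous_compact (hg'.comp (Continuous.prodMk_right x)))
    (integrable_of_continuous_compact (hf'.comp (Continuous.prodMk_right x))) fun y => ?_
  exact h _ (inner_sph_mem_Icc _ _)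

lemma integral_unifOn (C : Finset (Sph d)) (g : Sph d → ℝ) :
    ∫ x, g x ∂(unifOn C) = (C.card : ℝ)⁻¹ * ∑ x ∈ C, g x := by
  rw [unifOn, integral_smul_measure, integral_finsetSum_measure
    fun x _ => integrable_dirac (by simp)]
  simp

lemma energy_unifOn (C : Finset (Sph d)) (f : ℝ → ℝ) :
    energy f (unifOn C) = (C.card : ℝ)⁻¹ * ∑ x ∈ C, ((C.card : ℝ)⁻¹ * ∑ y ∈ C,
      f ⟪(x : EuclideanSpace ℝ (Fin d)), (y : EuclideanSpace ℝ (Fin d))⟫) := by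
  simp only [energy, integral_unifOn]

/-- A design of strength at least the degree minimizes the energy of a positive definite
polynomial: `∑ (∫ φ_i dμ - avg_C φ_i)² ≥ 0` expands to the difference of the energies because
the potential of the design is constant. -/
lemma energy_unifOn_le_of_isPD {M : ℕ} {C : Finset (Sph d)} (hC : IsSphDesign d M C) {p : ℝ[X]}
    (hpd : IsPD d p) (hp : p.natDegree ≤ M) (μ : Measure (Sph d)) [IsProbabilityMeasure μ] :
    energy (fun t => p.eval t) (unifOn C) ≤ energy (fun t => p.eval t) μ := by
  obtain ⟨ι, _, φ, hφ, hpφ⟩ := hpd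
  obtain ⟨x₀, hx₀⟩ := hC.1
  have hcard : (C.card : ℝ) ≠ 0 := by exact_mod_cast (Finset.card_pos.2 hC.1).ne'
  have hφi : ∀ i, Integrable (φ i) μ := fun i => integrable_of_continuous_compact (hφ i)
  set a : ι → ℝ := fun i => ∫ x, φ i x ∂μ with ha
  set b : ι → ℝ := fun i => (C.card : ℝ)⁻¹ * ∑ y ∈ C, φ i y with hb
  set κ : ℝ := (C.card : ℝ)⁻¹ * ∑ y ∈ C,
    p.eval ⟪(x₀ : EuclideanSpace ℝ (Fin d)), (y : EuclideanSpace ℝ (Fin d))⟫ with hκ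
  have hpot : ∀ x : Sph d, ∑ i, φ i x * b i = κ := by
    intro x
    rw [hκ, design_zonal_sum hC hp x₀ x]
    simp only [hpφ, hb]
    rw [Finset.sum_comm, Finset.mul_sum]
    refine Finset.sum_congr rfl fun i _ => ?_
    rw [← Finset.mul_sum]; ring
  have hEC : energy (fun t => p.eval t) (unifOn C) = κ := by
    rw [energy_unifOn]
    rw [Finset.sum_congr rfl fun x _ => show _ = κ by rw [hκ, design_zonal_sum hC hp x x₀]]
    rw [Finset.sum_const, nsmul_eq_mul, inv_mul_cancel_left₀ hcard]
  have hEμ : energy (fun t => p.eval t) μ = ∑ i, a i * a i := by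
    simp only [energy, hpφ]
    have h1 : ∀ x : Sph d, ∫ y, ∑ i, φ i x * φ i y ∂μ = ∑ i, φ i x * a i := by
      intro x
      rw [integral_finsetSum _ fun i _ => (hφi i).const_mul _]
      exact Finset.sum_congr rfl fun i _ => integral_const_mul _ _
    simp only [h1]
    rw [integral_finsetSum _ fun i _ => (hφi i).mul_const _]
    exact Finset.sum_congr rfl fun i _ => integral_mul_const _ _
  have hab : ∑ i, a i * b i = κ := by
    have h1 : ∫ x, ∑ i, φ i x * b i ∂μ = ∑ i, a i * b i := by
      rw [integral_finsetSum _ fun i _ => (hφi i).mul_const _]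
      exact Finset.sum_congr rfl fun i _ => integral_mul_const _ _
    rw [← h1]
    simp [hpot]
  have hbb : ∑ i, b i * b i = κ := by
    have h1 : ∑ i, b i * b i = (C.card : ℝ)⁻¹ * ∑ x ∈ C, ∑ i, φ i x * b i := by
      rw [Finset.sum_comm, Finset.mul_sum]
      refine Finset.sum_congr rfl fun i _ => ?_
      rw [← Finset.sum_mul]
      exact mul_assoc _ _ _
    rw [h1, Finset.sum_congr rfl fun x _ => hpot x, Finset.sum_const, nsmul_eq_mul,
      inv_mul_cancel_left₀ hcard]
  have hsq : 0 ≤ ∑ i, (a i - b i) ^ 2 := Finset.sum_nonneg fun i _ => sq_nonneg _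
  have hexp : ∑ i, (a i - b i) ^ 2
      = ∑ i, a i * a i - 2 * ∑ i, a i * b i + ∑ i, b i * b i := by
    rw [Finset.mul_sum, ← Finset.sum_sub_distrib, ← Finset.sum_add_distrib]
    exact Finset.sum_congr rfl fun i _ => by ring
  rw [hEC, hEμ]
  linarith

lemma isDerivSeq_iteratedDerivWithin {f : ℝ → ℝ} {n : ℕ} (hfc : ContinuousOn f (Set.Icc (-1) 1))
    (hdiff : ∀ k < n, DifferentiableOn ℝ (iteratedDerivWithin k f (Set.Ioo (-1) 1))
      (Set.Ioo (-1) 1)) :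
    IsDerivSeq (fun k => iteratedDerivWithin k f (Set.Ioo (-1) 1)) n := by
  refine ⟨by simpa [iteratedDerivWithin_zero] using hfc, fun k hk s hs => ?_⟩
  have hnhds := Ioo_mem_nhds hs.1 hs.2
  have h := ((hdiff k hk s hs).differentiableAt hnhds).hasDerivAt
  simp only [iteratedDerivWithin_succ]
  rwa [derivWithin_of_mem_nhds hnhds]

end Energy

open Set in
/-- optimality of tight designs for absolutely monotonic potentials.
Let `f : [-1,1] → ℝ` be continuous, `(M+1)`-times differentiable on `(-1,1)`, absolutely
monotonic of degree `M` on `(-1,1)`, with `f^{(M+1)} ≤ 0` on `(-1,1)`. If `C ⊆ S^{d-1}`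
is a tight spherical `M`-design, then the uniform measure on `C` minimizes the energy
`I_f` over all Borel probability measures on `S^{d-1}`. -/
theorem tight_design_minimizes_absolutely_monotonic_energy
    {d M : ℕ} (hd : 2 ≤ d) (hM : 1 ≤ M)
    (f : ℝ → ℝ) (hfc : ContinuousOn f (Icc (-1) 1))
    (hdiff : ∀ k < M + 1,
      DifferentiableOn ℝ (iteratedDerivWithin k f (Ioo (-1) 1)) (Ioo (-1) 1))
    (habs : ∀ k ≤ M, ∀ s ∈ Ioo (-1 : ℝ) 1, 0 ≤ iteratedDerivWithin k f (Ioo (-1) 1) s)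
    (hlast : ∀ s ∈ Ioo (-1 : ℝ) 1, iteratedDerivWithin (M + 1) f (Ioo (-1) 1) s ≤ 0)
    (C : Finset (Sph d)) (hC : IsTightSphDesign d M C)
    (μ : Measure (Sph d)) [IsProbabilityMeasure μ] :
    energy f (unifOn C) ≤ energy f μ := by
  obtain ⟨B, T, hB, KB, hT, hpre, hcard, hN⟩ := exists_tight_nodes hd hC
  obtain ⟨p, hpd, hpM, hpeq, hple⟩ := exists_minorant
    (isDerivSeq_iteratedDerivWithin hfc hdiff) habs hlast IsPD.zero IsPD.add IsPD.C_mul IsPD.mul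
    hB KB T hT hpre hcard
  simp only [iteratedDerivWithin_zero] at hpeq hple
  have hEC : energy f (unifOn C) = energy (fun t => p.eval t) (unifOn C) := by
    rw [energy_unifOn, energy_unifOn]
    congr 1
    refine Finset.sum_congr rfl fun x hx => ?_
    congr 1
    refine Finset.sum_congr rfl fun y hy => hpeq _ (hN _ ?_)
    exact Finset.mem_image.2 ⟨(x, y), Finset.mk_mem_product hx hy, rfl⟩
  calc energy f (unifOn C) = energy (fun t => p.eval t) (unifOn C) := hEC
    _ ≤ energy (fun t => p.eval t) μ := energy_unifOn_le_of_isPD hC.1 hpd hpM μ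
    _ ≤ energy f μ := energy_mono hfc p.continuous.continuousOn hple μ
end
end
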